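/- Let F(a,b,x) = a + bx + f(a,b,x) be a smooth real-valued function on a neighborhood of 0 in ℝ³, where f together with all its first and second order partial derivatives vanishes at the origin. Then there exist a smooth local diffeomorphism (x,y) ↦ (X(x,y), Y(x,y)) of ℝ² fixing the origin, a smooth local diffeomorphism (a,b) ↦ (A(a,b), B(a,b)) of ℝ² fixing the origin, and a smooth function f*(A,B,X) defined near 0 ∈ ℝ³, such that for all (a,b,x) near 0 one has Y(x, F(a,b,x)) = A(a,b) + B(a,b)·X(x, F(a,b,x)) + f*(A(a,b), B(a,b), X(x, F(a,b,x))), and f* satisfies the normal form conditions: (i) f*(A,B,0) = 0 and f*(A,0,X) = 0; (ii) ∂_X f*(A,B,0) = 0 and ∂_B f*(A,0,X) = 0; (iii) ∂⁴f*/∂X²∂B² (A,0,0) = 0; (iv) ∂⁵f*/∂X³∂B² (A,0,0) = 0 and ∂⁵f*/∂X²∂B³ (A,0,0) = 0; (v) ∂⁶f*/∂X³∂B³ (A,0,0) = 0, for all A near 0. -/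

import Mathlib

/- Convergent (smooth) normal form for regular para-CR hypersurfaces
   `y = a + bx + f(a,b,x)`. -/

open Set

/-- `Φ` is a smooth local diffeomorphism at `0 ∈ ℝ²` fixing the origin. -/
def SmoothLocalDiffeoAtZero (Φ : ℝ × ℝ → ℝ × ℝ) : Prop :=
  ∃ V : Set (ℝ × ℝ), V ∈ nhds (0 : ℝ × ℝ) ∧ Φ 0 = 0 ∧
    ContDiffOn ℝ (⊤ : ℕ∞) Φ V ∧ InjOn Φ V ∧ IsOpen (Φ '' V) ∧
    ∃ Φinv : ℝ × ℝ → ℝ × ℝ,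
      ContDiffOn ℝ (⊤ : ℕ∞) Φinv (Φ '' V) ∧ ∀ p ∈ V, Φinv (Φ p) = p

/-
A regular hypersurface is a two-parameter family of plane curves, its leaves, which are the
solutions of an equation `y'' = Q (x, y, y')`; exchanging the roles of `(x, y)` and `(b, a)` gives a
dual family. A chain is a curve in the hypersurface whose projection to each plane satisfies the
corresponding equation with the right-hand side replaced by its cubic Taylor polynomial at the slope
of the leaf. This notion is invariant under changes of coordinates, and chains exist by ODE theory.
Straightening a chain to `x = b = 0`, `y = a` still allows (i) and (ii) to be achieved, after which
the two chain equations are exactly (iv). The remaining changes `x = l(Y) X`, `y = σ(Y)`,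
`b = μ(A) B`, `a = σ(A)` with `σ' = l μ` turn (iii) and (v) into a system of ODEs for `σ` and `l`
which reduces to a Riccati equation.
-/

namespace ParaCR

open Filter Topology
open scoped ContDiff

/-- `f` is smooth on some neighbourhood of `p`. This is stronger than `ContDiffAt ℝ ∞ f p`, where
the neighbourhood may depend on the order of differentiability. -/
def SmoothNear {E F : Type*} [NormedAddCommGroup E] [NormedSpace ℝ E] [NormedAddCommGroup F]
    [NormedSpace ℝ F] (f : E → F) (p : E) : Prop :=
  ∀ᶠ q in 𝓝 p, ContDiffAt ℝ ∞ f q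

section SmoothNear

variable {E F G : Type*} [NormedAddCommGroup E] [NormedSpace ℝ E] [NormedAddCommGroup F]
  [NormedSpace ℝ F] [NormedAddCommGroup G] [NormedSpace ℝ G]

namespace SmoothNear

variable {f : E → F} {p : E}

theorem contDiffAt (hf : SmoothNear f p) : ContDiffAt ℝ ∞ f p := hf.self_of_nhds

theorem contDiffAt_nat (hf : SmoothNear f p) (n : ℕ) : ContDiffAt ℝ n f p :=
  hf.contDiffAt.of_le (mod_cast le_top)

theorem differentiableAt (hf : SmoothNear f p) : DifferentiableAt ℝ f p :=
  hf.contDiffAt.differentiableAt (by simp)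

theorem continuousAt (hf : SmoothNear f p) : ContinuousAt f p := hf.contDiffAt.continuousAt

protected theorem eventually (hf : SmoothNear f p) : ∀ᶠ q in 𝓝 p, SmoothNear f q :=
  eventually_eventually_nhds.2 hf

theorem of_contDiff (hf : ContDiff ℝ ∞ f) : SmoothNear f p :=
  .of_forall fun _ => hf.contDiffAt

theorem of_contDiffOn {U : Set E} (hf : ContDiffOn ℝ ∞ f U) (hU : U ∈ 𝓝 p) : SmoothNear f p :=
  (eventually_mem_nhds_iff.2 hU).mono fun _ hq => hf.contDiffAt hq

theorem exists_contDiffOn (hf : SmoothNear f p) : ∃ U ∈ 𝓝 p, ContDiffOn ℝ ∞ f U :=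
  ⟨_, hf, fun _ hq => ContDiffAt.contDiffWithinAt hq⟩

protected theorem const (c : F) : SmoothNear (fun _ : E => c) p := of_contDiff contDiff_const

protected theorem id : SmoothNear (fun q : E => q) p := of_contDiff contDiff_id

theorem comp_of_eq {g : F → G} {y : F} (hg : SmoothNear g y) (hf : SmoothNear f p)
    (h : f p = y) : SmoothNear (fun q => g (f q)) p := by
  subst h
  filter_upwards [hf, hf.continuousAt.eventually hg] with q hfq hgq using hgq.comp q hfq

protected theorem prodMk {g : E → G} (hf : SmoothNear f p) (hg : SmoothNear g p) :
    SmoothNear (fun q => (f q, g q)) p := by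
  filter_upwards [hf, hg] with q hfq hgq using hfq.prodMk hgq

protected theorem fst {f : E → F × G} (hf : SmoothNear f p) : SmoothNear (fun q => (f q).1) p := by
  filter_upwards [hf] with q hq using hq.fst

protected theorem snd {f : E → F × G} (hf : SmoothNear f p) : SmoothNear (fun q => (f q).2) p := by
  filter_upwards [hf] with q hq using hq.snd

protected theorem fderiv (hf : SmoothNear f p) : SmoothNear (fderiv ℝ f) p := by
  filter_upwards [hf] with q hq using hq.fderiv_right (m := ∞) (by simp)

theorem fderiv_apply (hf : SmoothNear f p) (v : E) :
    SmoothNear (fun q => fderiv ℝ f q v) p := by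
  filter_upwards [hf.fderiv] with q hq using hq.clm_apply contDiffAt_const

theorem clm_apply {L : E → F →L[ℝ] G} (hL : SmoothNear L p) (hf : SmoothNear f p) :
    SmoothNear (fun q => L q (f q)) p := by
  filter_upwards [hL, hf] with q hLq hfq using hLq.clm_apply hfq

protected theorem deriv {f : ℝ → F} {t : ℝ} (hf : SmoothNear f t) : SmoothNear (deriv f) t :=
  hf.fderiv_apply 1

variable {f g : E → ℝ}

protected theorem add (hf : SmoothNear f p) (hg : SmoothNear g p) :
    SmoothNear (fun q => f q + g q) p := by
  filter_upwards [hf, hg] with q hfq hgq using hfq.add hgq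

protected theorem sub (hf : SmoothNear f p) (hg : SmoothNear g p) :
    SmoothNear (fun q => f q - g q) p := by
  filter_upwards [hf, hg] with q hfq hgq using hfq.sub hgq

protected theorem neg (hf : SmoothNear f p) : SmoothNear (fun q => -f q) p := by
  filter_upwards [hf] with q hfq using hfq.neg

protected theorem mul (hf : SmoothNear f p) (hg : SmoothNear g p) :
    SmoothNear (fun q => f q * g q) p := by
  filter_upwards [hf, hg] with q hfq hgq using hfq.mul hgq

protected theorem pow (hf : SmoothNear f p) (n : ℕ) : SmoothNear (fun q => f q ^ n) p := by
  filter_upwards [hf] with q hfq using hfq.pow n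

protected theorem div (hf : SmoothNear f p) (hg : SmoothNear g p) (h : g p ≠ 0) :
    SmoothNear (fun q => f q / g q) p := by
  filter_upwards [hf, hg, hg.continuousAt.eventually_ne h] with q hfq hgq hq using hfq.div hgq hq

end SmoothNear

theorem fderiv_fderiv_apply {f : E → F} {p : E} (hf : SmoothNear f p) (v w : E) :
    fderiv ℝ (fun q => fderiv ℝ f q v) p w = fderiv ℝ (fderiv ℝ f) p w v := by
  simp [fderiv_clm_apply hf.fderiv.differentiableAt (differentiableAt_const v)]

theorem fderiv_fderiv_apply_comm {f : E → F} {p : E} (hf : SmoothNear f p) (v w : E) :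
    fderiv ℝ (fun q => fderiv ℝ f q v) p w = fderiv ℝ (fun q => fderiv ℝ f q w) p v := by
  have hsymm : IsSymmSndFDerivAt ℝ f p := hf.contDiffAt.isSymmSndFDerivAt
    (by rw [minSmoothness_of_isRCLikeNormedField]; exact WithTop.coe_le_coe.2 le_top)
  rw [fderiv_fderiv_apply hf, fderiv_fderiv_apply hf, hsymm.eq]

theorem SmoothNear.hasDerivAt_comp {f : E → F} {c : ℝ → E} {t : ℝ} (hf : SmoothNear f (c t))
    (hc : SmoothNear c t) : HasDerivAt (fun s => f (c s)) (fderiv ℝ f (c t) (deriv c t)) t :=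
  hf.differentiableAt.hasFDerivAt.comp_hasDerivAt t hc.differentiableAt.hasDerivAt

theorem SmoothNear.deriv_comp_eventuallyEq {f : E → F} {c : ℝ → E} {t : ℝ}
    (hf : SmoothNear f (c t)) (hc : SmoothNear c t) :
    deriv (fun s => f (c s)) =ᶠ[𝓝 t] fun s => fderiv ℝ f (c s) (deriv c s) := by
  filter_upwards [hc.continuousAt.eventually hf.eventually, hc.eventually] with s hfs hcs
    using (hfs.hasDerivAt_comp hcs).deriv

theorem SmoothNear.hasDerivAt_deriv_comp {f : E → F} {c : ℝ → E} {t : ℝ}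
    (hf : SmoothNear f (c t)) (hc : SmoothNear c t) :
    HasDerivAt (deriv fun s => f (c s)) (fderiv ℝ (fderiv ℝ f) (c t) (deriv c t) (deriv c t)
      + fderiv ℝ f (c t) (deriv (deriv c) t)) t :=
  ((hf.fderiv.hasDerivAt_comp hc).clm_apply
    hc.deriv.differentiableAt.hasDerivAt).congr_of_eventuallyEq (hf.deriv_comp_eventuallyEq hc)

theorem exists_local_inverse [FiniteDimensional ℝ E] {f : E → E} {p : E} (hf : SmoothNear f p)
    (hinj : Function.Injective (fderiv ℝ f p)) :
    ∃ g : E → E, SmoothNear g (f p) ∧ g (f p) = p ∧ (∀ᶠ x in 𝓝 p, g (f x) = x) ∧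
      ∀ᶠ y in 𝓝 (f p), f (g y) = y := by
  have : CompleteSpace E := FiniteDimensional.complete ℝ E
  let e : E ≃L[ℝ] E :=
    (LinearEquiv.ofInjectiveEndo (fderiv ℝ f p : E →ₗ[ℝ] E) hinj).toContinuousLinearEquiv
  have he : (e : E →L[ℝ] E) = fderiv ℝ f p := rfl
  have hstrict : HasStrictFDerivAt f (e : E →L[ℝ] E) p :=
    hf.contDiffAt.hasStrictFDerivAt' (he ▸ hf.differentiableAt.hasFDerivAt) (by simp)
  set R := hstrict.toOpenPartialHomeomorph f
  have hsource : p ∈ R.source := hstrict.mem_toOpenPartialHomeomorph_source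
  have htarget : f p ∈ R.target := hstrict.image_mem_toOpenPartialHomeomorph_target
  have hfix : R.symm (f p) = p := R.left_inv hsource
  refine ⟨R.symm, ?_, hfix, R.eventually_left_inverse hsource, R.eventually_right_inverse htarget⟩
  have hequiv : ∀ᶠ x in 𝓝 p, fderiv ℝ f x ∈ range ((↑) : (E ≃L[ℝ] E) → E →L[ℝ] E) :=
    hf.fderiv.continuousAt.eventually (ContinuousLinearEquiv.nhds e)
  have hback := (R.symm.continuousAt htarget).eventually
    (show ∀ᶠ x in 𝓝 (R.symm (f p)), _ by rw [hfix]; exact hequiv.and hf)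
  filter_upwards [hback, R.open_target.mem_nhds htarget] with y hy hyt
  obtain ⟨⟨e', he'⟩, hsmooth⟩ := hy
  have hderiv : HasFDerivAt R (e' : E →L[ℝ] E) (R.symm y) := by
    rw [he']; exact (hsmooth.differentiableAt (by simp)).hasFDerivAt
  exact R.contDiffAt_symm hyt hderiv hsmooth

theorem eventuallyEq_of_hasDerivAt {f g f' : ℝ → F} {t₀ : ℝ}
    (hf : ∀ᶠ t in 𝓝 t₀, HasDerivAt f (f' t) t) (hg : ∀ᶠ t in 𝓝 t₀, HasDerivAt g (f' t) t)
    (h₀ : f t₀ = g t₀) : f =ᶠ[𝓝 t₀] g := by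
  obtain ⟨ε, hε, hball⟩ := Metric.eventually_nhds_iff_ball.1 (hf.and hg)
  refine Metric.eventually_nhds_iff_ball.2 ⟨ε, hε, fun t ht => ?_⟩
  refine Metric.isOpen_ball.eqOn_of_deriv_eq (convex_ball t₀ ε).isPreconnected
    (fun s hs => (hball s hs).1.differentiableAt.differentiableWithinAt)
    (fun s hs => (hball s hs).2.differentiableAt.differentiableWithinAt)
    (fun s hs => ?_) (Metric.mem_ball_self hε) h₀ ht
  rw [(hball s hs).1.deriv, (hball s hs).2.deriv]

theorem smoothNear_of_hasDerivAt {V : F → F} {α : ℝ → F} {t₀ : ℝ} (hV : SmoothNear V (α t₀))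
    (hα : ∀ᶠ t in 𝓝 t₀, HasDerivAt α (V (α t)) t) : SmoothNear α t₀ := by
  have hev : ∀ᶠ t in 𝓝 t₀, HasDerivAt α (V (α t)) t ∧ ContDiffAt ℝ ∞ V (α t) :=
    hα.and (hα.self_of_nhds.continuousAt.eventually hV)
  obtain ⟨U, hU, hUo, hmem⟩ := mem_nhds_iff.1 hev
  have hsmooth (n : ℕ) : ContDiffOn ℝ n α U := by
    induction n with
    | zero => exact contDiffOn_zero.2 fun t ht => (hU ht).1.continuousAt.continuousWithinAt
    | succ n ih =>
      have hderiv : ContDiffOn ℝ n (deriv α) U :=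
        ContDiffOn.congr (f := fun t => V (α t)) (fun t ht =>
          ((hU ht).2.of_le (mod_cast le_top)).comp_contDiffWithinAt t (ih t ht))
          fun t ht => (hU ht).1.deriv
      exact_mod_cast (contDiffOn_succ_iff_deriv_of_isOpen (n := n) hUo).2
        ⟨fun t ht => (hU ht).1.differentiableAt.differentiableWithinAt, by simp, hderiv⟩
  filter_upwards [hUo.mem_nhds hmem] with t ht
  exact (contDiffOn_infty.2 hsmooth t ht).contDiffAt (hUo.mem_nhds ht)

theorem exists_ode_solution [CompleteSpace F] {V : ℝ × F → F} {z : F}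
    (hV : SmoothNear V (0, z)) : ∃ α : ℝ → F, SmoothNear α 0 ∧ α 0 = z ∧
      ∀ᶠ t in 𝓝 0, HasDerivAt α (V (t, α t)) t := by
  -- `(t, α t)` is an integral curve of the autonomous field `(1, V)`.
  have hW : SmoothNear (fun q => ((1 : ℝ), V q)) (0, z) := (SmoothNear.const 1).prodMk hV
  obtain ⟨β, hβ₀, ε, hε, hβ⟩ := (hW.contDiffAt_nat 1)
    |>.exists_forall_mem_closedBall_exists_eq_forall_mem_Ioo_hasDerivAt₀ 0
  have hβ' : ∀ᶠ t in 𝓝 (0 : ℝ), HasDerivAt β (1, V (β t)) t := by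
    filter_upwards [Ioo_mem_nhds (show 0 - ε < 0 by linarith) (show 0 < 0 + ε by linarith)]
      with t ht using hβ t ht
  have htime : (fun t => (β t).1) =ᶠ[𝓝 0] fun t => t :=
    eventuallyEq_of_hasDerivAt (hβ'.mono fun t ht => ht.fst) (.of_forall hasDerivAt_id')
      (by simp [hβ₀])
  refine ⟨fun t => (β t).2, (smoothNear_of_hasDerivAt (hβ₀ ▸ hW) hβ').snd, by simp [hβ₀], ?_⟩
  filter_upwards [hβ', htime] with t ht ht₁
  rw [show (t, (β t).2) = β t from Prod.ext ht₁.symm rfl]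
  exact ht.snd

theorem exists_second_order_ode_solution [CompleteSpace F] {W : ℝ × F × F → F}
    (hW : SmoothNear W 0) : ∃ u : ℝ → F, SmoothNear u 0 ∧ u 0 = 0 ∧ deriv u 0 = 0 ∧
      ∀ᶠ t in 𝓝 0, deriv (deriv u) t = W (t, u t, deriv u t) := by
  obtain ⟨α, hα, hα₀, hode⟩ := exists_ode_solution (V := fun r => (r.2.2, W r)) (z := 0)
    (SmoothNear.prodMk (.of_contDiff (by fun_prop)) hW)
  have hderiv : deriv (fun t => (α t).1) =ᶠ[𝓝 0] fun t => (α t).2 :=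
    hode.mono fun t ht => HasDerivAt.deriv ht.fst
  refine ⟨fun t => (α t).1, hα.fst, congrArg Prod.fst hα₀,
    hderiv.self_of_nhds.trans (congrArg Prod.snd hα₀), ?_⟩
  filter_upwards [hode, hderiv, hderiv.eventuallyEq_nhds] with t ht ht₁ ht₂
  rw [ht₂.deriv_eq, HasDerivAt.deriv ht.snd, ht₁]

end SmoothNear

/-- The first partial derivative of a function on the plane. -/
noncomputable def d₁ (f : ℝ × ℝ → ℝ) (p : ℝ × ℝ) : ℝ := fderiv ℝ f p (1, 0)

/-- The second partial derivative of a function on the plane. -/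
noncomputable def d₂ (f : ℝ × ℝ → ℝ) (p : ℝ × ℝ) : ℝ := fderiv ℝ f p (0, 1)

/-- The partial derivative `∂/∂a` of a function of `(a, b, x)`. -/
noncomputable def D₁ (f : ℝ × ℝ × ℝ → ℝ) (p : ℝ × ℝ × ℝ) : ℝ := fderiv ℝ f p (1, 0, 0)

/-- The partial derivative `∂/∂b` of a function of `(a, b, x)`. -/
noncomputable def D₂ (f : ℝ × ℝ × ℝ → ℝ) (p : ℝ × ℝ × ℝ) : ℝ := fderiv ℝ f p (0, 1, 0)

/-- The partial derivative `∂/∂x` of a function of `(a, b, x)`. -/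
noncomputable def D₃ (f : ℝ × ℝ × ℝ → ℝ) (p : ℝ × ℝ × ℝ) : ℝ := fderiv ℝ f p (0, 0, 1)

section Partials

variable {f : ℝ × ℝ → ℝ} {F G : ℝ × ℝ × ℝ → ℝ} {p : ℝ × ℝ × ℝ} {q : ℝ × ℝ}

protected theorem SmoothNear.D₁ (hF : SmoothNear F p) : SmoothNear (D₁ F) p := hF.fderiv_apply _

protected theorem SmoothNear.D₂ (hF : SmoothNear F p) : SmoothNear (D₂ F) p := hF.fderiv_apply _

protected theorem SmoothNear.D₃ (hF : SmoothNear F p) : SmoothNear (D₃ F) p := hF.fderiv_apply _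

theorem SmoothNear.D₂_iterate (hF : SmoothNear F p) (n : ℕ) : SmoothNear (D₂^[n] F) p := by
  induction n with
  | zero => exact hF
  | succ n ih => rw [Function.iterate_succ_apply']; exact ih.D₂

theorem SmoothNear.D₃_iterate (hF : SmoothNear F p) (n : ℕ) : SmoothNear (D₃^[n] F) p := by
  induction n with
  | zero => exact hF
  | succ n ih => rw [Function.iterate_succ_apply']; exact ih.D₃

theorem D₂_D₃_comm (hF : SmoothNear F p) : D₂ (D₃ F) p = D₃ (D₂ F) p :=
  fderiv_fderiv_apply_comm hF _ _

theorem fderiv_apply_prod (f : ℝ × ℝ → ℝ) (q : ℝ × ℝ) (u v : ℝ) :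
    fderiv ℝ f q (u, v) = d₁ f q * u + d₂ f q * v := by
  rw [show ((u, v) : ℝ × ℝ) = u • (1, 0) + v • (0, 1) by simp, map_add, map_smul, map_smul]
  simp [d₁, d₂, mul_comm]

theorem fderiv_apply_prod₃ (F : ℝ × ℝ × ℝ → ℝ) (p : ℝ × ℝ × ℝ) (u v w : ℝ) :
    fderiv ℝ F p (u, v, w) = D₁ F p * u + D₂ F p * v + D₃ F p * w := by
  rw [show ((u, v, w) : ℝ × ℝ × ℝ) = u • (1, 0, 0) + v • (0, 1, 0) + w • (0, 0, 1) by simp,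
    map_add, map_add, map_smul, map_smul, map_smul]
  simp [D₁, D₂, D₃, mul_comm]

theorem hasDerivAt_comp_curve {c₁ c₂ : ℝ → ℝ} {t v₁ v₂ : ℝ} (hf : SmoothNear f (c₁ t, c₂ t))
    (h₁ : HasDerivAt c₁ v₁ t) (h₂ : HasDerivAt c₂ v₂ t) :
    HasDerivAt (fun s => f (c₁ s, c₂ s)) (d₁ f (c₁ t, c₂ t) * v₁ + d₂ f (c₁ t, c₂ t) * v₂) t := by
  rw [← fderiv_apply_prod]
  exact hf.differentiableAt.hasFDerivAt.comp_hasDerivAt t (h₁.prodMk h₂)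

theorem hasDerivAt_comp_curve₃ {c₁ c₂ c₃ : ℝ → ℝ} {t v₁ v₂ v₃ : ℝ}
    (hF : SmoothNear F (c₁ t, c₂ t, c₃ t)) (h₁ : HasDerivAt c₁ v₁ t) (h₂ : HasDerivAt c₂ v₂ t)
    (h₃ : HasDerivAt c₃ v₃ t) :
    HasDerivAt (fun s => F (c₁ s, c₂ s, c₃ s)) (D₁ F (c₁ t, c₂ t, c₃ t) * v₁
      + D₂ F (c₁ t, c₂ t, c₃ t) * v₂ + D₃ F (c₁ t, c₂ t, c₃ t) * v₃) t := by
  rw [← fderiv_apply_prod₃]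
  exact hF.differentiableAt.hasFDerivAt.comp_hasDerivAt t (h₁.prodMk (h₂.prodMk h₃))

theorem hasDerivAt_d₁ {u v : ℝ} (hf : SmoothNear f (u, v)) :
    HasDerivAt (fun s => f (s, v)) (d₁ f (u, v)) u := by
  simpa using hasDerivAt_comp_curve (c₁ := fun s => s) hf (hasDerivAt_id' u) (hasDerivAt_const u v)

theorem hasDerivAt_d₂ {u v : ℝ} (hf : SmoothNear f (u, v)) :
    HasDerivAt (fun s => f (u, s)) (d₂ f (u, v)) v := by
  simpa using hasDerivAt_comp_curve (c₂ := fun s => s) hf (hasDerivAt_const v u) (hasDerivAt_id' v)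

variable {a b x : ℝ}

theorem hasDerivAt_D₁ (hF : SmoothNear F (a, b, x)) :
    HasDerivAt (fun s => F (s, b, x)) (D₁ F (a, b, x)) a := by
  simpa using hasDerivAt_comp_curve₃ (c₁ := fun s => s) hF (hasDerivAt_id' a)
    (hasDerivAt_const a b) (hasDerivAt_const a x)

theorem hasDerivAt_D₂ (hF : SmoothNear F (a, b, x)) :
    HasDerivAt (fun s => F (a, s, x)) (D₂ F (a, b, x)) b := by
  simpa using hasDerivAt_comp_curve₃ (c₂ := fun s => s) hF (hasDerivAt_const b a)
    (hasDerivAt_id' b) (hasDerivAt_const b x)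

theorem hasDerivAt_D₃ (hF : SmoothNear F (a, b, x)) :
    HasDerivAt (fun s => F (a, b, s)) (D₃ F (a, b, x)) x := by
  simpa using hasDerivAt_comp_curve₃ (c₃ := fun s => s) hF (hasDerivAt_const x a)
    (hasDerivAt_const x b) (hasDerivAt_id' x)

theorem iteratedDeriv_slice₂ (hF : SmoothNear F (a, b, x)) (n : ℕ) :
    iteratedDeriv n (fun s => F (a, s, x)) b = D₂^[n] F (a, b, x) := by
  induction n generalizing F with
  | zero => simp
  | succ n ih =>
    have hderiv : deriv (fun s => F (a, s, x)) =ᶠ[𝓝 b] fun s => D₂ F (a, s, x) := by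
      filter_upwards [(by fun_prop : ContinuousAt (fun s => (a, s, x)) b).eventually hF.eventually]
        with s hs using (hasDerivAt_D₂ hs).deriv
    rw [iteratedDeriv_succ', hderiv.iteratedDeriv_eq, ih hF.D₂, Function.iterate_succ_apply]

theorem iteratedDeriv_slice₃ (hF : SmoothNear F (a, b, x)) (n : ℕ) :
    iteratedDeriv n (fun s => F (a, b, s)) x = D₃^[n] F (a, b, x) := by
  induction n generalizing F with
  | zero => simp
  | succ n ih =>
    have hderiv : deriv (fun s => F (a, b, s)) =ᶠ[𝓝 x] fun s => D₃ F (a, b, s) := by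
      filter_upwards [(by fun_prop : ContinuousAt (fun s => (a, b, s)) x).eventually hF.eventually]
        with s hs using (hasDerivAt_D₃ hs).deriv
    rw [iteratedDeriv_succ', hderiv.iteratedDeriv_eq, ih hF.D₃, Function.iterate_succ_apply]

theorem D₁_congr (h : F =ᶠ[𝓝 p] G) : D₁ F p = D₁ G p := by rw [D₁, h.fderiv_eq, ← D₁]

theorem D₂_congr (h : F =ᶠ[𝓝 p] G) : D₂ F p = D₂ G p := by rw [D₂, h.fderiv_eq, ← D₂]

theorem D₃_congr (h : F =ᶠ[𝓝 p] G) : D₃ F p = D₃ G p := by rw [D₃, h.fderiv_eq, ← D₃]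

end Partials

/-- `Φ` is the germ at the origin of a smooth diffeomorphism of the plane fixing the origin. -/
structure IsDiffeoGerm (Φ : ℝ × ℝ → ℝ × ℝ) : Prop where
  smoothNear : SmoothNear Φ 0
  map_zero : Φ 0 = 0
  det_ne_zero : (fderiv ℝ Φ 0).det ≠ 0

theorem det_fderiv_prodMk {f g : ℝ × ℝ → ℝ} {q : ℝ × ℝ} (hf : SmoothNear f q)
    (hg : SmoothNear g q) :
    (fderiv ℝ (fun z => (f z, g z)) q).det = d₁ f q * d₂ g q - d₂ f q * d₁ g q := by
  rw [hf.differentiableAt.fderiv_prodMk hg.differentiableAt, ContinuousLinearMap.det,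
    ← LinearMap.det_toMatrix (Module.Basis.finTwoProd ℝ), Matrix.det_fin_two]
  simp [LinearMap.toMatrix_apply, d₁, d₂]

namespace IsDiffeoGerm

variable {Φ Ψ : ℝ × ℝ → ℝ × ℝ}

theorem prodMk {f g : ℝ × ℝ → ℝ} (hf : SmoothNear f 0) (hg : SmoothNear g 0) (hf₀ : f 0 = 0)
    (hg₀ : g 0 = 0) (hdet : d₁ f 0 * d₂ g 0 - d₂ f 0 * d₁ g 0 ≠ 0) :
    IsDiffeoGerm fun q => (f q, g q) :=
  ⟨hf.prodMk hg, by simp [hf₀, hg₀], det_fderiv_prodMk hf hg ▸ hdet⟩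

theorem jacobian_ne_zero (hΦ : IsDiffeoGerm Φ) :
    d₁ (fun q => (Φ q).1) 0 * d₂ (fun q => (Φ q).2) 0
      - d₂ (fun q => (Φ q).1) 0 * d₁ (fun q => (Φ q).2) 0 ≠ 0 :=
  det_fderiv_prodMk hΦ.smoothNear.fst hΦ.smoothNear.snd ▸ hΦ.det_ne_zero

theorem id : IsDiffeoGerm fun q => q :=
  ⟨.id, rfl, by simp [ContinuousLinearMap.det]⟩

theorem swap : IsDiffeoGerm fun q => (q.2, q.1) := by
  refine .prodMk SmoothNear.id.snd SmoothNear.id.fst rfl rfl ?_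
  have h₁ : d₁ (fun q => q.2) 0 = 0 :=
    (hasDerivAt_d₁ (u := 0) (v := 0) SmoothNear.id.snd).unique (hasDerivAt_const _ _)
  have h₂ : d₂ (fun q => q.2) 0 = 1 :=
    (hasDerivAt_d₂ (u := 0) (v := 0) SmoothNear.id.snd).unique (hasDerivAt_id' _)
  have h₃ : d₁ (fun q => q.1) 0 = 1 :=
    (hasDerivAt_d₁ (u := 0) (v := 0) SmoothNear.id.fst).unique (hasDerivAt_id' _)
  rw [h₁, h₂, h₃]
  norm_num

theorem comp (hΦ : IsDiffeoGerm Φ) (hΨ : IsDiffeoGerm Ψ) : IsDiffeoGerm fun q => Φ (Ψ q) := by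
  have hΦ' : SmoothNear Φ (Ψ 0) := hΨ.map_zero.symm ▸ hΦ.smoothNear
  refine ⟨hΦ'.comp_of_eq hΨ.smoothNear rfl, by rw [hΨ.map_zero, hΦ.map_zero], ?_⟩
  rw [fderiv_fun_comp 0 hΦ'.differentiableAt hΨ.smoothNear.differentiableAt, hΨ.map_zero]
  exact (LinearMap.det_comp _ _).trans_ne (mul_ne_zero hΦ.det_ne_zero hΨ.det_ne_zero)

theorem exists_inverse (hΦ : IsDiffeoGerm Φ) :
    ∃ Ψ, IsDiffeoGerm Ψ ∧ (∀ᶠ q in 𝓝 0, Ψ (Φ q) = q) ∧ ∀ᶠ q in 𝓝 0, Φ (Ψ q) = q := by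
  obtain ⟨Ψ, hΨ, hΨ₀, hleft, hright⟩ := exists_local_inverse hΦ.smoothNear
    ((fderiv ℝ Φ 0).toContinuousLinearEquivOfDetNeZero hΦ.det_ne_zero).injective
  rw [hΦ.map_zero] at hΨ hΨ₀ hright
  have hcomp : (fderiv ℝ Φ 0).comp (fderiv ℝ Ψ 0) = .id ℝ (ℝ × ℝ) := by
    have h := fderiv_fun_comp 0 (hΨ₀.symm ▸ hΦ.smoothNear.differentiableAt) hΨ.differentiableAt
    rw [hΨ₀, EventuallyEq.fderiv_eq (f := fun q => q) hright, fderiv_fun_id] at h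
    exact h.symm
  have hdet : (fderiv ℝ Φ 0).det * (fderiv ℝ Ψ 0).det = 1 :=
    (LinearMap.det_comp _ _).symm.trans
      ((congrArg ContinuousLinearMap.det hcomp).trans LinearMap.det_id)
  exact ⟨Ψ, ⟨hΨ, hΨ₀, right_ne_zero_of_mul_eq_one hdet⟩, hleft, hright⟩

theorem smoothLocalDiffeoAtZero (hΦ : IsDiffeoGerm Φ) : SmoothLocalDiffeoAtZero Φ := by
  obtain ⟨Ψ, hΨ, hleft, hright⟩ := hΦ.exists_inverse
  have hΨ' : ∀ᶠ q in 𝓝 (0 : ℝ × ℝ), ContDiffAt ℝ ∞ Ψ q ∧ Φ (Ψ q) = q :=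
    hΨ.smoothNear.and hright
  have hΦ' : ∀ᶠ q in 𝓝 (0 : ℝ × ℝ), ContDiffAt ℝ ∞ Φ q ∧ Ψ (Φ q) = q :=
    hΦ.smoothNear.and hleft
  obtain ⟨W, hW, hWo, hW₀⟩ := mem_nhds_iff.1 hΨ'
  obtain ⟨U, hU, hUo, hU₀⟩ := mem_nhds_iff.1 (hΦ'.and
    (hΦ.smoothNear.continuousAt.preimage_mem_nhds (hΦ.map_zero ▸ hWo.mem_nhds hW₀)))
  have himage : Φ '' U = W ∩ Ψ ⁻¹' U := by
    ext q
    constructor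
    · rintro ⟨p, hp, rfl⟩
      exact ⟨(hU hp).2, by simpa only [mem_preimage, (hU hp).1.2] using hp⟩
    · exact fun hq => ⟨Ψ q, hq.2, (hW hq.1).2⟩
  refine ⟨U, hUo.mem_nhds hU₀, hΦ.map_zero, fun p hp => (hU hp).1.1.contDiffWithinAt,
    LeftInvOn.injOn fun p hp => (hU hp).1.2, ?_, Ψ, ?_, fun p hp => (hU hp).1.2⟩
  · rw [himage]
    exact ContinuousOn.isOpen_inter_preimage
      (fun q hq => (hW hq).1.continuousAt.continuousWithinAt) hWo hUo
  · rw [himage]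
    exact fun q hq => (hW hq.1).1.contDiffWithinAt

end IsDiffeoGerm

/-- The point `p = (x, y)` lies on the leaf `y = F (a, b, x)` with parameters `q = (b, a)`. -/
def Incident (F : ℝ × ℝ × ℝ → ℝ) (p q : ℝ × ℝ) : Prop := p.2 = F (q.2, q.1, p.1)

/-- `y = F (a, b, x)` and `a = F' (y, x, b)` define the same hypersurface near the origin, so
that `F'` is the defining function after the roles of `(x, y)` and `(b, a)` are exchanged. -/
def IsDual (F F' : ℝ × ℝ × ℝ → ℝ) : Prop :=
  ∀ᶠ r in 𝓝 (0 : (ℝ × ℝ) × (ℝ × ℝ)), Incident F r.1 r.2 ↔ Incident F' r.2 r.1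

/-- The hypersurface defined by `F` is written as the one defined by `G` in new coordinates;
`H` and `K` express the old coordinates `(x, y)` and `(b, a)` through the new ones. -/
structure IsCoordChange (F G : ℝ × ℝ × ℝ → ℝ) (H K : ℝ × ℝ → ℝ × ℝ) : Prop where
  left : IsDiffeoGerm H
  right : IsDiffeoGerm K
  incident_iff : ∀ᶠ r in 𝓝 (0 : (ℝ × ℝ) × (ℝ × ℝ)),
    Incident F (H r.1) (K r.2) ↔ Incident G r.1 r.2

section CoordChange

variable {F F' G G' : ℝ × ℝ × ℝ → ℝ} {H H' K K' : ℝ × ℝ → ℝ × ℝ}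

theorem eventually_of_continuousAt {α β : Type*} [TopologicalSpace α] [TopologicalSpace β]
    {P : β → Prop} {b : β} {m : α → β} {a : α} (h : ∀ᶠ q in 𝓝 b, P q) (hm : ContinuousAt m a)
    (hb : m a = b) : ∀ᶠ z in 𝓝 a, P (m z) :=
  hm.eventually (hb.symm ▸ h)

theorem IsDual.symm (h : IsDual F F') : IsDual F' F :=
  (eventually_of_continuousAt h continuous_swap.continuousAt rfl).mono fun _ hr => hr.symm

theorem IsDual.apply_dual (h : IsDual F F') (hF' : SmoothNear F' 0) (hF'₀ : F' 0 = 0) :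
    ∀ᶠ p in 𝓝 (0 : ℝ × ℝ × ℝ), F (F' p, p.2.2, p.2.1) = p.1 := by
  have hcont : ContinuousAt (fun p : ℝ × ℝ × ℝ => ((p.2.1, p.1), (p.2.2, F' p))) 0 :=
    have := hF'.continuousAt
    by fun_prop
  filter_upwards [eventually_of_continuousAt h hcont (by simp [hF'₀])] with p hp
  exact (hp.2 rfl).symm

namespace IsCoordChange

theorem trans (h : IsCoordChange F G H K) (h' : IsCoordChange G G' H' K') :
    IsCoordChange F G' (fun p => H (H' p)) fun q => K (K' q) := by
  refine ⟨h.left.comp h'.left, h.right.comp h'.right, ?_⟩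
  have hcont : ContinuousAt (fun r : (ℝ × ℝ) × (ℝ × ℝ) => (H' r.1, K' r.2)) 0 :=
    h'.left.smoothNear.continuousAt.prodMap h'.right.smoothNear.continuousAt
  filter_upwards [eventually_of_continuousAt h.incident_iff hcont
    (by simp [h'.left.map_zero, h'.right.map_zero]), h'.incident_iff] with r hr hr'
  exact hr.trans hr'

theorem exists_symm (h : IsCoordChange F G H K) :
    ∃ Φ Ψ, IsCoordChange G F Φ Ψ := by
  obtain ⟨Φ, hΦ, -, hHΦ⟩ := h.left.exists_inverse
  obtain ⟨Ψ, hΨ, -, hKΨ⟩ := h.right.exists_inverse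
  refine ⟨Φ, Ψ, hΦ, hΨ, ?_⟩
  have hcont : ContinuousAt (fun r : (ℝ × ℝ) × (ℝ × ℝ) => (Φ r.1, Ψ r.2)) 0 :=
    hΦ.smoothNear.continuousAt.prodMap hΨ.smoothNear.continuousAt
  filter_upwards [eventually_of_continuousAt h.incident_iff hcont
      (by simp [hΦ.map_zero, hΨ.map_zero]),
    eventually_of_continuousAt hHΦ continuous_fst.continuousAt rfl,
    eventually_of_continuousAt hKΨ continuous_snd.continuousAt rfl] with r hr hr₁ hr₂
  rw [hr₁, hr₂] at hr
  exact hr.symm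

theorem dual (h : IsCoordChange F G H K) (hF : IsDual F F') (hG : IsDual G G') :
    IsCoordChange F' G' K H := by
  refine ⟨h.right, h.left, ?_⟩
  have hcont : ContinuousAt (fun r : (ℝ × ℝ) × (ℝ × ℝ) => (H r.2, K r.1)) 0 :=
    (h.left.smoothNear.continuousAt.comp_of_eq continuousAt_snd rfl).prodMk
      (h.right.smoothNear.continuousAt.comp_of_eq continuousAt_fst rfl)
  filter_upwards [eventually_of_continuousAt hF hcont
    (by simp [h.left.map_zero, h.right.map_zero]),
    eventually_of_continuousAt h.incident_iff continuous_swap.continuousAt rfl,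
    eventually_of_continuousAt hG continuous_swap.continuousAt rfl] with r hr₁ hr₂ hr₃
  exact hr₁.symm.trans (hr₂.trans hr₃)

theorem incident_graph (h : IsCoordChange F G H K) (hG : SmoothNear G 0) (hG₀ : G 0 = 0) :
    ∀ᶠ p in 𝓝 (0 : ℝ × ℝ × ℝ), Incident F (H (p.2.2, G p)) (K (p.2.1, p.1)) := by
  have hcont : ContinuousAt (fun p : ℝ × ℝ × ℝ => ((p.2.2, G p), (p.2.1, p.1))) 0 :=
    have := hG.continuousAt
    by fun_prop
  filter_upwards [eventually_of_continuousAt h.incident_iff hcont (by simp [hG₀])] with p hp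
  exact hp.2 rfl

end IsCoordChange

end CoordChange

/-- The Levi determinant `F_a F_{bx} - F_b F_{ax}` of a defining function. -/
noncomputable def levi (F : ℝ × ℝ × ℝ → ℝ) (p : ℝ × ℝ × ℝ) : ℝ :=
  D₁ F p * D₂ (D₃ F) p - D₂ F p * D₁ (D₃ F) p

/-- `y = F (a, b, x)` is a regular para-CR hypersurface through the origin. -/
structure IsRegular (F : ℝ × ℝ × ℝ → ℝ) : Prop where
  smoothNear : SmoothNear F 0
  map_zero : F 0 = 0
  D₁_ne_zero : D₁ F 0 ≠ 0
  levi_ne_zero : levi F 0 ≠ 0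

/-- The defining function obtained from `F` by the substitution `(b, a) = K (b', a')`. -/
def pull (F : ℝ × ℝ × ℝ → ℝ) (K : ℝ × ℝ → ℝ × ℝ) (p : ℝ × ℝ × ℝ) : ℝ :=
  F ((K (p.2.1, p.1)).2, (K (p.2.1, p.1)).1, p.2.2)

section Pull

variable {F : ℝ × ℝ × ℝ → ℝ} {K : ℝ × ℝ → ℝ × ℝ}

protected theorem SmoothNear.pull {p : ℝ × ℝ × ℝ} {z : ℝ × ℝ} (hK : SmoothNear K (p.2.1, p.1))
    (hz : K (p.2.1, p.1) = z) (hF : SmoothNear F (z.2, z.1, p.2.2)) :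
    SmoothNear (pull F K) p := by
  have hK' : SmoothNear (fun p : ℝ × ℝ × ℝ => K (p.2.1, p.1)) p :=
    hK.comp_of_eq (.of_contDiff (by fun_prop)) rfl
  exact hF.comp_of_eq (hK'.snd.prodMk (hK'.fst.prodMk (.of_contDiff (by fun_prop)))) (by rw [hz])

theorem isCoordChange_pull (F : ℝ × ℝ × ℝ → ℝ) (hK : IsDiffeoGerm K) :
    IsCoordChange F (pull F K) (fun p => p) K :=
  ⟨.id, hK, .of_forall fun _ => .rfl⟩

theorem IsDiffeoGerm.smoothNear_pull (hK : IsDiffeoGerm K) (hF : SmoothNear F 0) :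
    SmoothNear (pull F K) 0 :=
  .pull (p := 0) hK.smoothNear hK.map_zero hF

section

variable {a b x : ℝ} {z : ℝ × ℝ} (hK : SmoothNear K (b, a)) (hz : K (b, a) = z)
  (hF : SmoothNear F (z.2, z.1, x))

include hK hz hF

theorem D₁_pull : D₁ (pull F K) (a, b, x) = D₁ F (z.2, z.1, x) * d₂ (fun q => (K q).2) (b, a)
    + D₂ F (z.2, z.1, x) * d₂ (fun q => (K q).1) (b, a) := by
  have hG := hasDerivAt_D₁ (SmoothNear.pull (p := (a, b, x)) hK hz hF)
  subst hz
  simpa using hG.unique (hasDerivAt_comp_curve₃ (F := F) hF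
    (hasDerivAt_d₂ hK.snd) (hasDerivAt_d₂ hK.fst) (hasDerivAt_const a x))

theorem D₂_pull : D₂ (pull F K) (a, b, x) = D₁ F (z.2, z.1, x) * d₁ (fun q => (K q).2) (b, a)
    + D₂ F (z.2, z.1, x) * d₁ (fun q => (K q).1) (b, a) := by
  have hG := hasDerivAt_D₂ (SmoothNear.pull (p := (a, b, x)) hK hz hF)
  subst hz
  simpa using hG.unique (hasDerivAt_comp_curve₃ (F := F) hF
    (hasDerivAt_d₁ hK.snd) (hasDerivAt_d₁ hK.fst) (hasDerivAt_const b x))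

theorem D₃_pull : D₃ (pull F K) (a, b, x) = D₃ F (z.2, z.1, x) := by
  have hG := hasDerivAt_D₃ (SmoothNear.pull (p := (a, b, x)) hK hz hF)
  subst hz
  exact hG.unique (hasDerivAt_D₃ hF)

end

theorem D₃_pull_eventuallyEq (hK : IsDiffeoGerm K) (hF : SmoothNear F 0) :
    D₃ (pull F K) =ᶠ[𝓝 0] pull (D₃ F) K := by
  have hcont : ContinuousAt (fun p : ℝ × ℝ × ℝ => (p.2.1, p.1)) 0 := by fun_prop
  have hK' : ContinuousAt (fun p : ℝ × ℝ × ℝ => K (p.2.1, p.1)) 0 :=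
    hK.smoothNear.continuousAt.comp_of_eq hcont rfl
  filter_upwards [eventually_of_continuousAt hK.smoothNear.eventually hcont rfl,
    eventually_of_continuousAt hF.eventually (hK'.snd.prodMk (hK'.fst.prodMk
      (continuousAt_snd.comp' continuousAt_snd)))
      (congrArg (fun z : ℝ × ℝ => (z.2, z.1, (0 : ℝ))) hK.map_zero)]
    with p hKp hFp using D₃_pull hKp rfl hFp

theorem levi_pull (hK : IsDiffeoGerm K) (hF : SmoothNear F 0) :
    levi (pull F K) 0 = levi F 0 * (d₁ (fun q => (K q).1) 0 * d₂ (fun q => (K q).2) 0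
      - d₂ (fun q => (K q).1) 0 * d₁ (fun q => (K q).2) 0) := by
  have h₁ {g : ℝ × ℝ × ℝ → ℝ} (hg : SmoothNear g 0) : D₁ (pull g K) 0 =
      D₁ g 0 * d₂ (fun q => (K q).2) 0 + D₂ g 0 * d₂ (fun q => (K q).1) 0 :=
    D₁_pull hK.smoothNear hK.map_zero hg
  have h₂ {g : ℝ × ℝ × ℝ → ℝ} (hg : SmoothNear g 0) : D₂ (pull g K) 0 =
      D₁ g 0 * d₁ (fun q => (K q).2) 0 + D₂ g 0 * d₁ (fun q => (K q).1) 0 :=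
    D₂_pull hK.smoothNear hK.map_zero hg
  have h₃ := D₃_pull_eventuallyEq hK hF
  rw [levi, levi, D₁_congr h₃, D₂_congr h₃, h₁ hF, h₂ hF, h₁ hF.D₃, h₂ hF.D₃]
  ring

protected theorem IsRegular.pull (hF : IsRegular F) (hK : IsDiffeoGerm K)
    (h : D₁ F 0 * d₂ (fun q => (K q).2) 0 + D₂ F 0 * d₂ (fun q => (K q).1) 0 ≠ 0) :
    IsRegular (pull F K) where
  smoothNear := hK.smoothNear_pull hF.smoothNear
  map_zero := (congrArg (fun z : ℝ × ℝ => F (z.2, z.1, 0)) hK.map_zero).trans hF.map_zero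
  D₁_ne_zero := (D₁_pull hK.smoothNear hK.map_zero hF.smoothNear).trans_ne h
  levi_ne_zero := by
    rw [levi_pull hK hF.smoothNear]
    exact mul_ne_zero hF.levi_ne_zero hK.jacobian_ne_zero

end Pull

section Dual

variable {F F' g : ℝ × ℝ × ℝ → ℝ} {p : ℝ × ℝ × ℝ}

theorem SmoothNear.comp_dual {s : ℝ} (hF' : SmoothNear F' p) (hs : F' p = s)
    (hg : SmoothNear g (s, p.2.2, p.2.1)) :
    SmoothNear (fun p => g (F' p, p.2.2, p.2.1)) p :=
  hg.comp_of_eq (hF'.prodMk (.of_contDiff (by fun_prop))) (by rw [hs])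

section

variable {s : ℝ} (hF' : SmoothNear F' p) (hs : F' p = s) (hg : SmoothNear g (s, p.2.2, p.2.1))

include hF' hs hg

theorem D₁_comp_dual : D₁ (fun p => g (F' p, p.2.2, p.2.1)) p
    = D₁ g (s, p.2.2, p.2.1) * D₁ F' p := by
  have hcomp := hasDerivAt_D₁ (hF'.comp_dual hs hg)
  subst hs
  simpa using hcomp.unique (hasDerivAt_comp_curve₃ (F := g) hg (hasDerivAt_D₁ hF')
    (hasDerivAt_const _ _) (hasDerivAt_const _ _))

theorem D₂_comp_dual : D₂ (fun p => g (F' p, p.2.2, p.2.1)) p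
    = D₁ g (s, p.2.2, p.2.1) * D₂ F' p + D₃ g (s, p.2.2, p.2.1) := by
  have hcomp := hasDerivAt_D₂ (hF'.comp_dual hs hg)
  subst hs
  simpa using hcomp.unique (hasDerivAt_comp_curve₃ (F := g) hg (hasDerivAt_D₂ hF')
    (hasDerivAt_const _ _) (hasDerivAt_id' _))

theorem D₃_comp_dual : D₃ (fun p => g (F' p, p.2.2, p.2.1)) p
    = D₁ g (s, p.2.2, p.2.1) * D₃ F' p + D₂ g (s, p.2.2, p.2.1) := by
  have hcomp := hasDerivAt_D₃ (hF'.comp_dual hs hg)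
  subst hs
  simpa using hcomp.unique (hasDerivAt_comp_curve₃ (F := g) hg (hasDerivAt_D₃ hF')
    (hasDerivAt_id' _) (hasDerivAt_const _ _))

end

theorem IsDual.partials (h : IsDual F F') (hF : SmoothNear F 0) (hF' : SmoothNear F' 0)
    (hF'₀ : F' 0 = 0) : ∀ᶠ p in 𝓝 (0 : ℝ × ℝ × ℝ),
      D₁ F (F' p, p.2.2, p.2.1) * D₁ F' p = 1 ∧
      D₁ F (F' p, p.2.2, p.2.1) * D₂ F' p + D₃ F (F' p, p.2.2, p.2.1) = 0 ∧
      D₁ F (F' p, p.2.2, p.2.1) * D₃ F' p + D₂ F (F' p, p.2.2, p.2.1) = 0 := by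
  have hcont : ContinuousAt (fun p : ℝ × ℝ × ℝ => (F' p, p.2.2, p.2.1)) 0 :=
    have := hF'.continuousAt
    by fun_prop
  filter_upwards [(h.apply_dual hF' hF'₀).eventually_nhds, hF'.eventually,
    eventually_of_continuousAt hF.eventually hcont (by simp [hF'₀])] with p hp hF'p hFp
  have hp : (fun p => F (F' p, p.2.2, p.2.1)) =ᶠ[𝓝 p] fun p => p.1 := hp
  rw [← D₁_comp_dual hF'p rfl hFp, ← D₂_comp_dual hF'p rfl hFp, ← D₃_comp_dual hF'p rfl hFp,
    D₁_congr hp, D₂_congr hp, D₃_congr hp]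
  simp [D₁, D₂, D₃, fderiv_fst]

theorem IsDual.levi_eq (h : IsDual F F') (hF : SmoothNear F 0) (hF' : SmoothNear F' 0)
    (hF'₀ : F' 0 = 0) : levi F' 0 * D₁ F 0 ^ 3 = -levi F 0 := by
  have hpartials := h.partials hF hF' hF'₀
  obtain ⟨e₁, -, e₃⟩ := hpartials.self_of_nhds
  have hzero : (fun p : ℝ × ℝ × ℝ => D₁ F (F' p, p.2.2, p.2.1) * D₃ F' p
      + D₂ F (F' p, p.2.2, p.2.1)) =ᶠ[𝓝 0] fun _ => 0 := hpartials.mono fun p hp => hp.2.2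
  have hD₁F := hF'.comp_dual hF'₀ hF.D₁
  have hD₂F := hF'.comp_dual hF'₀ hF.D₂
  have hprod (u v w : ℝ) :=
    congrArg (fun L : ℝ × ℝ × ℝ →L[ℝ] ℝ => L (u, v, w)) hzero.fderiv_eq
  simp only [fderiv_fun_add (hD₁F.mul hF'.D₃).differentiableAt hD₂F.differentiableAt,
    fderiv_fun_mul hD₁F.differentiableAt hF'.D₃.differentiableAt, add_apply, smul_apply,
    smul_eq_mul, fderiv_apply_prod₃, fderiv_fun_const, Pi.zero_apply, zero_apply] at hprod
  have hd₁ := hprod 1 0 0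
  have hd₂ := hprod 0 1 0
  have hD₁₃ : D₃ (D₁ F) 0 = D₁ (D₃ F) 0 := fderiv_fderiv_apply_comm hF _ _
  simp only [D₁_comp_dual hF' hF'₀ hF.D₁, D₁_comp_dual hF' hF'₀ hF.D₂,
    D₂_comp_dual hF' hF'₀ hF.D₁, D₂_comp_dual hF' hF'₀ hF.D₂, hF'₀, Prod.fst_zero, Prod.snd_zero,
    Prod.mk_zero_zero, hD₁₃, ← D₂_D₃_comm hF, mul_one, mul_zero, add_zero, zero_add]
    at hd₁ hd₂ e₁ e₃
  rw [levi, levi]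
  linear_combination D₁ F 0 ^ 2 * (D₁ F' 0 * hd₂ - D₂ F' 0 * hd₁)
    - D₁ F 0 * (D₃ F' 0 * D₁ (D₃ F) 0 + D₂ (D₃ F) 0) * e₁ - D₁ (D₃ F) 0 * e₃

end Dual

section Transform

variable {F : ℝ × ℝ × ℝ → ℝ}

theorem IsRegular.exists_graph_inverse (hF : IsRegular F) :
    ∃ g : ℝ × ℝ × ℝ → ℝ × ℝ × ℝ, SmoothNear g 0 ∧ g 0 = 0 ∧
      (∀ᶠ p in 𝓝 0, g (F p, p.2.2, p.2.1) = p) ∧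
      ∀ᶠ p in 𝓝 0, (F (g p), (g p).2.2, (g p).2.1) = p := by
  have hΨ : SmoothNear (fun p : ℝ × ℝ × ℝ => (F p, p.2.2, p.2.1)) 0 :=
    hF.smoothNear.prodMk (.of_contDiff (by fun_prop))
  have hfderiv (w : ℝ × ℝ × ℝ) : fderiv ℝ (fun p : ℝ × ℝ × ℝ => (F p, p.2.2, p.2.1)) 0 w
      = (fderiv ℝ F 0 w, w.2.2, w.2.1) := by
    have hswap := (((ContinuousLinearEquiv.prodComm ℝ ℝ ℝ).toContinuousLinearMap.comp
      (.snd ℝ ℝ (ℝ × ℝ))).hasFDerivAt (x := (0 : ℝ × ℝ × ℝ)))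
    exact DFunLike.congr_fun
      (hF.smoothNear.differentiableAt.hasFDerivAt.prodMk hswap).fderiv w
  have hinj : Function.Injective (fderiv ℝ (fun p : ℝ × ℝ × ℝ => (F p, p.2.2, p.2.1)) 0) := by
    rw [injective_iff_map_eq_zero]
    rintro ⟨u, v, w⟩ h
    obtain ⟨h, rfl, rfl⟩ : D₁ F 0 * u + D₂ F 0 * v + D₃ F 0 * w = 0 ∧ w = 0 ∧ v = 0 := by
      simpa only [hfderiv, fderiv_apply_prod₃, Prod.mk_eq_zero] using h
    simpa [hF.D₁_ne_zero] using h
  have hinv := exists_local_inverse hΨ hinj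
  rw [show (F 0, (0 : ℝ × ℝ × ℝ).2.2, (0 : ℝ × ℝ × ℝ).2.1) = 0 by simp [hF.map_zero]] at hinv
  exact hinv

theorem IsRegular.exists_dual (hF : IsRegular F) : ∃ F', IsRegular F' ∧ IsDual F F' := by
  obtain ⟨g, hg, hg₀, hleft, hright⟩ := hF.exists_graph_inverse
  have hF'₀ : (g 0).1 = 0 := by rw [hg₀, Prod.fst_zero]
  have hdual : IsDual F fun p => (g p).1 := by
    have h₁ := eventually_of_continuousAt (a := (0 : (ℝ × ℝ) × (ℝ × ℝ)))
      (m := fun r => (r.2.2, r.2.1, r.1.1)) hleft (by fun_prop) rfl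
    have h₂ := eventually_of_continuousAt (a := (0 : (ℝ × ℝ) × (ℝ × ℝ)))
      (m := fun r => (r.1.2, r.1.1, r.2.1)) hright (by fun_prop) rfl
    filter_upwards [h₁, h₂] with ⟨⟨x, y⟩, b, a⟩ hr₁ hr₂
    obtain ⟨hy, hx, hb⟩ := by simpa only [Prod.mk.injEq] using hr₂
    refine ⟨fun h => ?_, fun h => ?_⟩
    · change y = F (a, b, x) at h
      subst h
      exact (congrArg Prod.fst hr₁).symm
    · change a = (g (y, x, b)).1 at h
      change y = F (a, b, x)
      rw [show (a, b, x) = g (y, x, b) from Prod.ext h (Prod.ext hb.symm hx.symm), hy]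
  obtain ⟨hD₁, -⟩ := (hdual.partials hF.smoothNear hg.fst hF'₀).self_of_nhds
  have hlevi := hdual.levi_eq hF.smoothNear hg.fst hF'₀
  refine ⟨_, ⟨hg.fst, hF'₀, right_ne_zero_of_mul_eq_one hD₁, fun h => ?_⟩, hdual⟩
  rw [h, zero_mul, zero_eq_neg] at hlevi
  exact hF.levi_ne_zero hlevi

theorem IsRegular.exists_isCoordChange {H K : ℝ × ℝ → ℝ × ℝ} (hF : IsRegular F)
    (hH : IsDiffeoGerm H) (hK : IsDiffeoGerm K)
    (hK₂ : D₁ F 0 * d₂ (fun q => (K q).2) 0 + D₂ F 0 * d₂ (fun q => (K q).1) 0 ≠ 0)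
    (hH₂ : d₂ (fun p => (H p).2) 0 - D₃ F 0 * d₂ (fun p => (H p).1) 0 ≠ 0) :
    ∃ G, IsRegular G ∧ IsCoordChange F G H K := by
  have hpull := hF.pull hK hK₂
  obtain ⟨G', hG', hdual⟩ := hpull.exists_dual
  have hD₃ : D₃ (pull F K) 0 = D₃ F 0 := D₃_pull hK.smoothNear hK.map_zero hF.smoothNear
  obtain ⟨e₁, e₂, -⟩ := (hdual.partials hpull.smoothNear hG'.smoothNear
    hG'.map_zero).self_of_nhds
  simp only [hG'.map_zero, Prod.fst_zero, Prod.snd_zero, Prod.mk_zero_zero, hD₃] at e₁ e₂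
  have hH₂' : D₁ G' 0 * d₂ (fun p => (H p).2) 0 + D₂ G' 0 * d₂ (fun p => (H p).1) 0 ≠ 0 := by
    refine fun h => hH₂ ?_
    linear_combination D₁ (pull F K) 0 * h - d₂ (fun p => (H p).2) 0 * e₁
      - d₂ (fun p => (H p).1) 0 * e₂
  obtain ⟨G, hG, hdual'⟩ := (hG'.pull hH hH₂').exists_dual
  exact ⟨G, hG, (isCoordChange_pull F hK).trans ((isCoordChange_pull G' hH).dual hdual.symm hdual')⟩

/-- `y'' = Q (x, y, y')` is the second-order equation solved by all leaves `x ↦ F (a, b, x)`. -/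
def IsLeafEquation (Q F : ℝ × ℝ × ℝ → ℝ) : Prop :=
  ∀ᶠ p in 𝓝 (0 : ℝ × ℝ × ℝ), D₃ (D₃ F) p = Q (p.2.2, F p, D₃ F p)

theorem IsRegular.exists_isLeafEquation (hF : IsRegular F) :
    ∃ Q, SmoothNear Q (0, 0, D₃ F 0) ∧ IsLeafEquation Q F := by
  have hF₃ := hF.smoothNear.D₃
  have hΨ : SmoothNear (fun p : ℝ × ℝ × ℝ => (p.2.2, F p, D₃ F p)) 0 :=
    .prodMk (.of_contDiff (by fun_prop)) (hF.smoothNear.prodMk hF₃)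
  have hfderiv (w : ℝ × ℝ × ℝ) : fderiv ℝ (fun p : ℝ × ℝ × ℝ => (p.2.2, F p, D₃ F p)) 0 w
      = (w.2.2, fderiv ℝ F 0 w, fderiv ℝ (D₃ F) 0 w) := by
    have hx := ((ContinuousLinearMap.snd ℝ ℝ ℝ).comp (.snd ℝ ℝ (ℝ × ℝ))).hasFDerivAt
      (x := (0 : ℝ × ℝ × ℝ))
    exact DFunLike.congr_fun (hx.prodMk (hF.smoothNear.differentiableAt.hasFDerivAt.prodMk
      hF₃.differentiableAt.hasFDerivAt)).fderiv w
  have hinj : Function.Injective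
      (fderiv ℝ (fun p : ℝ × ℝ × ℝ => (p.2.2, F p, D₃ F p)) 0) := by
    rw [injective_iff_map_eq_zero]
    rintro ⟨u, v, w⟩ h
    obtain ⟨rfl, h₁, h₂⟩ : w = 0 ∧ D₁ F 0 * u + D₂ F 0 * v + D₃ F 0 * w = 0 ∧
        D₁ (D₃ F) 0 * u + D₂ (D₃ F) 0 * v + D₃ (D₃ F) 0 * w = 0 := by
      simpa only [hfderiv, fderiv_apply_prod₃, Prod.mk_eq_zero] using h
    have hv : levi F 0 * v = 0 := by
      rw [levi]
      linear_combination D₁ F 0 * h₂ - D₁ (D₃ F) 0 * h₁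
    obtain rfl := (mul_eq_zero_iff_left hF.levi_ne_zero).1 hv
    simpa [hF.D₁_ne_zero] using h₁
  obtain ⟨g, hg, hg₀, hleft, -⟩ := exists_local_inverse hΨ hinj
  rw [show ((0 : ℝ × ℝ × ℝ).2.2, F 0, D₃ F 0) = (0, 0, D₃ F 0) by simp [hF.map_zero]] at hg hg₀
  exact ⟨_, hF₃.D₃.comp_of_eq hg hg₀, hleft.mono fun p hp => congrArg (D₃ (D₃ F)) hp.symm⟩

end Transform

/-- The cubic form `u³ T(v / u)`, where `T` is the Taylor polynomial of degree three of the
function `Q (x, y, ·)` at the slope `s`, for `m = (x, y, s)`. -/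
noncomputable def cubicForm (Q : ℝ × ℝ × ℝ → ℝ) (m : ℝ × ℝ × ℝ) (u v : ℝ) : ℝ :=
  ∑ k ∈ Finset.range 4, D₃^[k] Q m / k.factorial * u ^ (3 - k) * (v - m.2.2 * u) ^ k

/-- Chain equation for the plane projection `t ↦ (x t, y t)` of a curve in the hypersurface with
leaf parameters `(b t, a t)`: the curve satisfies the leaf equation `y'' = Q (x, y, y')`, with the
right-hand side replaced by its cubic Taylor polynomial at the slope of the leaf. -/
def IsChain (Q F : ℝ × ℝ × ℝ → ℝ) (x y b a : ℝ → ℝ) : Prop :=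
  ∀ᶠ t in 𝓝 (0 : ℝ), deriv x t * deriv (deriv y) t - deriv y t * deriv (deriv x) t =
    cubicForm Q (x t, y t, D₃ F (a t, b t, x t)) (deriv x t) (deriv y t)

section Chain

theorem SmoothNear.cubicForm {E : Type*} [NormedAddCommGroup E] [NormedSpace ℝ E]
    {Q : ℝ × ℝ × ℝ → ℝ} {m : E → ℝ × ℝ × ℝ} {u v : E → ℝ} {p : E} {m₀ : ℝ × ℝ × ℝ}
    (hQ : SmoothNear Q m₀) (hm : SmoothNear m p) (hm₀ : m p = m₀) (hu : SmoothNear u p)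
    (hv : SmoothNear v p) : SmoothNear (fun z => cubicForm Q (m z) (u z) (v z)) p := by
  have hterm (k : ℕ) : SmoothNear (fun z => D₃^[k] Q (m z) / k.factorial * u z ^ (3 - k)
      * (v z - (m z).2.2 * u z) ^ k) p :=
    ((((hQ.D₃_iterate k).comp_of_eq hm hm₀).div (.const _) (by positivity)).mul (hu.pow _)).mul
      ((hv.sub (hm.snd.snd.mul hu)).pow k)
  filter_upwards [(Finset.eventually_all (Finset.range 4)).2 fun k _ => hterm k] with z hz
  exact ContDiffAt.sum hz

theorem SmoothNear.deriv_graph {E : Type*} [NormedAddCommGroup E] [NormedSpace ℝ E] {u : ℝ → E}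
    {t : ℝ} (hu : SmoothNear u t) :
    deriv (fun s => (s, u s)) =ᶠ[𝓝 t] fun s => (1, deriv u s) := by
  filter_upwards [hu] with s hs
  exact ((hasDerivAt_id' s).prodMk (hs.differentiableAt (by simp)).hasDerivAt).deriv

theorem SmoothNear.deriv_comp_graph {E : Type*} [NormedAddCommGroup E] [NormedSpace ℝ E]
    {F : ℝ × E → ℝ} {u : ℝ → E} {t : ℝ} (hF : SmoothNear F (t, u t)) (hu : SmoothNear u t) :
    deriv (fun s => F (s, u s)) =ᶠ[𝓝 t] fun s => fderiv ℝ F (s, u s) (1, deriv u s) := by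
  have hgraph : SmoothNear (fun s => (s, u s)) t := SmoothNear.id.prodMk hu
  filter_upwards [SmoothNear.deriv_comp_eventuallyEq (c := fun s => (s, u s)) hF hgraph,
    hu.deriv_graph] with s hs hus
  rw [hs, hus]

theorem SmoothNear.deriv_deriv_comp_graph {E : Type*} [NormedAddCommGroup E] [NormedSpace ℝ E]
    {F : ℝ × E → ℝ} {u : ℝ → E} {t : ℝ} (hF : SmoothNear F (t, u t)) (hu : SmoothNear u t) :
    deriv (deriv fun s => F (s, u s)) t =
      fderiv ℝ (fderiv ℝ F) (t, u t) (1, deriv u t) (1, deriv u t)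
        + fderiv ℝ F (t, u t) (0, deriv (deriv u) t) := by
  have hgraph : SmoothNear (fun s => (s, u s)) t := SmoothNear.id.prodMk hu
  have hgraph' : deriv (deriv fun s => (s, u s)) t = (0, deriv (deriv u) t) := by
    rw [hu.deriv_graph.deriv_eq]
    exact ((hasDerivAt_const t _).prodMk hu.deriv.differentiableAt.hasDerivAt).deriv
  rw [(SmoothNear.hasDerivAt_deriv_comp (c := fun s => (s, u s)) hF hgraph).deriv,
    hgraph', hu.deriv_graph.self_of_nhds]

theorem SmoothNear.deriv_fst {u : ℝ → ℝ × ℝ} {t : ℝ} (hu : SmoothNear u t) :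
    deriv (fun s => (u s).1) =ᶠ[𝓝 t] fun s => (deriv u s).1 :=
  hu.mono fun _ hs => HasDerivAt.deriv ((hs.differentiableAt (by simp)).hasDerivAt.fst)

theorem SmoothNear.deriv_snd {u : ℝ → ℝ × ℝ} {t : ℝ} (hu : SmoothNear u t) :
    deriv (fun s => (u s).2) =ᶠ[𝓝 t] fun s => (deriv u s).2 :=
  hu.mono fun _ hs => HasDerivAt.deriv ((hs.differentiableAt (by simp)).hasDerivAt.snd)

variable {F F' Q Q' : ℝ × ℝ × ℝ → ℝ}

theorem exists_coupled_ode_solution {C₁ C₂ : ℝ × (ℝ × ℝ) × (ℝ × ℝ) → ℝ} (hF : SmoothNear F 0)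
    (hF₁ : D₁ F 0 ≠ 0) (hC₁ : SmoothNear C₁ 0) (hC₂ : SmoothNear C₂ 0) :
    ∃ u : ℝ → ℝ × ℝ, SmoothNear u 0 ∧ u 0 = 0 ∧ deriv u 0 = 0 ∧ ∀ᶠ t in 𝓝 0,
      (deriv (deriv u) t).1 = C₁ (t, u t, deriv u t) ∧
      (deriv u t).2 * deriv (deriv fun s => F (s, u s)) t
        - deriv (fun s => F (s, u s)) t * (deriv (deriv u) t).2 = C₂ (t, u t, deriv u t) := by
  let N : ℝ × (ℝ × ℝ) × (ℝ × ℝ) → ℝ := fun r =>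
    r.2.2.2 * (fderiv ℝ (fderiv ℝ F) (r.1, r.2.1) (1, r.2.2) (1, r.2.2)
      + D₂ F (r.1, r.2.1) * C₁ r) - C₂ r
  let J : ℝ × (ℝ × ℝ) × (ℝ × ℝ) → ℝ := fun r => D₁ F (r.1, r.2.1) + D₂ F (r.1, r.2.1) * r.2.2.1
  have hm : SmoothNear (fun r : ℝ × (ℝ × ℝ) × (ℝ × ℝ) => (r.1, r.2.1)) 0 :=
    .of_contDiff (by fun_prop)
  have hv : SmoothNear (fun r : ℝ × (ℝ × ℝ) × (ℝ × ℝ) => ((1 : ℝ), r.2.2)) 0 :=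
    .of_contDiff (by fun_prop)
  have hN : SmoothNear N 0 := (hv.snd.snd.mul ((((hF.fderiv.fderiv.comp_of_eq hm rfl).clm_apply
    hv).clm_apply hv).add ((hF.D₂.comp_of_eq hm rfl).mul hC₁))).sub hC₂
  have hJ : SmoothNear J 0 :=
    (hF.D₁.comp_of_eq hm rfl).add ((hF.D₂.comp_of_eq hm rfl).mul hv.snd.fst)
  have hJ₀ : J 0 ≠ 0 := by
    rwa [show J 0 = D₁ F 0 + D₂ F 0 * 0 from rfl, mul_zero, add_zero]
  -- The second relation is linear in `(deriv (deriv u)).2`, with coefficient `-J`.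
  obtain ⟨u, hu, hu₀, hu₁, hode⟩ :=
    exists_second_order_ode_solution (hC₁.prodMk (hN.div hJ hJ₀))
  have hgraph : SmoothNear (fun t => (t, u t)) 0 := SmoothNear.id.prodMk hu
  have hjet : (fun t => (t, u t, deriv u t)) 0 = 0 := by simp [hu₀, hu₁]
  refine ⟨u, hu, hu₀, hu₁, ?_⟩
  filter_upwards [hode, hu.eventually,
    eventually_of_continuousAt hF.eventually hgraph.continuousAt (by simp [hu₀]),
    eventually_of_continuousAt (hJ.continuousAt.eventually_ne hJ₀)
      (hgraph.fst.prodMk (hu.prodMk hu.deriv)).continuousAt hjet] with t ht hut hFt hJt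
  have hy'' : deriv (deriv fun s => F (s, u s)) t = fderiv ℝ (fderiv ℝ F) (t, u t) (1, deriv u t)
      (1, deriv u t) + D₂ F (t, u t) * (deriv (deriv u) t).1
        + D₃ F (t, u t) * (deriv (deriv u) t).2 := by
    rw [hFt.deriv_deriv_comp_graph hut, fderiv_apply_prod₃]; ring
  have hy' : deriv (fun s => F (s, u s)) t =
      J (t, u t, deriv u t) + D₃ F (t, u t) * (deriv u t).2 := by
    exact (hFt.deriv_comp_graph hut).self_of_nhds.trans
      ((fderiv_apply_prod₃ F _ _ _ _).trans (by rw [mul_one]; rfl))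
  have hsolved := (eq_div_iff hJt).1 (congrArg Prod.snd ht)
  rw [hy', hy'', ht]
  refine ⟨rfl, ?_⟩
  rw [ht] at hsolved
  simp only [N] at hsolved ⊢
  linear_combination -hsolved

theorem IsRegular.exists_chain (hF : IsRegular F) (hF' : SmoothNear F' 0)
    (hQ : SmoothNear Q (0, 0, D₃ F 0)) (hQ' : SmoothNear Q' (0, 0, D₃ F' 0)) :
    ∃ b x : ℝ → ℝ, SmoothNear b 0 ∧ SmoothNear x 0 ∧ b 0 = 0 ∧ x 0 = 0 ∧
      deriv b 0 = 0 ∧ deriv x 0 = 0 ∧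
      IsChain Q F x (fun t => F (t, b t, x t)) b (fun t => t) ∧
      IsChain Q' F' b (fun t => t) x (fun t => F (t, b t, x t)) := by
  have hm : SmoothNear (fun r : ℝ × (ℝ × ℝ) × (ℝ × ℝ) => (r.1, r.2.1)) 0 :=
    .of_contDiff (by fun_prop)
  have hv : SmoothNear (fun r : ℝ × (ℝ × ℝ) × (ℝ × ℝ) => ((1 : ℝ), r.2.2)) 0 :=
    .of_contDiff (by fun_prop)
  have hFm := hF.smoothNear.comp_of_eq hm rfl
  have hF₀ : F (0 : ℝ × ℝ × ℝ) = 0 := hF.map_zero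
  have hC₁ : SmoothNear (fun r : ℝ × (ℝ × ℝ) × (ℝ × ℝ) => -cubicForm Q'
      (r.2.1.1, r.1, D₃ F' (F (r.1, r.2.1), r.2.1.2, r.2.1.1)) r.2.2.1 1) 0 := by
    refine (hQ'.cubicForm (hm.snd.fst.prodMk (hm.fst.prodMk (hF'.D₃.comp_of_eq
      (hFm.prodMk (hm.snd.snd.prodMk hm.snd.fst)) ?_))) ?_ hv.snd.fst (.const 1)).neg
    · exact Prod.ext hF₀ rfl
    · exact Prod.ext rfl (Prod.ext rfl (congrArg (D₃ F') (Prod.ext hF₀ rfl)))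
  have hC₂ : SmoothNear (fun r : ℝ × (ℝ × ℝ) × (ℝ × ℝ) => cubicForm Q
      (r.2.1.2, F (r.1, r.2.1), D₃ F (r.1, r.2.1)) r.2.2.2
      (fderiv ℝ F (r.1, r.2.1) (1, r.2.2))) 0 :=
    hQ.cubicForm (hm.snd.snd.prodMk (hFm.prodMk (hF.smoothNear.D₃.comp_of_eq hm rfl)))
      (Prod.ext rfl (Prod.ext hF₀ rfl)) hv.snd.snd
      ((hF.smoothNear.fderiv.comp_of_eq hm rfl).clm_apply hv)
  obtain ⟨u, hu, hu₀, hu₁, hode⟩ := exists_coupled_ode_solution hF.smoothNear hF.D₁_ne_zero hC₁ hC₂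
  have hb : deriv (fun t => (u t).1) =ᶠ[𝓝 0] fun t => (deriv u t).1 := hu.deriv_fst
  have hx : deriv (fun t => (u t).2) =ᶠ[𝓝 0] fun t => (deriv u t).2 := hu.deriv_snd
  have hy : deriv (fun t => F (t, u t)) =ᶠ[𝓝 0] fun t => fderiv ℝ F (t, u t) (1, deriv u t) :=
    SmoothNear.deriv_comp_graph (hu₀ ▸ hF.smoothNear) hu
  refine ⟨fun t => (u t).1, fun t => (u t).2, hu.fst, hu.snd, congrArg Prod.fst hu₀,
    congrArg Prod.snd hu₀, hb.self_of_nhds.trans (congrArg Prod.fst hu₁),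
    hx.self_of_nhds.trans (congrArg Prod.snd hu₁), ?_, ?_⟩
  · filter_upwards [hode, hx, hx.deriv, hu.deriv.deriv_snd, hy] with t ht ht₁ ht₂ ht₃ ht₄
    rw [ht₁, ht₂, ht₃]
    exact ht.2.trans (congrArg _ ht₄.symm)
  · filter_upwards [hode, hb, hb.deriv, hu.deriv.deriv_fst] with t ht ht₁ ht₂ ht₃
    rw [ht₂, ht₃, ht₁, ht.1]
    simp

end Chain

/-- The map `(r, s) ↦ (x, y)` to the point with abscissa `x = u s + r` on the leaf of `F` with
parameters `a = α s`, `b = β s`. -/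
def leafMap (F : ℝ × ℝ × ℝ → ℝ) (α β u : ℝ → ℝ) (q : ℝ × ℝ) : ℝ × ℝ :=
  (u q.2 + q.1, F (α q.2, β q.2, u q.2 + q.1))

/-- `F` is flat if the leaf `b = 0` of parameter `a` is the line `y = a` and all leaves of
parameter `a` pass through the point `(0, a)`. -/
def IsFlat (F : ℝ × ℝ × ℝ → ℝ) : Prop :=
  ∀ᶠ p in 𝓝 (0 : ℝ × ℝ × ℝ), F (p.1, 0, p.2.2) = p.1 ∧ F (p.1, p.2.1, 0) = p.1

section Straightening

variable {F F' G : ℝ × ℝ × ℝ → ℝ} {H K : ℝ × ℝ → ℝ × ℝ}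

section LeafMap

variable {α β u : ℝ → ℝ} (hF : SmoothNear F 0) (hα : SmoothNear α 0) (hβ : SmoothNear β 0)
  (hu : SmoothNear u 0) (hα₀ : α 0 = 0) (hβ₀ : β 0 = 0) (hu₀ : u 0 = 0)

include hF hα hβ hu hα₀ hβ₀ hu₀

protected theorem SmoothNear.leafMap : SmoothNear (leafMap F α β u) 0 := by
  have hsnd : SmoothNear (fun q : ℝ × ℝ => q.2) 0 := SmoothNear.id.snd
  have hx : SmoothNear (fun q : ℝ × ℝ => u q.2 + q.1) 0 :=
    (hu.comp_of_eq hsnd rfl).add SmoothNear.id.fst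
  exact hx.prodMk (hF.comp_of_eq ((hα.comp_of_eq hsnd rfl).prodMk
    ((hβ.comp_of_eq hsnd rfl).prodMk hx)) (by simp [hα₀, hβ₀, hu₀]))

theorem d₁_leafMap_fst : d₁ (fun q => (leafMap F α β u q).1) 0 = 1 :=
  (hasDerivAt_d₁ (hF.leafMap hα hβ hu hα₀ hβ₀ hu₀).fst).unique
    ((hasDerivAt_id' (0 : ℝ)).const_add (u 0))

theorem d₂_leafMap_fst : d₂ (fun q => (leafMap F α β u q).1) 0 = deriv u 0 :=
  (hasDerivAt_d₂ (hF.leafMap hα hβ hu hα₀ hβ₀ hu₀).fst).unique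
    (hu.differentiableAt.hasDerivAt.add_const _)

theorem d₂_leafMap_snd : d₂ (fun q => (leafMap F α β u q).2) 0 =
    D₁ F 0 * deriv α 0 + D₂ F 0 * deriv β 0 + D₃ F 0 * deriv u 0 := by
  have hcurve : (α 0, β 0, u 0 + 0) = (0 : ℝ × ℝ × ℝ) := by simp [hα₀, hβ₀, hu₀]
  have h := (hasDerivAt_d₂ (hF.leafMap hα hβ hu hα₀ hβ₀ hu₀).snd).unique
    (hasDerivAt_comp_curve₃ (F := F) (hcurve.symm ▸ hF) hα.differentiableAt.hasDerivAt
      hβ.differentiableAt.hasDerivAt (hu.differentiableAt.hasDerivAt.add_const 0))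
  rwa [hcurve] at h

theorem isDiffeoGerm_leafMap (hF₀ : F 0 = 0) (hα₁ : D₁ F 0 * deriv α 0 ≠ 0)
    (hβ₁ : deriv β 0 = 0) (hu₁ : deriv u 0 = 0) : IsDiffeoGerm (leafMap F α β u) := by
  have hsmooth := hF.leafMap hα hβ hu hα₀ hβ₀ hu₀
  refine ⟨hsmooth, by simp [leafMap, hα₀, hβ₀, hu₀, show F (0, 0, 0) = 0 from hF₀], ?_⟩
  rw [det_fderiv_prodMk hsmooth.fst hsmooth.snd, d₁_leafMap_fst hF hα hβ hu hα₀ hβ₀ hu₀,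
    d₂_leafMap_fst hF hα hβ hu hα₀ hβ₀ hu₀, d₂_leafMap_snd hF hα hβ hu hα₀ hβ₀ hu₀, hβ₁, hu₁]
  simpa using hα₁

end LeafMap

theorem IsCoordChange.graph_eq (h : IsCoordChange F G H K)
    {m : ℝ × ℝ × ℝ → (ℝ × ℝ) × (ℝ × ℝ)} (hm : ContinuousAt m 0) (hm₀ : m 0 = 0)
    (hinc : ∀ᶠ p in 𝓝 (0 : ℝ × ℝ × ℝ), Incident F (H (m p).1) (K (m p).2)) :
    ∀ᶠ p in 𝓝 0, G ((m p).2.2, (m p).2.1, (m p).1.1) = (m p).1.2 := by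
  filter_upwards [hinc, eventually_of_continuousAt h.incident_iff hm hm₀] with p hp hp'
  exact (hp'.1 hp).symm

section Curve

variable {b x y : ℝ → ℝ} (hdual : IsDual F F') (hb : SmoothNear b 0) (hx : SmoothNear x 0)
  (hy : SmoothNear y 0) (hb₀ : b 0 = 0) (hx₀ : x 0 = 0) (hy₀ : y 0 = 0)

include hdual hb hx hy hb₀ hx₀ hy₀

theorem leafMap_dual_zero (hxy : ∀ t, y t = F (t, b t, x t)) :
    ∀ᶠ t in 𝓝 (0 : ℝ), leafMap F' y x b (0, t) = (b t, t) := by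
  have hcont : ContinuousAt (fun t => ((x t, y t), (b t, t))) 0 :=
    ((hx.prodMk hy).prodMk (hb.prodMk .id)).continuousAt
  filter_upwards [eventually_of_continuousAt hdual hcont (by simp [hx₀, hy₀, hb₀])] with t ht
  have hincident : t = F' (y t, x t, b t) := ht.1 (hxy t)
  simp only [leafMap, add_zero, ← hincident]

theorem IsCoordChange.isFlat (hxy : ∀ t, y t = F (t, b t, x t))
    (h : IsCoordChange F G (leafMap F (fun t => t) b x) (leafMap F' y x b)) : IsFlat G := by
  have hdual₀ := leafMap_dual_zero hdual hb hx hy hb₀ hx₀ hy₀ hxy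
  refine (h.graph_eq (m := fun p => ((p.2.2, p.1), (0, p.1))) (by fun_prop) rfl ?_).and
    (h.graph_eq (m := fun p => ((0, p.1), (p.2.1, p.1))) (by fun_prop) rfl ?_)
  · filter_upwards [eventually_of_continuousAt hdual₀ continuousAt_fst rfl] with p hp
    rw [hp]
    rfl
  · have hcont : ContinuousAt (fun p : ℝ × ℝ × ℝ =>
        ((x p.1, y p.1), leafMap F' y x b (p.2.1, p.1))) 0 :=
      ((hx.prodMk hy).continuousAt.comp_of_eq continuousAt_fst rfl).prodMk
        (h.right.smoothNear.continuousAt.comp_of_eq (by fun_prop) rfl)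
    filter_upwards [eventually_of_continuousAt hdual hcont
      (Prod.ext (by simp [hx₀, hy₀]) h.right.map_zero)] with p hp
    refine (congrArg₂ (Incident F) ?_ rfl).mp (hp.2 rfl)
    simp only [leafMap, add_zero, hxy]

end Curve

theorem IsRegular.exists_isFlat_of_curve {b x : ℝ → ℝ} (hF : IsRegular F) (hF' : IsRegular F')
    (hdual : IsDual F F') (hb : SmoothNear b 0) (hx : SmoothNear x 0) (hb₀ : b 0 = 0)
    (hx₀ : x 0 = 0) (hb₁ : deriv b 0 = 0) (hx₁ : deriv x 0 = 0) :
    ∃ G H K, IsRegular G ∧ IsFlat G ∧ IsCoordChange F G H K ∧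
      (∀ t, H (0, t) = (x t, F (t, b t, x t))) ∧ ∀ᶠ t in 𝓝 0, K (0, t) = (b t, t) := by
  let y : ℝ → ℝ := fun t => F (t, b t, x t)
  have hcurve : SmoothNear (fun t => (t, b t, x t)) 0 := SmoothNear.id.prodMk (hb.prodMk hx)
  have hcurve₀ : (0, b 0, x 0) = (0 : ℝ × ℝ × ℝ) := by simp [hb₀, hx₀]
  have hy : SmoothNear y 0 := hF.smoothNear.comp_of_eq hcurve hcurve₀
  have hy₀ : y 0 = 0 := (congrArg F hcurve₀).trans hF.map_zero
  have hy₁ : deriv y 0 = D₁ F 0 := by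
    have h := (hasDerivAt_comp_curve₃ (F := F) (hcurve₀.symm ▸ hF.smoothNear) (hasDerivAt_id' 0)
      hb.differentiableAt.hasDerivAt hx.differentiableAt.hasDerivAt).deriv
    rwa [hcurve₀, hb₁, hx₁, mul_one, mul_zero, mul_zero, add_zero, add_zero] at h
  have hH : IsDiffeoGerm (leafMap F (fun t => t) b x) := isDiffeoGerm_leafMap hF.smoothNear .id
    hb hx rfl hb₀ hx₀ hF.map_zero (by simpa using hF.D₁_ne_zero) hb₁ hx₁
  have hK : IsDiffeoGerm (leafMap F' y x b) := isDiffeoGerm_leafMap hF'.smoothNear hy hx hb hy₀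
    hx₀ hb₀ hF'.map_zero (hy₁ ▸ mul_ne_zero hF'.D₁_ne_zero hF.D₁_ne_zero) hx₁ hb₁
  obtain ⟨G, hG, hchange⟩ := hF.exists_isCoordChange hH hK
    (by
      rw [d₂_leafMap_fst hF'.smoothNear hy hx hb hy₀ hx₀ hb₀,
        d₂_leafMap_snd hF'.smoothNear hy hx hb hy₀ hx₀ hb₀, hy₁, hx₁, hb₁]
      simpa using ⟨hF.D₁_ne_zero, hF'.D₁_ne_zero, hF.D₁_ne_zero⟩)
    (by
      rw [d₂_leafMap_fst hF.smoothNear .id hb hx rfl hb₀ hx₀,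
        d₂_leafMap_snd hF.smoothNear .id hb hx rfl hb₀ hx₀, hx₁, hb₁]
      simpa using hF.D₁_ne_zero)
  exact ⟨G, _, _, hG, hchange.isFlat hdual hb hx hy hb₀ hx₀ hy₀
    fun _ => rfl, hchange, fun t => by simp [leafMap],
    leafMap_dual_zero hdual hb hx hy hb₀ hx₀ hy₀ fun _ => rfl⟩

end Straightening

section Flat

variable {F F' : ℝ × ℝ × ℝ → ℝ}

theorem IsFlat.partials_left (h : IsFlat F) (hF : SmoothNear F 0) : ∀ᶠ p in 𝓝 (0 : ℝ × ℝ × ℝ),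
    D₁ F (p.1, 0, p.2.2) = 1 ∧ D₃ F (p.1, 0, p.2.2) = 0 := by
  filter_upwards [h.eventually_nhds, eventually_of_continuousAt (m := fun p => (p.1, 0, p.2.2))
    hF.eventually (by fun_prop) rfl] with p hp hFp
  have hcont₁ : ContinuousAt (fun s => (s, p.2)) p.1 := by fun_prop
  have hcont₃ : ContinuousAt (fun s => (p.1, p.2.1, s)) p.2.2 := by fun_prop
  exact ⟨(hasDerivAt_D₁ hFp).unique ((hasDerivAt_id' p.1).congr_of_eventuallyEq
      ((hcont₁.eventually hp).mono fun _ hs => hs.1)),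
    (hasDerivAt_D₃ hFp).unique ((hasDerivAt_const p.2.2 p.1).congr_of_eventuallyEq
      ((hcont₃.eventually hp).mono fun _ hs => hs.1))⟩

theorem IsFlat.partials_right (h : IsFlat F) (hF : SmoothNear F 0) : ∀ᶠ p in 𝓝 (0 : ℝ × ℝ × ℝ),
    D₁ F (p.1, p.2.1, 0) = 1 ∧ D₂ F (p.1, p.2.1, 0) = 0 := by
  filter_upwards [h.eventually_nhds, eventually_of_continuousAt (m := fun p => (p.1, p.2.1, 0))
    hF.eventually (by fun_prop) rfl] with p hp hFp
  have hcont₁ : ContinuousAt (fun s => (s, p.2)) p.1 := by fun_prop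
  have hcont₂ : ContinuousAt (fun s => (p.1, s, p.2.2)) p.2.1 := by fun_prop
  exact ⟨(hasDerivAt_D₁ hFp).unique ((hasDerivAt_id' p.1).congr_of_eventuallyEq
      ((hcont₁.eventually hp).mono fun _ hs => hs.2)),
    (hasDerivAt_D₂ hFp).unique ((hasDerivAt_const p.2.1 p.1).congr_of_eventuallyEq
      ((hcont₂.eventually hp).mono fun _ hs => hs.2))⟩

theorem IsFlat.levi_eq (h : IsFlat F) (hF : SmoothNear F 0) : levi F 0 = D₂ (D₃ F) 0 := by
  obtain ⟨e₁, e₂⟩ := (h.partials_right hF).self_of_nhds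
  simp only [Prod.fst_zero, Prod.snd_zero, Prod.mk_zero_zero] at e₁ e₂
  rw [levi, e₁, e₂, one_mul, zero_mul, sub_zero]

theorem IsFlat.dual (h : IsFlat F) (hdual : IsDual F F') (hF' : SmoothNear F' 0)
    (hF'₀ : F' 0 = 0) : IsFlat F' := by
  have happly := hdual.apply_dual hF' hF'₀
  have hcont₁ : ContinuousAt (fun p : ℝ × ℝ × ℝ => (p.1, (0 : ℝ), p.2.2)) 0 := by fun_prop
  have hcont₂ : ContinuousAt (fun p : ℝ × ℝ × ℝ => (p.1, p.2.1, (0 : ℝ))) 0 := by fun_prop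
  have h₁ := eventually_of_continuousAt h ((hF'.continuousAt.comp_of_eq hcont₁ rfl).prodMk
    (hcont₁.snd.snd.prodMk hcont₁.snd.fst)) (Prod.ext hF'₀ rfl)
  have h₂ := eventually_of_continuousAt h ((hF'.continuousAt.comp_of_eq hcont₂ rfl).prodMk
    (hcont₂.snd.snd.prodMk hcont₂.snd.fst)) (Prod.ext hF'₀ rfl)
  filter_upwards [eventually_of_continuousAt happly hcont₁ rfl,
    eventually_of_continuousAt happly hcont₂ rfl, h₁, h₂] with p hp₁ hp₂ hflat₁ hflat₂
  exact ⟨hflat₁.2.symm.trans hp₁, hflat₂.1.symm.trans hp₂⟩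

theorem IsFlat.D₂_dual (h : IsFlat F) (hdual : IsDual F F') (hF : SmoothNear F 0)
    (hF' : SmoothNear F' 0) (hF'₀ : F' 0 = 0) :
    ∀ᶠ p in 𝓝 (0 : ℝ × ℝ × ℝ), D₂ F' (p.1, 0, p.2.2) = -D₃ F (p.1, p.2.2, 0) := by
  have hpartials := hdual.partials hF hF' hF'₀
  have hcont : ContinuousAt (fun p : ℝ × ℝ × ℝ => (p.1, (0 : ℝ), p.2.2)) 0 := by fun_prop
  filter_upwards [eventually_of_continuousAt hpartials hcont rfl,
    h.dual hdual hF' hF'₀, eventually_of_continuousAt (m := fun p => (p.1, p.2.2, p.2.1))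
    (h.partials_right hF) (by fun_prop) rfl] with p hp hflat hone
  simp only [hflat.1, hone.1, one_mul] at hp
  exact eq_neg_of_add_eq_zero_left hp.2.1

theorem IsFlat.D₃_dual (h : IsFlat F) (hdual : IsDual F F') (hF : SmoothNear F 0)
    (hF' : SmoothNear F' 0) (hF'₀ : F' 0 = 0) :
    ∀ᶠ p in 𝓝 (0 : ℝ × ℝ × ℝ), D₃ F' (p.1, p.2.1, 0) = -D₂ F (p.1, 0, p.2.1) := by
  have hpartials := hdual.partials hF hF' hF'₀
  have hcont : ContinuousAt (fun p : ℝ × ℝ × ℝ => (p.1, p.2.1, (0 : ℝ))) 0 := by fun_prop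
  filter_upwards [eventually_of_continuousAt hpartials hcont rfl,
    h.dual hdual hF' hF'₀, eventually_of_continuousAt (m := fun p => (p.1, p.2.2, p.2.1))
    (h.partials_left hF) (by fun_prop) rfl] with p hp hflat hone
  simp only [hflat.2, hone.1, one_mul] at hp
  exact eq_neg_of_add_eq_zero_left hp.2.2

theorem IsFlat.exists_slope_parametrization {ε : ℝ} (h : IsFlat F) (hF : IsRegular F)
    (hε : ε ≠ 0) : ∃ K, IsDiffeoGerm K ∧ ∀ᶠ q in 𝓝 (0 : ℝ × ℝ),
      (K q).2 = q.2 ∧ D₃ F (q.2, (K q).1, 0) = ε * q.1 ∧ K (0, q.2) = (0, q.2) := by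
  have hslice : SmoothNear (fun q : ℝ × ℝ => (q.2, q.1, (0 : ℝ))) 0 := .of_contDiff (by fun_prop)
  have hslope : SmoothNear (fun q : ℝ × ℝ => D₃ F (q.2, q.1, 0) / ε) 0 :=
    (hF.smoothNear.D₃.comp_of_eq hslice rfl).div (.const ε) hε
  have hzero : ∀ᶠ q in 𝓝 (0 : ℝ × ℝ), D₃ F (q.2, 0, 0) = 0 :=
    (eventually_of_continuousAt (h.partials_left hF.smoothNear) hslice.continuousAt rfl).mono
      fun q hq => hq.2
  have hd₁ : d₁ (fun q => D₃ F (q.2, q.1, 0) / ε) 0 = D₂ (D₃ F) 0 / ε :=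
    (hasDerivAt_d₁ hslope).unique ((hasDerivAt_D₂ (F := D₃ F) hF.smoothNear.D₃).div_const ε)
  have hΦ : IsDiffeoGerm fun q : ℝ × ℝ => (D₃ F (q.2, q.1, 0) / ε, q.2) := by
    refine .prodMk hslope SmoothNear.id.snd ?_ rfl ?_
    · exact (congrArg (· / ε) hzero.self_of_nhds).trans (zero_div ε)
    · have hlevi := h.levi_eq hF.smoothNear ▸ hF.levi_ne_zero
      rw [hd₁]
      simpa [d₁, d₂, fderiv_snd] using ⟨hlevi, hε⟩
  obtain ⟨K, hK, hleft, hright⟩ := hΦ.exists_inverse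
  refine ⟨K, hK, ?_⟩
  filter_upwards [hright, hzero, eventually_of_continuousAt (m := fun q : ℝ × ℝ => ((0 : ℝ), q.2))
    hleft (by fun_prop) rfl] with q hq hq₀ hqK
  obtain ⟨hq₁, hq₂⟩ := Prod.ext_iff.1 hq
  simp only at hq₁ hq₂ hqK
  rw [hq₂, div_eq_iff hε, mul_comm] at hq₁
  rw [hq₀, zero_div] at hqK
  exact ⟨hq₂, hq₁, hqK⟩

protected theorem IsFlat.pull {K : ℝ × ℝ → ℝ × ℝ} (h : IsFlat F) (hK : IsDiffeoGerm K)
    (hK₂ : ∀ᶠ q in 𝓝 0, (K q).2 = q.2) (hK₀ : ∀ᶠ t in 𝓝 (0 : ℝ), K (0, t) = (0, t)) :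
    IsFlat (pull F K) := by
  have hcont : ContinuousAt (fun p : ℝ × ℝ × ℝ => (p.2.1, p.1)) 0 := by fun_prop
  have hcont' : ContinuousAt (fun p : ℝ × ℝ × ℝ => K (p.2.1, p.1)) 0 :=
    hK.smoothNear.continuousAt.comp_of_eq hcont rfl
  have hcont'' : ContinuousAt (fun p : ℝ × ℝ × ℝ => p.2.2) 0 := by fun_prop
  filter_upwards [h, eventually_of_continuousAt h (hcont'.snd.prodMk (hcont'.fst.prodMk hcont''))
    (congrArg (fun z : ℝ × ℝ => (z.2, z.1, (0 : ℝ))) hK.map_zero),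
    eventually_of_continuousAt hK₂ hcont rfl, eventually_of_continuousAt hK₀ continuousAt_fst rfl]
    with p hp hpK hp₂ hp₀
  refine ⟨?_, hpK.2.trans hp₂⟩
  rw [ParaCR.pull, hp₀]
  exact hp.1

theorem D₂_pull_mul_of_slope {K : ℝ × ℝ → ℝ × ℝ} {ε : ℝ} (hF : SmoothNear F 0)
    (hK : IsDiffeoGerm K) (h : ∀ᶠ q in 𝓝 (0 : ℝ × ℝ),
      (K q).2 = q.2 ∧ D₃ F (q.2, (K q).1, 0) = ε * q.1 ∧ K (0, q.2) = (0, q.2)) :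
    ∀ᶠ p in 𝓝 (0 : ℝ × ℝ × ℝ),
      D₂ (pull F K) (p.1, 0, p.2.2) * D₂ (D₃ F) (p.1, 0, 0) = ε * D₂ F (p.1, 0, p.2.2) := by
  have hcont : ContinuousAt (fun p : ℝ × ℝ × ℝ => ((0 : ℝ), p.1)) 0 := by fun_prop
  filter_upwards [eventually_of_continuousAt h.eventually_nhds hcont rfl,
    eventually_of_continuousAt hK.smoothNear.eventually hcont rfl,
    eventually_of_continuousAt (m := fun p : ℝ × ℝ × ℝ => (p.1, (0 : ℝ), (0 : ℝ)))
      hF.D₃.eventually (by fun_prop) rfl,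
    eventually_of_continuousAt (m := fun p : ℝ × ℝ × ℝ => (p.1, (0 : ℝ), p.2.2))
      hF.eventually (by fun_prop) rfl] with ⟨a, _, x⟩ hslope hKa hF₃a hFa
  have hKa₀ : K (0, a) = (0, a) := hslope.self_of_nhds.2.2
  have hd₁ : d₁ (fun q => (K q).2) (0, a) = 0 := by
    have hK₂ : (fun q => (K q).2) =ᶠ[𝓝 (0, a)] Prod.snd := hslope.mono fun q hq => hq.1
    rw [d₁, hK₂.fderiv_eq, fderiv_snd, ContinuousLinearMap.coe_snd']
  have hlinear : (fun s => pull (D₃ F) K (a, s, 0)) =ᶠ[𝓝 0] fun s => ε * s := by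
    have hcont' : ContinuousAt (fun s : ℝ => (s, a)) 0 := by fun_prop
    filter_upwards [hcont'.eventually hslope] with s hs
    rw [pull, hs.1, hs.2.1]
  have hmixed : D₂ (D₃ F) (a, 0, 0) * d₁ (fun q => (K q).1) (0, a) = ε := by
    have hderiv := (hasDerivAt_D₂ (SmoothNear.pull (p := (a, 0, 0)) hKa hKa₀ hF₃a)).unique
      ((hasDerivAt_const_mul ε).congr_of_eventuallyEq hlinear)
    rwa [D₂_pull hKa hKa₀ hF₃a, hd₁, mul_zero, zero_add] at hderiv
  rw [D₂_pull hKa hKa₀ hFa, hd₁, ← hmixed]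
  ring

theorem IsFlat.exists_half_normalization {ε : ℝ} (h : IsFlat F) (hF : IsRegular F) (hε : ε ≠ 0) :
    ∃ G K, IsRegular G ∧ IsFlat G ∧ IsCoordChange F G (fun p => p) K ∧
      (∀ᶠ t in 𝓝 (0 : ℝ), K (0, t) = (0, t)) ∧
      ∀ᶠ p in 𝓝 (0 : ℝ × ℝ × ℝ), D₃ G (p.1, p.2.1, 0) = ε * p.2.1 ∧
        D₂ G (p.1, 0, p.2.2) * D₂ (D₃ F) (p.1, 0, 0) = ε * D₂ F (p.1, 0, p.2.2) := by
  obtain ⟨K, hK, hslope⟩ := h.exists_slope_parametrization hF hε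
  have hK₀ : ∀ᶠ t in 𝓝 (0 : ℝ), K (0, t) = (0, t) :=
    (eventually_of_continuousAt (m := fun t : ℝ => ((0 : ℝ), t)) hslope (by fun_prop) rfl).mono
      fun t ht => ht.2.2
  have hK₂ : (fun q => (K q).2) =ᶠ[𝓝 0] Prod.snd := hslope.mono fun q hq => hq.1
  refine ⟨pull F K, K, IsRegular.pull hF hK ?_, h.pull hK hK₂ hK₀, isCoordChange_pull F hK,
    hK₀, ?_⟩
  · obtain ⟨e₁, e₂⟩ := (h.partials_right hF.smoothNear).self_of_nhds
    rw [show D₁ F 0 = 1 from e₁, show D₂ F 0 = 0 from e₂, d₂, hK₂.fderiv_eq, fderiv_snd]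
    simp
  have hcont : ContinuousAt (fun p : ℝ × ℝ × ℝ => (p.1, p.2.1, (0 : ℝ))) 0 := by fun_prop
  have hcont' : ContinuousAt (fun p : ℝ × ℝ × ℝ => (p.2.1, p.1)) 0 := by fun_prop
  filter_upwards [eventually_of_continuousAt (D₃_pull_eventuallyEq hK hF.smoothNear) hcont rfl,
    eventually_of_continuousAt hslope hcont' rfl,
    D₂_pull_mul_of_slope hF.smoothNear hK hslope] with p hpull hp hp₂
  exact ⟨hpull.trans (by rw [pull, hp.1, hp.2.1]), hp₂⟩

/-- Flatness together with first derivatives `b` and `x` along `x = 0` and `b = 0`: conditions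
(i) and (ii) of the normal form for `F = a + b x + f`. -/
structure IsPrenormal (F : ℝ × ℝ × ℝ → ℝ) : Prop where
  isFlat : IsFlat F
  D₃_eq : ∀ᶠ p in 𝓝 (0 : ℝ × ℝ × ℝ), D₃ F (p.1, p.2.1, 0) = p.2.1
  D₂_eq : ∀ᶠ p in 𝓝 (0 : ℝ × ℝ × ℝ), D₂ F (p.1, 0, p.2.2) = p.2.2

theorem IsFlat.exists_isPrenormal (h : IsFlat F) (hF : IsRegular F) :
    ∃ G H K, IsRegular G ∧ IsPrenormal G ∧ IsCoordChange F G H K ∧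
      (∀ᶠ t in 𝓝 (0 : ℝ), H (0, t) = (0, t)) ∧ ∀ᶠ t in 𝓝 (0 : ℝ), K (0, t) = (0, t) := by
  obtain ⟨F₁, K, hF₁, hflat₁, hchange, hK, hhalf⟩ := h.exists_half_normalization hF one_ne_zero
  obtain ⟨F₂, hF₂, hdual⟩ := hF₁.exists_dual
  have hflat₂ := hflat₁.dual hdual hF₂.smoothNear hF₂.map_zero
  obtain ⟨F₃, H, hF₃, hflat₃, hchange', hH, hhalf'⟩ :=
    hflat₂.exists_half_normalization hF₂ (neg_ne_zero.2 one_ne_zero)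
  obtain ⟨G, hG, hdual'⟩ := hF₃.exists_dual
  have hcont : ContinuousAt (fun p : ℝ × ℝ × ℝ => (p.1, p.2.2, p.2.1)) 0 := by fun_prop
  have hswap {P : ℝ × ℝ × ℝ → Prop} (hP : ∀ᶠ p in 𝓝 0, P p) :
      ∀ᶠ p : ℝ × ℝ × ℝ in 𝓝 0, P (p.1, p.2.2, p.2.1) := eventually_of_continuousAt hP hcont rfl
  have hD₂F₂ : ∀ᶠ p in 𝓝 (0 : ℝ × ℝ × ℝ), D₂ F₂ (p.1, 0, p.2.2) = -p.2.2 := by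
    filter_upwards [hflat₁.D₂_dual hdual hF₁.smoothNear hF₂.smoothNear hF₂.map_zero, hswap hhalf]
      with p hp hp'
    rw [hp, hp'.1, one_mul]
  have hD₂D₃F₂ : ∀ᶠ p in 𝓝 (0 : ℝ × ℝ × ℝ), D₂ (D₃ F₂) (p.1, 0, 0) = -1 := by
    have hcont₁ : ContinuousAt (fun p : ℝ × ℝ × ℝ => (p.1, (0 : ℝ), (0 : ℝ))) 0 := by fun_prop
    filter_upwards [eventually_of_continuousAt hD₂F₂.eventually_nhds hcont₁ rfl,
      eventually_of_continuousAt hF₂.smoothNear.eventually hcont₁ rfl] with p hp hFp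
    have hcont₃ : ContinuousAt (fun s : ℝ => (p.1, (0 : ℝ), s)) 0 := by fun_prop
    rw [D₂_D₃_comm hFp]
    exact (hasDerivAt_D₃ hFp.D₂).unique
      ((hasDerivAt_neg' 0).congr_of_eventuallyEq (hcont₃.eventually hp))
  refine ⟨G, H, K, hG, ⟨hflat₃.dual hdual' hG.smoothNear hG.map_zero, ?_, ?_⟩,
    hchange.trans (hchange'.dual hdual.symm hdual'), hH, hK⟩
  · filter_upwards [hflat₃.D₃_dual hdual' hF₃.smoothNear hG.smoothNear hG.map_zero,
      hswap hhalf', hswap hD₂D₃F₂, hswap hD₂F₂] with p hp hp₁ hp₂ hp₃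
    rw [hp₂, hp₃] at hp₁
    rw [hp]
    linear_combination hp₁.2
  · filter_upwards [hflat₃.D₂_dual hdual' hF₃.smoothNear hG.smoothNear hG.map_zero, hswap hhalf']
      with p hp hp'
    rw [hp, hp'.1]
    ring

theorem IsPrenormal.D₃_D₃_dual (h : IsPrenormal F) (hdual : IsDual F F') (hF : SmoothNear F 0)
    (hF' : SmoothNear F' 0) (hF'₀ : F' 0 = 0) : ∀ᶠ p in 𝓝 (0 : ℝ × ℝ × ℝ),
      D₃ (D₃ F') (p.1, p.2.1, 0) = -D₂ (D₂ F) (p.1, 0, p.2.1) := by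
  have hcont : ContinuousAt (fun p : ℝ × ℝ × ℝ => (p.1, p.2.1, (0 : ℝ))) 0 := by fun_prop
  have hswap : ContinuousAt (fun p : ℝ × ℝ × ℝ => (p.1, (0 : ℝ), p.2.1)) 0 := by fun_prop
  filter_upwards [h.isFlat.dual hdual hF' hF'₀, eventually_of_continuousAt hF'.eventually hcont rfl,
    eventually_of_continuousAt (hdual.partials hF hF' hF'₀).eventually_nhds hcont rfl,
    eventually_of_continuousAt (h.isFlat.partials_left hF).eventually_nhds hswap rfl,
    eventually_of_continuousAt h.D₂_eq.eventually_nhds hswap rfl,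
    eventually_of_continuousAt hF.eventually hswap rfl]
    with ⟨y, x, b⟩ hflat hF'p hpartials hD₁ hD₂ hFp
  have hcont₁ : ContinuousAt (fun s : ℝ => (s, (0 : ℝ), x)) y := by fun_prop
  have hD₁D₁ : D₁ (D₁ F) (y, 0, x) = 0 := (hasDerivAt_D₁ hFp.D₁).unique
    ((hasDerivAt_const y 1).congr_of_eventuallyEq
      ((hcont₁.eventually hD₁).mono fun _ hs => hs.1))
  have hD₁D₂ : D₁ (D₂ F) (y, 0, x) = 0 := (hasDerivAt_D₁ hFp.D₂).unique
    ((hasDerivAt_const y x).congr_of_eventuallyEq (hcont₁.eventually hD₂))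
  have hD₂D₁ : D₂ (D₁ F) (y, 0, x) = D₁ (D₂ F) (y, 0, x) := fderiv_fderiv_apply_comm hFp _ _
  have hcont₃ : ContinuousAt (fun s : ℝ => (y, x, s)) 0 := by fun_prop
  have hsum := (((hasDerivAt_D₃ (hF'p.comp_dual hflat.2 hFp.D₁)).mul
    (hasDerivAt_D₃ hF'p.D₃)).add (hasDerivAt_D₃ (hF'p.comp_dual hflat.2 hFp.D₂))).unique
    ((hasDerivAt_const 0 0).congr_of_eventuallyEq
      ((hcont₃.eventually hpartials).mono fun _ hs => hs.2.2))
  simp only [D₃_comp_dual hF'p hflat.2 hFp.D₁, D₃_comp_dual hF'p hflat.2 hFp.D₂, hD₁D₁, hD₂D₁,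
    hD₁D₂, hflat.2, hD₁.self_of_nhds.1] at hsum
  linear_combination hsum

end Flat

section ThirdDerivative

theorem iteratedDeriv_cubic (c₀ c₁ c₂ c₃ : ℝ) {f : ℝ → ℝ}
    (hf : ∀ᶠ t in 𝓝 0, f t = c₀ + c₁ * t + c₂ * t ^ 2 + c₃ * t ^ 3) :
    f 0 = c₀ ∧ deriv f 0 = c₁ ∧ iteratedDeriv 2 f 0 = 2 * c₂ ∧ iteratedDeriv 3 f 0 = 6 * c₃ := by
  have hderiv (c₀ c₁ c₂ c₃ : ℝ) : deriv (fun t => c₀ + c₁ * t + c₂ * t ^ 2 + c₃ * t ^ 3) =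
      fun t => c₁ + 2 * c₂ * t + 3 * c₃ * t ^ 2 + 0 * t ^ 3 := by
    ext t
    refine HasDerivAt.deriv (HasDerivAt.congr_deriv ((((hasDerivAt_const t c₀).fun_add
      ((hasDerivAt_id' t).const_mul c₁)).fun_add ((hasDerivAt_pow 2 t).const_mul c₂)).fun_add
      ((hasDerivAt_pow 3 t).const_mul c₃)) ?_)
    push_cast
    ring
  have hf : f =ᶠ[𝓝 0] fun t => c₀ + c₁ * t + c₂ * t ^ 2 + c₃ * t ^ 3 := hf
  refine ⟨by simp [hf.self_of_nhds], by rw [hf.deriv_eq, hderiv]; simp, ?_, ?_⟩ <;>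
  · rw [hf.iteratedDeriv_eq]
    simp only [iteratedDeriv_succ', hderiv, iteratedDeriv_zero]
    ring

theorem iteratedDeriv_linear_fractional {u₀ u₁ v₀ v₁ : ℝ} {σ : ℝ → ℝ} (hu₀ : u₀ ≠ 0)
    (hσ : SmoothNear σ 0) (h : ∀ᶠ t in 𝓝 0, σ t * (u₀ + u₁ * t) = v₀ + v₁ * t) :
    deriv σ 0 = (v₁ - v₀ / u₀ * u₁) / u₀ ∧
      iteratedDeriv 2 σ 0 = -2 * (v₁ - v₀ / u₀ * u₁) * u₁ / u₀ ^ 2 ∧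
      iteratedDeriv 3 σ 0 = 6 * (v₁ - v₀ / u₀ * u₁) * u₁ ^ 2 / u₀ ^ 3 := by
  have hu : SmoothNear (fun t => u₀ + u₁ * t) 0 := .of_contDiff (by fun_prop)
  obtain ⟨h₀, h₁, h₂, h₃⟩ := iteratedDeriv_cubic v₀ v₁ 0 0 (f := fun t => σ t * (u₀ + u₁ * t))
    (h.mono fun t ht => by rw [ht]; ring)
  obtain ⟨-, hu₁, hu₂, hu₃⟩ := iteratedDeriv_cubic u₀ u₁ 0 0 (f := fun t => u₀ + u₁ * t)
    (.of_forall fun t => by ring)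
  rw [← iteratedDeriv_one] at h₁
  rw [iteratedDeriv_fun_mul (hσ.contDiffAt_nat _) (hu.contDiffAt_nat _)] at h₁ h₂ h₃
  simp only [Finset.sum_range_succ, Finset.sum_range_zero, Nat.choose, iteratedDeriv_zero,
    iteratedDeriv_one, hu₁, hu₂, hu₃, Nat.sub_zero, Nat.reduceSub, Nat.reduceAdd, Nat.cast_one,
    Nat.cast_ofNat] at h₀ h₁ h₂ h₃
  have e₀ : σ 0 = v₀ / u₀ := by rw [eq_div_iff hu₀]; linear_combination h₀
  have e₁ : deriv σ 0 = (v₁ - v₀ / u₀ * u₁) / u₀ := by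
    rw [eq_div_iff hu₀, ← e₀]
    linear_combination h₁
  have e₂ : iteratedDeriv 2 σ 0 = -2 * deriv σ 0 * u₁ / u₀ := by
    rw [eq_div_iff hu₀]
    linear_combination h₂
  have e₃ : iteratedDeriv 3 σ 0 = -3 * iteratedDeriv 2 σ 0 * u₁ / u₀ := by
    rw [eq_div_iff hu₀]
    linear_combination h₃
  refine ⟨e₁, ?_, ?_⟩
  · rw [e₂, e₁]
    field_simp
  · rw [e₃, e₂, e₁]
    field_simp
    ring

theorem iteratedDeriv_three_homogenization {q : ℝ → ℝ} {u₀ u₁ v₀ v₁ : ℝ} (hu₀ : u₀ ≠ 0)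
    (hq : SmoothNear q (v₀ / u₀)) :
    iteratedDeriv 3 (fun t => q ((v₀ + v₁ * t) / (u₀ + u₁ * t)) * (u₀ + u₁ * t) ^ 3) 0 =
      6 * ∑ k ∈ Finset.range 4, iteratedDeriv k q (v₀ / u₀) / k.factorial * u₁ ^ (3 - k)
        * (v₁ - v₀ / u₀ * u₁) ^ k := by
  have hu : SmoothNear (fun t => u₀ + u₁ * t) 0 := .of_contDiff (by fun_prop)
  set σ : ℝ → ℝ := fun t => (v₀ + v₁ * t) / (u₀ + u₁ * t)
  have hσ : SmoothNear σ 0 := .div (.of_contDiff (by fun_prop)) hu (by simpa)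
  have hσ₀ : σ 0 = v₀ / u₀ := by simp [σ]
  have hne : ∀ᶠ t in 𝓝 (0 : ℝ), u₀ + u₁ * t ≠ 0 := hu.continuousAt.eventually_ne (by simpa)
  obtain ⟨hσ₁, hσ₂, hσ₃⟩ := iteratedDeriv_linear_fractional hu₀ hσ
    (hne.mono fun t ht => div_mul_cancel₀ _ ht)
  obtain ⟨hc₀, hc₁, hc₂, hc₃⟩ := iteratedDeriv_cubic (u₀ ^ 3) (3 * u₀ ^ 2 * u₁)
    (3 * u₀ * u₁ ^ 2) (u₁ ^ 3) (f := fun t => (u₀ + u₁ * t) ^ 3) (.of_forall fun t => by ring)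
  have hqσ : SmoothNear (q ∘ σ) 0 := hq.comp_of_eq hσ hσ₀
  rw [← hσ₀] at hq
  change iteratedDeriv 3 (fun t => (q ∘ σ) t * (u₀ + u₁ * t) ^ 3) 0 = _
  rw [iteratedDeriv_fun_mul (hqσ.contDiffAt_nat 3) ((hu.pow 3).contDiffAt_nat 3)]
  simp only [Finset.sum_range_succ, Finset.sum_range_zero, Nat.choose, iteratedDeriv_zero,
    iteratedDeriv_one, hc₀, hc₁, hc₂, hc₃, Nat.sub_zero, Nat.reduceSub, Nat.reduceAdd,
    Nat.cast_one, Nat.cast_ofNat,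
    iteratedDeriv_comp_two (hq.contDiffAt_nat 2) (hσ.contDiffAt_nat 2),
    iteratedDeriv_comp_three (hq.contDiffAt_nat 3) (hσ.contDiffAt_nat 3),
    deriv_comp 0 hq.differentiableAt hσ.differentiableAt, Function.comp_apply, hσ₀, hσ₁, hσ₂, hσ₃,
    Nat.factorial]
  field_simp
  push_cast
  ring

theorem iteratedDeriv_three_eq_zero_of_homogenization {q S : ℝ → ℝ}
    {u₀ u₁ v₀ v₁ c₀ c₁ c₂ γ ε : ℝ} (hJ : u₀ * v₁ - u₁ * v₀ ≠ 0) (hu₀ : u₀ ≠ 0)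
    (hq : SmoothNear q (v₀ / u₀)) (hS : SmoothNear S 0)
    (hγ : γ = ∑ k ∈ Finset.range 4, iteratedDeriv k q (v₀ / u₀) / k.factorial * u₁ ^ (3 - k)
        * (v₁ - v₀ / u₀ * u₁) ^ k)
    (h : ∀ᶠ t in 𝓝 0, S t * (u₀ * v₁ - u₁ * v₀) + (c₀ + c₁ * t + c₂ * t ^ 2 + ε ^ 3 * γ * t ^ 3) =
      q ((v₀ + ε * v₁ * t) / (u₀ + ε * u₁ * t)) * (u₀ + ε * u₁ * t) ^ 3) :
    iteratedDeriv 3 S 0 = 0 := by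
  set P : ℝ → ℝ := fun t => c₀ + c₁ * t + c₂ * t ^ 2 + ε ^ 3 * γ * t ^ 3
  have hP : SmoothNear P 0 := .of_contDiff (by fun_prop)
  have hP₃ : iteratedDeriv 3 P 0 = 6 * (ε ^ 3 * γ) :=
    (iteratedDeriv_cubic c₀ c₁ c₂ (ε ^ 3 * γ) (.of_forall fun _ => rfl)).2.2.2
  have h₃ := EventuallyEq.iteratedDeriv_eq 3 h
  rw [iteratedDeriv_three_homogenization hu₀ hq, iteratedDeriv_fun_add
    ((hS.mul (.const _)).contDiffAt_nat 3) (hP.contDiffAt_nat 3), hP₃,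
    iteratedDeriv_mul_const_field, hγ] at h₃
  have hscale : ∑ k ∈ Finset.range 4, iteratedDeriv k q (v₀ / u₀) / k.factorial
      * (ε * u₁) ^ (3 - k) * (ε * v₁ - v₀ / u₀ * (ε * u₁)) ^ k = ε ^ 3 * γ := by
    rw [hγ, Finset.mul_sum]
    refine Finset.sum_congr rfl fun k hk => ?_
    rw [← pow_sub_mul_pow ε (Nat.le_of_lt_succ (Finset.mem_range.1 hk)),
      show ε * v₁ - v₀ / u₀ * (ε * u₁) = ε * (v₁ - v₀ / u₀ * u₁) by ring, mul_pow, mul_pow]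
    ring
  rw [hscale, ← hγ] at h₃
  exact (mul_eq_zero.1 (by linear_combination h₃)).resolve_right hJ

end ThirdDerivative

section LeafCurve

variable {F G Q : ℝ × ℝ × ℝ → ℝ} {H K : ℝ × ℝ → ℝ × ℝ}

theorem deriv_curve_in_leaf {a b t : ℝ} {c : ℝ → ℝ × ℝ} (hc : SmoothNear c t)
    (hF : SmoothNear F (a, b, (c t).1)) (h : ∀ᶠ s in 𝓝 t, (c s).2 = F (a, b, (c s).1)) :
    (deriv c t).2 = D₃ F (a, b, (c t).1) * (deriv c t).1 ∧
      (deriv c t).1 * (deriv (deriv c) t).2 - (deriv c t).2 * (deriv (deriv c) t).1 =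
        D₃ (D₃ F) (a, b, (c t).1) * (deriv c t).1 ^ 3 := by
  have hleaf {g : ℝ × ℝ × ℝ → ℝ} {s : ℝ} (hg : SmoothNear g (a, b, (c s).1))
      (hs : SmoothNear c s) : HasDerivAt (fun s => g (a, b, (c s).1))
        (D₃ g (a, b, (c s).1) * (deriv c s).1) s := by
    simpa using hasDerivAt_comp_curve₃ (F := g) hg (hasDerivAt_const s a) (hasDerivAt_const s b)
      hs.differentiableAt.hasDerivAt.fst
  have hcont : ContinuousAt (fun s => (a, b, (c s).1)) t := by
    have := hc.continuousAt
    fun_prop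
  have hslope : ∀ᶠ s in 𝓝 t, (deriv c s).2 = D₃ F (a, b, (c s).1) * (deriv c s).1 := by
    filter_upwards [h.eventually_nhds, hc.eventually, hcont.eventually hF.eventually]
      with s hs hcs hFs
    exact HasDerivAt.unique hcs.differentiableAt.hasDerivAt.snd
      ((hleaf hFs hcs).congr_of_eventuallyEq hs)
  have hcurv := HasDerivAt.unique hc.deriv.differentiableAt.hasDerivAt.snd
    (((hleaf hF.D₃ hc).mul hc.deriv.differentiableAt.hasDerivAt.fst).congr_of_eventuallyEq hslope)
  refine ⟨hslope.self_of_nhds, ?_⟩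
  rw [hcurv, hslope.self_of_nhds]
  ring

theorem deriv_leaf_image {a b x : ℝ} (hG : SmoothNear G (a, b, x))
    (hH : SmoothNear H (x, G (a, b, x))) :
    SmoothNear (fun s => H (s, G (a, b, s))) x ∧
    deriv (fun s => H (s, G (a, b, s))) x =
      fderiv ℝ H (x, G (a, b, x)) (1, D₃ G (a, b, x)) ∧
    deriv (deriv fun s => H (s, G (a, b, s))) x =
      fderiv ℝ (fderiv ℝ H) (x, G (a, b, x)) (1, D₃ G (a, b, x)) (1, D₃ G (a, b, x))
        + fderiv ℝ H (x, G (a, b, x)) (0, D₃ (D₃ G) (a, b, x)) := by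
  have hslice : ContinuousAt (fun s => (a, b, s)) x := by fun_prop
  have hG' : SmoothNear (fun s => G (a, b, s)) x :=
    hG.comp_of_eq (f := fun s => (a, b, s)) (.of_contDiff (by fun_prop)) rfl
  have hgraph : SmoothNear (fun s => (s, G (a, b, s))) x := .prodMk .id hG'
  have hderiv : deriv (fun s => G (a, b, s)) =ᶠ[𝓝 x] fun s => D₃ G (a, b, s) := by
    filter_upwards [hslice.eventually hG.eventually] with s hs using (hasDerivAt_D₃ hs).deriv
  have h₁ : deriv (fun s => (s, G (a, b, s))) x = (1, D₃ G (a, b, x)) := by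
    exact hG'.deriv_graph.self_of_nhds.trans (congrArg (Prod.mk 1) hderiv.self_of_nhds)
  have h₂ : deriv (deriv fun s => (s, G (a, b, s))) x = (0, D₃ (D₃ G) (a, b, x)) := by
    rw [hG'.deriv_graph.deriv_eq]
    exact HasDerivAt.deriv ((hasDerivAt_const x 1).prodMk
      ((hasDerivAt_D₃ hG.D₃).congr_of_eventuallyEq hderiv))
  refine ⟨hH.comp_of_eq hgraph rfl, ?_, ?_⟩
  · rw [(SmoothNear.hasDerivAt_comp (f := H) (c := fun s => (s, G (a, b, s))) hH
      hgraph).deriv, h₁]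
  · rw [(SmoothNear.hasDerivAt_deriv_comp (f := H) (c := fun s => (s, G (a, b, s))) hH
      hgraph).deriv, h₁, h₂]

theorem IsCoordChange.leaf_image (h : IsCoordChange F G H K) (hF : SmoothNear F 0)
    (hG : SmoothNear G 0) (hG₀ : G 0 = 0) (hQ : IsLeafEquation Q F) :
    ∀ᶠ p in 𝓝 (0 : ℝ × ℝ × ℝ),
      let c := fun s => H (s, G (p.1, p.2.1, s))
      let s := D₃ F ((K (p.2.1, p.1)).2, (K (p.2.1, p.1)).1, (c p.2.2).1)
      (deriv c p.2.2).2 = s * (deriv c p.2.2).1 ∧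
        (deriv c p.2.2).1 * (deriv (deriv c) p.2.2).2
          - (deriv c p.2.2).2 * (deriv (deriv c) p.2.2).1 =
        Q ((c p.2.2).1, (c p.2.2).2, s) * (deriv c p.2.2).1 ^ 3 := by
  have hgraph : ContinuousAt (fun p : ℝ × ℝ × ℝ => (p.2.2, G p)) 0 :=
    continuousAt_snd.snd.prodMk hG.continuousAt
  have hHG := h.left.smoothNear.continuousAt.comp_of_eq hgraph (by simp [hG₀])
  have hK := h.right.smoothNear.continuousAt.comp_of_eq
    (f := fun p : ℝ × ℝ × ℝ => (p.2.1, p.1)) (x := 0) (by fun_prop) rfl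
  have hcont : ContinuousAt (fun p : ℝ × ℝ × ℝ =>
      ((K (p.2.1, p.1)).2, (K (p.2.1, p.1)).1, (H (p.2.2, G p)).1)) 0 :=
    hK.snd.prodMk (hK.fst.prodMk hHG.fst)
  have hcont₀ : ((K (0, 0)).2, (K (0, 0)).1, (H (0, G 0)).1) = (0 : ℝ × ℝ × ℝ) := by
    have hK₀ : K (0, 0) = 0 := h.right.map_zero
    have hH₀ : H (0, 0) = 0 := h.left.map_zero
    simp [hG₀, hK₀, hH₀]
  filter_upwards [hG.eventually, eventually_of_continuousAt h.left.smoothNear.eventually hgraph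
    (by simp [hG₀]), (h.incident_graph hG hG₀).eventually_nhds,
    eventually_of_continuousAt hF.eventually hcont hcont₀,
    eventually_of_continuousAt hQ hcont hcont₀] with ⟨a, b, x⟩ hGp hHp hinc hFp hQp
  have hslice : ContinuousAt (fun s => (a, b, s)) x := by fun_prop
  dsimp only
  have hleaf := deriv_curve_in_leaf (deriv_leaf_image hGp hHp).1 hFp (hslice.eventually hinc)
  have hincp : (H (x, G (a, b, x))).2 = _ := hinc.self_of_nhds
  refine ⟨hleaf.1, hleaf.2.trans (congrArg (· * _) ?_)⟩
  rw [hQp, hincp]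

theorem IsCoordChange.leaf_image_of_slope {ε : ℝ} (h : IsCoordChange F G H K)
    (hF : SmoothNear F 0) (hG : SmoothNear G 0) (hQF : IsLeafEquation Q F)
    (hG₀ : ∀ᶠ p in 𝓝 (0 : ℝ × ℝ × ℝ), G (p.1, p.2.1, 0) = p.1)
    (hslope : ∀ᶠ p in 𝓝 (0 : ℝ × ℝ × ℝ), D₃ G (p.1, p.2.1, 0) = ε * p.2.1) :
    ∀ᶠ a in 𝓝 0, ∃ c₀ c₁ c₂, ∀ᶠ b in 𝓝 0,
      let u := fderiv ℝ H (0, a) (1, 0)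
      let v := fderiv ℝ H (0, a) (0, 1)
      let w := fderiv ℝ (fderiv ℝ H) (0, a) (0, 1) (0, 1)
      let s := D₃ F ((K (b, a)).2, (K (b, a)).1, (H (0, a)).1)
      u.2 + ε * v.2 * b = s * (u.1 + ε * v.1 * b) ∧
        D₃ (D₃ G) (a, b, 0) * (u.1 * v.2 - v.1 * u.2)
            + (c₀ + c₁ * b + c₂ * b ^ 2 + ε ^ 3 * (v.1 * w.2 - v.2 * w.1) * b ^ 3) =
          Q ((H (0, a)).1, (H (0, a)).2, s) * (u.1 + ε * v.1 * b) ^ 3 := by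
  have hG₀' : G 0 = 0 := hG₀.self_of_nhds
  have hslice : ContinuousAt (fun p : ℝ × ℝ => (p.1, p.2, (0 : ℝ))) 0 := by fun_prop
  have hH : ContinuousAt (fun p : ℝ × ℝ => ((0 : ℝ), p.1)) 0 := by fun_prop
  filter_upwards [((eventually_of_continuousAt (h.leaf_image hF hG hG₀' hQF) hslice rfl).and
    (((eventually_of_continuousAt hG.eventually hslice rfl).and
      (eventually_of_continuousAt h.left.smoothNear.eventually hH rfl)).and
    ((eventually_of_continuousAt hG₀ hslice rfl).and
      (eventually_of_continuousAt hslope hslice rfl)))).curry_nhds] with a ha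
  set u := fderiv ℝ H (0, a) (1, 0)
  set v := fderiv ℝ H (0, a) (0, 1)
  set L := fderiv ℝ (fderiv ℝ H) (0, a)
  let A := L (1, 0) (1, 0)
  let B := L (1, 0) (0, 1) + L (0, 1) (1, 0)
  let w := L (0, 1) (0, 1)
  refine ⟨u.1 * A.2 - u.2 * A.1, ε * (u.1 * B.2 - u.2 * B.1 + (v.1 * A.2 - v.2 * A.1)),
    ε ^ 2 * (u.1 * w.2 - u.2 * w.1 + (v.1 * B.2 - v.2 * B.1)), ?_⟩
  filter_upwards [ha] with b ⟨hleaf, ⟨hGb, hHb⟩, hG₀b, hslopeb⟩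
  simp only at hG₀b hslopeb hleaf hGb hHb
  have himage := deriv_leaf_image (H := H) hGb (by rwa [hG₀b])
  rw [himage.2.1, himage.2.2, hG₀b, hslopeb] at hleaf
  have hdir : ((1 : ℝ), ε * b) = (1, 0) + (ε * b) • (0, 1) := by simp
  have hvert : ((0 : ℝ), D₃ (D₃ G) (a, b, 0)) = D₃ (D₃ G) (a, b, 0) • (0, 1) := by simp
  simp only [hdir, hvert, map_add, map_smul, add_apply,
    smul_apply, Prod.fst_add, Prod.snd_add, Prod.smul_fst, Prod.smul_snd,
    smul_eq_mul] at hleaf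
  refine ⟨by linear_combination hleaf.1, ?_⟩
  simp only [A, B, w, Prod.fst_add, Prod.snd_add]
  linear_combination hleaf.2

theorem SmoothNear.deriv_deriv_vertical {a : ℝ} (hH : SmoothNear H (0, a)) :
    deriv (fun t => H (0, t)) a = fderiv ℝ H (0, a) (0, 1) ∧
    deriv (deriv fun t => H (0, t)) a = fderiv ℝ (fderiv ℝ H) (0, a) (0, 1) (0, 1) := by
  have hline : SmoothNear (fun t : ℝ => ((0 : ℝ), t)) a := .of_contDiff (by fun_prop)
  have hderiv : deriv (fun t : ℝ => ((0 : ℝ), t)) = fun _ => (0, 1) := by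
    ext1 t
    exact HasDerivAt.deriv ((hasDerivAt_const t 0).prodMk (hasDerivAt_id' t))
  constructor
  · rw [(SmoothNear.hasDerivAt_comp (f := H) (c := fun t => (0, t)) hH hline).deriv, hderiv]
  · rw [(SmoothNear.hasDerivAt_deriv_comp (f := H) (c := fun t => (0, t)) hH hline).deriv, hderiv]
    simp

theorem IsChain.vertical {x y b a : ℝ → ℝ} (h : IsChain Q F x y b a) (hH : SmoothNear H 0)
    (hxy : ∀ᶠ t in 𝓝 (0 : ℝ), H (0, t) = (x t, y t))
    (hba : ∀ᶠ t in 𝓝 (0 : ℝ), K (0, t) = (b t, a t)) :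
    ∀ᶠ t in 𝓝 0,
      let v := fderiv ℝ H (0, t) (0, 1)
      let w := fderiv ℝ (fderiv ℝ H) (0, t) (0, 1) (0, 1)
      v.1 * w.2 - v.2 * w.1 = cubicForm Q ((H (0, t)).1, (H (0, t)).2,
        D₃ F ((K (0, t)).2, (K (0, t)).1, (H (0, t)).1)) v.1 v.2 := by
  have hline : SmoothNear (fun t : ℝ => ((0 : ℝ), t)) 0 := .of_contDiff (by fun_prop)
  have hc : SmoothNear (fun t => H (0, t)) 0 := hH.comp_of_eq hline rfl
  have hx : x =ᶠ[𝓝 0] fun t => (H (0, t)).1 := hxy.mono fun t ht => congrArg Prod.fst ht.symm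
  have hy : y =ᶠ[𝓝 0] fun t => (H (0, t)).2 := hxy.mono fun t ht => congrArg Prod.snd ht.symm
  have hx' := hx.deriv.trans hc.deriv_fst
  have hy' := hy.deriv.trans hc.deriv_snd
  filter_upwards [h, hxy, hba, hx', hy', hx'.deriv.trans hc.deriv.deriv_fst,
    hy'.deriv.trans hc.deriv.deriv_snd,
    eventually_of_continuousAt hH.eventually hline.continuousAt rfl]
    with t ht hxyt hbat hxt hyt hxt' hyt' hHt
  rw [hxt, hyt, hxt', hyt', hHt.deriv_deriv_vertical.1, hHt.deriv_deriv_vertical.2] at ht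
  simpa only [hxyt, hbat] using ht

theorem IsDiffeoGerm.eventually_jacobian_ne_zero (hH : IsDiffeoGerm H) : ∀ᶠ t in 𝓝 0,
    (fderiv ℝ H (0, t) (1, 0)).1 * (fderiv ℝ H (0, t) (0, 1)).2
      - (fderiv ℝ H (0, t) (0, 1)).1 * (fderiv ℝ H (0, t) (1, 0)).2 ≠ 0 := by
  have hdet := hH.jacobian_ne_zero
  simp only [d₁, d₂, (HasFDerivAt.fst hH.smoothNear.differentiableAt.hasFDerivAt).fderiv,
    (HasFDerivAt.snd hH.smoothNear.differentiableAt.hasFDerivAt).fderiv] at hdet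
  have hline : ContinuousAt (fun t : ℝ => ((0 : ℝ), t)) 0 := by fun_prop
  have hu := hH.smoothNear.fderiv_apply (1, 0)
  have hv := hH.smoothNear.fderiv_apply (0, 1)
  have hJ := ((hu.fst.mul hv.snd).sub (hv.fst.mul hu.snd)).continuousAt.eventually_ne
    hdet
  exact hline.eventually hJ

theorem IsCoordChange.eventually_smoothNear_contact (h : IsCoordChange F G H K)
    (hF : SmoothNear F 0) (hQ : SmoothNear Q (0, 0, D₃ F 0)) : ∀ᶠ t in 𝓝 (0 : ℝ),
      SmoothNear Q ((H (0, t)).1, (H (0, t)).2,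
        D₃ F ((K (0, t)).2, (K (0, t)).1, (H (0, t)).1)) := by
  have hline : SmoothNear (fun t : ℝ => ((0 : ℝ), t)) 0 := .of_contDiff (by fun_prop)
  have hH : SmoothNear (fun t => H (0, t)) 0 := h.left.smoothNear.comp_of_eq hline rfl
  have hK : SmoothNear (fun t => K (0, t)) 0 := h.right.smoothNear.comp_of_eq hline rfl
  have hH₀ : H (0, 0) = 0 := h.left.map_zero
  have hK₀ : K (0, 0) = 0 := h.right.map_zero
  have hs : SmoothNear (fun t => D₃ F ((K (0, t)).2, (K (0, t)).1, (H (0, t)).1)) 0 :=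
    hF.D₃.comp_of_eq (hK.snd.prodMk (hK.fst.prodMk hH.fst)) (by simp [hH₀, hK₀])
  exact eventually_of_continuousAt hQ.eventually
    (hH.fst.prodMk (hH.snd.prodMk hs)).continuousAt (by simp [hH₀, hK₀, ← Prod.mk_zero_zero])

theorem IsCoordChange.D₂_iterate_three_D₃_D₃ {ε : ℝ} {x y β α : ℝ → ℝ}
    (h : IsCoordChange F G H K) (hF : SmoothNear F 0) (hG : SmoothNear G 0)
    (hQ : SmoothNear Q (0, 0, D₃ F 0)) (hQF : IsLeafEquation Q F)
    (hG₀ : ∀ᶠ p in 𝓝 (0 : ℝ × ℝ × ℝ), G (p.1, p.2.1, 0) = p.1)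
    (hslope : ∀ᶠ p in 𝓝 (0 : ℝ × ℝ × ℝ), D₃ G (p.1, p.2.1, 0) = ε * p.2.1)
    (hchain : IsChain Q F x y β α) (hxy : ∀ᶠ t in 𝓝 (0 : ℝ), H (0, t) = (x t, y t))
    (hβα : ∀ᶠ t in 𝓝 (0 : ℝ), K (0, t) = (β t, α t)) :
    ∀ᶠ a in 𝓝 0, D₂^[3] (D₃ (D₃ G)) (a, 0, 0) = 0 := by
  have hslice : ContinuousAt (fun a : ℝ => (a, (0 : ℝ), (0 : ℝ))) 0 := by fun_prop
  filter_upwards [h.leaf_image_of_slope hF hG hQF hG₀ hslope,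
    hchain.vertical h.left.smoothNear hxy hβα, h.left.eventually_jacobian_ne_zero,
    eventually_of_continuousAt hG.eventually hslice rfl, h.eventually_smoothNear_contact hF hQ]
    with a ⟨c₀, c₁, c₂, ha⟩ hcubic hJ hGa hQa
  set u := fderiv ℝ H (0, a) (1, 0)
  set v := fderiv ℝ H (0, a) (0, 1)
  set s₀ := D₃ F ((K (0, a)).2, (K (0, a)).1, (H (0, a)).1)
  have hu₂ : u.2 = s₀ * u.1 := by simpa using ha.self_of_nhds.1
  have hu₁ : u.1 ≠ 0 := fun hu => hJ (by rw [hu₂, hu]; ring)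
  have hs₀ : u.2 / u.1 = s₀ := by rw [hu₂, mul_div_cancel_right₀ _ hu₁]
  have hne : ∀ᶠ b in 𝓝 (0 : ℝ), u.1 + ε * v.1 * b ≠ 0 :=
    (by fun_prop : ContinuousAt (fun b => u.1 + ε * v.1 * b) 0).eventually_ne (by simpa)
  have hS : SmoothNear (fun b => D₃ (D₃ G) (a, b, 0)) 0 :=
    hGa.D₃.D₃.comp_of_eq (f := fun b => (a, b, 0)) (.of_contDiff (by fun_prop)) rfl
  have hq : SmoothNear (fun s => Q ((H (0, a)).1, (H (0, a)).2, s)) (u.2 / u.1) :=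
    hQa.comp_of_eq (f := fun s => ((H (0, a)).1, (H (0, a)).2, s)) (.of_contDiff (by fun_prop))
      (by rw [hs₀])
  rw [← iteratedDeriv_slice₂ hGa.D₃.D₃]
  refine iteratedDeriv_three_eq_zero_of_homogenization hJ hu₁ hq hS (hcubic.trans ?_)
    ((ha.and hne).mono fun b ⟨⟨hb₁, hb₂⟩, hb⟩ => hb₂.trans ?_)
  · simp only [cubicForm, hs₀, iteratedDeriv_slice₃ hQa]
  · rw [(div_eq_iff hb).2 hb₁]

end LeafCurve

section ChainNormalization

variable {F F' G : ℝ × ℝ × ℝ → ℝ}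

theorem D₂_iterate_congr {p : ℝ × ℝ × ℝ} (h : F =ᶠ[𝓝 p] G) (n : ℕ) :
    D₂^[n] F =ᶠ[𝓝 p] D₂^[n] G := by
  induction n with
  | zero => exact h
  | succ n ih =>
    rw [Function.iterate_succ_apply', Function.iterate_succ_apply']
    exact ih.eventually_nhds.mono fun _ hq => D₂_congr hq

theorem D₂_D₃_iterate_comm {p : ℝ × ℝ × ℝ} (hF : SmoothNear F p) (n : ℕ) :
    D₂ (D₃^[n] F) =ᶠ[𝓝 p] D₃^[n] (D₂ F) := by
  induction n with
  | zero => rfl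
  | succ n ih =>
    simp only [Function.iterate_succ_apply']
    filter_upwards [hF.eventually, ih.eventually_nhds] with q hq hn
    rw [D₂_D₃_comm (hq.D₃_iterate n), D₃_congr hn]

theorem D₂_iterate_D₃_iterate_comm {p : ℝ × ℝ × ℝ} (hF : SmoothNear F p) (m n : ℕ) :
    D₂^[m] (D₃^[n] F) =ᶠ[𝓝 p] D₃^[n] (D₂^[m] F) := by
  induction m generalizing F with
  | zero => rfl
  | succ m ih =>
    exact (D₂_iterate_congr (D₂_D₃_iterate_comm hF n) m).trans (ih hF.D₂)

theorem IsPrenormal.D₃_dual (h : IsPrenormal F) (hdual : IsDual F F') (hF : SmoothNear F 0)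
    (hF' : SmoothNear F' 0) (hF'₀ : F' 0 = 0) :
    ∀ᶠ p in 𝓝 (0 : ℝ × ℝ × ℝ), D₃ F' (p.1, p.2.1, 0) = -1 * p.2.1 := by
  have hslice : ContinuousAt (fun p : ℝ × ℝ × ℝ => (p.1, (0 : ℝ), p.2.1)) 0 := by fun_prop
  filter_upwards [h.isFlat.D₃_dual hdual hF hF' hF'₀,
    eventually_of_continuousAt h.D₂_eq hslice rfl] with p hp hp'
  rw [hp, hp', neg_one_mul]

theorem IsPrenormal.D₂_iterate_three_dual (h : IsPrenormal F) (hdual : IsDual F F')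
    (hF : SmoothNear F 0) (hF' : SmoothNear F' 0) (hF'₀ : F' 0 = 0) :
    ∀ᶠ a in 𝓝 0, D₂^[3] (D₃ (D₃ F')) (a, 0, 0) = -D₂^[2] (D₃^[3] F) (a, 0, 0) := by
  have hslice : ContinuousAt (fun a : ℝ => (a, (0 : ℝ), (0 : ℝ))) 0 := by fun_prop
  filter_upwards [eventually_of_continuousAt
    (h.D₃_D₃_dual hdual hF hF' hF'₀).eventually_nhds hslice rfl,
    eventually_of_continuousAt hF.eventually hslice rfl,
    eventually_of_continuousAt hF'.eventually hslice rfl] with a ha hFa hF'a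
  have hline : ContinuousAt (fun b : ℝ => (a, b, (0 : ℝ))) 0 := by fun_prop
  have hb : (fun b => D₃ (D₃ F') (a, b, 0)) =ᶠ[𝓝 0] fun b => -D₂ (D₂ F) (a, 0, b) :=
    hline.eventually ha
  rw [← iteratedDeriv_slice₂ hF'a.D₃.D₃, hb.iteratedDeriv_eq, iteratedDeriv_fun_neg,
    iteratedDeriv_slice₃ hFa.D₂.D₂, (D₂_iterate_D₃_iterate_comm hFa 2 3).self_of_nhds]
  rfl

theorem IsRegular.exists_isPrenormal (hF : IsRegular F) :
    ∃ G H K, IsRegular G ∧ IsPrenormal G ∧ IsCoordChange F G H K ∧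
      (∀ᶠ a in 𝓝 0, D₂^[3] (D₃^[2] G) (a, 0, 0) = 0) ∧
      ∀ᶠ a in 𝓝 0, D₂^[2] (D₃^[3] G) (a, 0, 0) = 0 := by
  obtain ⟨F', hF', hFF'⟩ := hF.exists_dual
  obtain ⟨Q, hQ, hQF⟩ := hF.exists_isLeafEquation
  obtain ⟨Q', hQ', hQF'⟩ := hF'.exists_isLeafEquation
  obtain ⟨b, x, hb, hx, hb₀, hx₀, hb₁, hx₁, hchain, hchain'⟩ :=
    hF.exists_chain hF'.smoothNear hQ hQ'
  obtain ⟨E, H, K, hE, hEflat, hFE, hH, hK⟩ :=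
    hF.exists_isFlat_of_curve hF' hFF' hb hx hb₀ hx₀ hb₁ hx₁
  obtain ⟨G, H', K', hG, hGpre, hEG, hH', hK'⟩ := hEflat.exists_isPrenormal hE
  obtain ⟨G', hG', hGG'⟩ := hG.exists_dual
  have hFG := hFE.trans hEG
  have hHline : ∀ᶠ t in 𝓝 (0 : ℝ), H (H' (0, t)) = (x t, F (t, b t, x t)) :=
    hH'.mono fun t ht => by rw [ht, hH]
  have hKline : ∀ᶠ t in 𝓝 (0 : ℝ), K (K' (0, t)) = (b t, t) :=
    (hK'.and hK).mono fun t ⟨ht, ht'⟩ => by rw [ht, ht']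
  have hG₀ : ∀ᶠ p in 𝓝 (0 : ℝ × ℝ × ℝ), G (p.1, p.2.1, 0) = p.1 :=
    hGpre.isFlat.mono fun p hp => hp.2
  have hG'₀ : ∀ᶠ p in 𝓝 (0 : ℝ × ℝ × ℝ), G' (p.1, p.2.1, 0) = p.1 :=
    (hGpre.isFlat.dual hGG' hG'.smoothNear hG'.map_zero).mono fun p hp => hp.2
  have hslope' := hGpre.D₃_dual hGG' hG.smoothNear hG'.smoothNear hG'.map_zero
  refine ⟨G, _, _, hG, hGpre, hFG, ?_, ?_⟩
  · exact hFG.D₂_iterate_three_D₃_D₃ hF.smoothNear hG.smoothNear hQ hQF hG₀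
      (hGpre.D₃_eq.mono fun p hp => by rw [hp, one_mul]) hchain hHline hKline
  · filter_upwards [hGpre.D₂_iterate_three_dual hGG' hG.smoothNear hG'.smoothNear hG'.map_zero,
      (hFG.dual hFF' hGG').D₂_iterate_three_D₃_D₃ hF'.smoothNear hG'.smoothNear hQ' hQF' hG'₀
        hslope' hchain' hKline hHline] with a h₁ h₂
    exact neg_eq_zero.1 (h₁.symm.trans h₂)

end ChainNormalization

section RescalingFunctions

theorem iteratedDeriv_succ_eventuallyEq {n : ℕ} {f g g' : ℝ → ℝ} {a : ℝ}
    (hf : iteratedDeriv n f =ᶠ[𝓝 a] g) (hg : ∀ᶠ t in 𝓝 a, HasDerivAt g (g' t) t) :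
    iteratedDeriv (n + 1) f =ᶠ[𝓝 a] g' := by
  rw [iteratedDeriv_succ]
  exact hf.deriv.trans (hg.mono fun t ht => ht.deriv)

theorem exists_riccati_system_solution {c R : ℝ → ℝ} (hc : SmoothNear c 0) (hR : SmoothNear R 0) :
    ∃ σ p l r : ℝ → ℝ, SmoothNear σ 0 ∧ SmoothNear p 0 ∧ SmoothNear l 0 ∧
      σ 0 = 0 ∧ p 0 = 1 ∧ l 0 = 1 ∧ ∀ᶠ t in 𝓝 0, HasDerivAt σ (p t) t ∧
        HasDerivAt p (p t * (c (σ t) / 2 * p t + 2 * r t)) t ∧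
        HasDerivAt l (l t * r t) t ∧ HasDerivAt r (r t ^ 2 + p t ^ 2 * R (σ t)) t := by
  let V : ℝ × ℝ × ℝ × ℝ × ℝ → ℝ × ℝ × ℝ × ℝ := fun z =>
    (z.2.2.1, z.2.2.1 * (c z.2.1 / 2 * z.2.2.1 + 2 * z.2.2.2.2), z.2.2.2.1 * z.2.2.2.2,
      z.2.2.2.2 ^ 2 + z.2.2.1 ^ 2 * R z.2.1)
  have hV : SmoothNear V (0, 0, 1, 1, 0) := by
    have hid := SmoothNear.id (p := ((0, 0, 1, 1, 0) : ℝ × ℝ × ℝ × ℝ × ℝ))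
    have hp := hid.snd.snd.fst
    have hr := hid.snd.snd.snd.snd
    exact hp.prodMk ((hp.mul ((((hc.comp_of_eq hid.snd.fst rfl).div (.const 2) two_ne_zero).mul
      hp).add ((SmoothNear.const 2).mul hr))).prodMk ((hid.snd.snd.snd.fst.mul hr).prodMk
      ((hr.pow 2).add ((hp.pow 2).mul (hR.comp_of_eq hid.snd.fst rfl)))))
  obtain ⟨α, hα, hα₀, hode⟩ := exists_ode_solution hV
  refine ⟨fun t => (α t).1, fun t => (α t).2.1, fun t => (α t).2.2.1, fun t => (α t).2.2.2,
    hα.fst, hα.snd.fst, hα.snd.snd.fst, congrArg (fun z => z.1) hα₀,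
    congrArg (fun z => z.2.1) hα₀, congrArg (fun z => z.2.2.1) hα₀, hode.mono fun t ht => ?_⟩
  exact ⟨ht.fst, ht.snd.fst, ht.snd.snd.fst, ht.snd.snd.snd⟩

/-- Data of the change of coordinates `x = l(Y) X`, `y = σ(Y)`, `b = μ(A) B`, `a = σ(A)`. The
condition `σ' = l μ` keeps the first derivatives of a prenormal defining function. -/
structure IsRescaling (σ l μ : ℝ → ℝ) : Prop where
  smoothNear_base : SmoothNear σ 0
  smoothNear_left : SmoothNear l 0
  smoothNear_right : SmoothNear μ 0
  base_zero : σ 0 = 0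
  left_zero : l 0 = 1
  right_zero : μ 0 = 1
  deriv_base : ∀ᶠ t in 𝓝 0, deriv σ t = l t * μ t

theorem exists_isRescaling {c e : ℝ → ℝ} (hc : SmoothNear c 0) (he : SmoothNear e 0) :
    ∃ σ l μ : ℝ → ℝ, IsRescaling σ l μ ∧ ∀ᶠ t in 𝓝 0,
        2 * iteratedDeriv 2 σ t = c (σ t) * deriv σ t ^ 2 + 4 * deriv l t * μ t ∧
        6 * iteratedDeriv 3 σ t = e (σ t) * deriv σ t ^ 3
          + 18 * c (σ t) * deriv σ t * μ t * deriv l t + 18 * μ t * iteratedDeriv 2 l t := by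
  -- In terms of `p = σ'` and `r = l' / l` the last relation becomes the Riccati equation
  -- `r' = r² + p² (c' / 2 + c² / 2 - e / 6)`, with `c`, `e` evaluated at `σ`.
  obtain ⟨σ, p, l, r, hσ, hp, hl, hσ₀, hp₀, hl₀, hode⟩ := exists_riccati_system_solution hc
    (R := fun s => deriv c s / 2 + c s ^ 2 / 2 - e s / 6)
    (((hc.deriv.div (.const 2) two_ne_zero).add
      ((hc.pow 2).div (.const 2) two_ne_zero)).sub (he.div (.const 6) (by norm_num)))
  have hl₀' : l 0 ≠ 0 := hl₀ ▸ one_ne_zero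
  have hσ₁ : iteratedDeriv 1 σ =ᶠ[𝓝 0] p :=
    iteratedDeriv_succ_eventuallyEq (by simp) (hode.mono fun t ht => ht.1)
  have hσ₂ := iteratedDeriv_succ_eventuallyEq hσ₁ (hode.mono fun t ht => ht.2.1)
  have hσ₃ := iteratedDeriv_succ_eventuallyEq hσ₂ ((hode.and (eventually_of_continuousAt
    hc.eventually hσ.continuousAt hσ₀)).mono fun t ⟨⟨hσt, hpt, _, hrt⟩, hct⟩ =>
      hpt.mul ((((hct.differentiableAt.hasDerivAt.comp t hσt).div_const 2).mul hpt).add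
        (hrt.const_mul 2)))
  have hl₁ : iteratedDeriv 1 l =ᶠ[𝓝 0] fun t => l t * r t :=
    iteratedDeriv_succ_eventuallyEq (by simp) (hode.mono fun t ht => ht.2.2.1)
  have hl₂ := iteratedDeriv_succ_eventuallyEq hl₁
    (hode.mono fun t ⟨_, _, hlt, hrt⟩ => hlt.mul hrt)
  rw [iteratedDeriv_one] at hσ₁ hl₁
  have hl' := hl.continuousAt.eventually_ne hl₀'
  refine ⟨σ, l, fun t => p t / l t, ⟨hσ, hl, hp.div hl hl₀', hσ₀, hl₀, by simp [hp₀, hl₀],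
    (hσ₁.and hl').mono fun t ht => ht.1.trans (mul_div_cancel₀ _ ht.2).symm⟩, ?_⟩
  filter_upwards [hσ₁, hσ₂, hσ₃, hl₁, hl₂, hl'] with t h₁ h₂ h₃ k₁ k₂ hlt
  simp only [h₁, h₂, h₃, k₁, k₂, Function.comp_apply]
  constructor <;> field_simp <;> ring

end RescalingFunctions

section Jets

theorem iteratedDeriv_fun_comp_const_mul (n : ℕ) (f : ℝ → ℝ) (c x : ℝ) :
    iteratedDeriv n (fun t => f (c * t)) x = c ^ n * iteratedDeriv n f (c * x) := by
  induction n generalizing f with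
  | zero => simp
  | succ n ih =>
    rw [iteratedDeriv_succ', iteratedDeriv_succ', pow_succ, mul_assoc,
      show deriv (fun t => f (c * t)) = fun t => c * deriv f (c * t) from
        funext fun t => deriv_comp_mul_left c f t, iteratedDeriv_const_mul_field, ih]
    ring

theorem iteratedDeriv_add_two_fun_id (n : ℕ) (x : ℝ) :
    iteratedDeriv (n + 2) (fun t : ℝ => t) x = 0 := by
  rw [iteratedDeriv_succ', iteratedDeriv_succ']
  simp

theorem iteratedDeriv_succ_id_mul {f : ℝ → ℝ} (hf : SmoothNear f 0) (n : ℕ) :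
    iteratedDeriv (n + 1) (fun t => t * f t) 0 = (n + 1) * iteratedDeriv n f 0 := by
  rw [iteratedDeriv_fun_mul (f := fun t => t) contDiffAt_id (hf.contDiffAt_nat (n + 1)),
    Finset.sum_eq_single_of_mem 1 (by simp)]
  · simp
  · rintro (_ | _ | i) _ hi
    · simp
    · exact absurd rfl hi
    · rw [iteratedDeriv_add_two_fun_id]
      ring

theorem iteratedDeriv_conjugation {σ l f g : ℝ → ℝ} {α : ℝ} (hσ : SmoothNear σ α)
    (hl : SmoothNear l α) (hf : SmoothNear f 0) (hg : SmoothNear g 0) (hg₀ : g 0 = α)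
    (h : ∀ᶠ t in 𝓝 0, σ (g t) = f (l (g t) * t)) :
    deriv σ α * deriv g 0 = deriv f 0 * l α ∧
    iteratedDeriv 2 σ α * deriv g 0 ^ 2 + deriv σ α * iteratedDeriv 2 g 0 =
      iteratedDeriv 2 f 0 * l α ^ 2 + deriv f 0 * (2 * deriv l α * deriv g 0) ∧
    iteratedDeriv 3 σ α * deriv g 0 ^ 3 + 3 * iteratedDeriv 2 σ α * deriv g 0 * iteratedDeriv 2 g 0
        + deriv σ α * iteratedDeriv 3 g 0 =
      iteratedDeriv 3 f 0 * l α ^ 3 + 6 * iteratedDeriv 2 f 0 * l α * deriv l α * deriv g 0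
        + 3 * deriv f 0 * (iteratedDeriv 2 l α * deriv g 0 ^ 2
          + deriv l α * iteratedDeriv 2 g 0) := by
  subst hg₀
  set w : ℝ → ℝ := fun t => t * l (g t)
  have hlg : SmoothNear (l ∘ g) 0 := hl.comp_of_eq hg rfl
  have hw : SmoothNear w 0 := SmoothNear.id.mul hlg
  have hw₀ : w 0 = 0 := zero_mul _
  have hw₁ : deriv w 0 = l (g 0) := by
    simpa using iteratedDeriv_succ_id_mul hlg 0
  have hw₂ : iteratedDeriv 2 w 0 = 2 * (deriv l (g 0) * deriv g 0) := by
    refine (iteratedDeriv_succ_id_mul hlg 1).trans ?_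
    rw [iteratedDeriv_one, deriv_comp 0 hl.differentiableAt hg.differentiableAt]
    norm_num
  have hw₃ : iteratedDeriv 3 w 0 = 3 * (iteratedDeriv 2 l (g 0) * deriv g 0 ^ 2
      + deriv l (g 0) * iteratedDeriv 2 g 0) := by
    refine (iteratedDeriv_succ_id_mul hlg 2).trans ?_
    rw [iteratedDeriv_comp_two (hl.contDiffAt_nat 2) (hg.contDiffAt_nat 2)]
    norm_num
  have hfw : σ ∘ g =ᶠ[𝓝 0] f ∘ w := h.mono fun t ht => by
    simpa [w, mul_comm] using ht
  have hf' : SmoothNear f (w 0) := hw₀.symm ▸ hf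
  have h₁ := hfw.deriv_eq
  have h₂ := hfw.iteratedDeriv_eq 2
  have h₃ := hfw.iteratedDeriv_eq 3
  rw [deriv_comp 0 hσ.differentiableAt hg.differentiableAt,
    deriv_comp 0 hf'.differentiableAt hw.differentiableAt, hw₀, hw₁] at h₁
  rw [iteratedDeriv_comp_two (hσ.contDiffAt_nat 2) (hg.contDiffAt_nat 2),
    iteratedDeriv_comp_two (hf'.contDiffAt_nat 2) (hw.contDiffAt_nat 2), hw₀, hw₁, hw₂] at h₂
  rw [iteratedDeriv_comp_three (hσ.contDiffAt_nat 3) (hg.contDiffAt_nat 3),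
    iteratedDeriv_comp_three (hf'.contDiffAt_nat 3) (hw.contDiffAt_nat 3), hw₀, hw₁, hw₂,
    hw₃] at h₃
  exact ⟨h₁, by linear_combination h₂, by linear_combination h₃⟩

theorem mul_iteratedDeriv_succ_of_eventuallyEq {S s u : ℝ → ℝ} {d C m : ℝ} (hs : SmoothNear s 0)
    (hu : SmoothNear u 0) (h : ∀ᶠ b in 𝓝 0, d * S b = C * s (m * b) + b * u b) (n : ℕ) :
    d * iteratedDeriv (n + 1) S 0 =
      C * (m ^ (n + 1) * iteratedDeriv (n + 1) s 0) + (n + 1) * iteratedDeriv n u 0 := by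
  have hsm : SmoothNear (fun b => s (m * b)) 0 :=
    hs.comp_of_eq ((SmoothNear.const m).mul .id) (mul_zero m)
  rw [← iteratedDeriv_const_mul_field, EventuallyEq.iteratedDeriv_eq _ h,
    iteratedDeriv_fun_add (((SmoothNear.const C).mul hsm).contDiffAt_nat _)
      ((SmoothNear.id.mul hu).contDiffAt_nat _), iteratedDeriv_const_mul_field,
    iteratedDeriv_fun_comp_const_mul, mul_zero, iteratedDeriv_succ_id_mul hu]

end Jets

section Rescaling

/-- The change of coordinates `(u, v) ↦ (l(v) u, σ(v))`. -/
def rescaling (l σ : ℝ → ℝ) (q : ℝ × ℝ) : ℝ × ℝ := (l q.2 * q.1, σ q.2)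

variable {F G : ℝ × ℝ × ℝ → ℝ} {l σ μ : ℝ → ℝ}

theorem d₂_rescaling_snd_zero (hσ : SmoothNear σ 0) :
    d₂ (fun q => (rescaling l σ q).2) 0 = deriv σ 0 :=
  (hasDerivAt_d₂ (f := fun z : ℝ × ℝ => σ z.2) (u := 0) (v := 0)
    (hσ.comp_of_eq SmoothNear.id.snd rfl)).unique hσ.differentiableAt.hasDerivAt

theorem isDiffeoGerm_rescaling (hl : SmoothNear l 0) (hσ : SmoothNear σ 0) (hσ₀ : σ 0 = 0)
    (hl₀ : l 0 ≠ 0) (hσ' : deriv σ 0 ≠ 0) : IsDiffeoGerm (rescaling l σ) := by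
  have hfst : SmoothNear (fun q : ℝ × ℝ => l q.2 * q.1) 0 :=
    (hl.comp_of_eq SmoothNear.id.snd rfl).mul SmoothNear.id.fst
  have hsnd : SmoothNear (fun q : ℝ × ℝ => σ q.2) 0 := hσ.comp_of_eq SmoothNear.id.snd rfl
  refine .prodMk hfst hsnd (mul_zero _) hσ₀ ?_
  have h₁₁ : d₁ (fun q : ℝ × ℝ => l q.2 * q.1) 0 = l 0 :=
    (hasDerivAt_d₁ hfst).unique (hasDerivAt_const_mul (l 0))
  have h₁₂ : d₁ (fun q : ℝ × ℝ => σ q.2) 0 = 0 :=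
    (hasDerivAt_d₁ hsnd).unique (hasDerivAt_const 0 (σ 0))
  rw [h₁₁, h₁₂, show d₂ (fun q : ℝ × ℝ => σ q.2) 0 = deriv σ 0 from
    d₂_rescaling_snd_zero (l := l) hσ, mul_zero, sub_zero]
  exact mul_ne_zero hl₀ hσ'

theorem IsCoordChange.rescaling_apply (h : IsCoordChange F G (rescaling l σ) (rescaling μ σ))
    (hG : IsRegular G) : ∀ᶠ p in 𝓝 (0 : ℝ × ℝ × ℝ),
      σ (G p) = F (σ p.1, μ p.1 * p.2.1, l (G p) * p.2.2) :=
  h.incident_graph hG.smoothNear hG.map_zero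

namespace IsRescaling

variable (hr : IsRescaling σ l μ)

include hr

theorem deriv_base_zero : deriv σ 0 = 1 := by
  rw [hr.deriv_base.self_of_nhds, hr.left_zero, hr.right_zero, one_mul]

theorem eventually_ne_zero : ∀ᶠ t in 𝓝 0, l t ≠ 0 ∧ μ t ≠ 0 :=
  (hr.smoothNear_left.continuousAt.eventually_ne (hr.left_zero ▸ one_ne_zero)).and
    (hr.smoothNear_right.continuousAt.eventually_ne (hr.right_zero ▸ one_ne_zero))

theorem exists_isCoordChange (hF : IsRegular F) (hpre : IsPrenormal F) :
    ∃ G, IsRegular G ∧ IsCoordChange F G (rescaling l σ) (rescaling μ σ) := by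
  have hσ' : deriv σ 0 ≠ 0 := hr.deriv_base_zero ▸ one_ne_zero
  have hD₁ : D₁ F 0 = 1 := (hpre.isFlat.partials_right hF.smoothNear).self_of_nhds.1
  have hD₂ : D₂ F 0 = 0 := hpre.D₂_eq.self_of_nhds
  have hD₃ : D₃ F 0 = 0 := hpre.D₃_eq.self_of_nhds
  refine hF.exists_isCoordChange
    (isDiffeoGerm_rescaling hr.smoothNear_left hr.smoothNear_base hr.base_zero
      (hr.left_zero ▸ one_ne_zero) hσ')
    (isDiffeoGerm_rescaling hr.smoothNear_right hr.smoothNear_base hr.base_zero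
      (hr.right_zero ▸ one_ne_zero) hσ') ?_ ?_
  · rwa [hD₁, hD₂, d₂_rescaling_snd_zero hr.smoothNear_base, one_mul, zero_mul, add_zero]
  · rwa [hD₃, d₂_rescaling_snd_zero hr.smoothNear_base, zero_mul, sub_zero]

theorem eventually_smoothNear : ∀ᶠ t in 𝓝 0, SmoothNear σ t ∧ SmoothNear l t ∧ SmoothNear μ t :=
  hr.smoothNear_base.eventually.and
    (hr.smoothNear_left.eventually.and hr.smoothNear_right.eventually)

theorem continuousAt_left_slice :
    ContinuousAt (fun p : ℝ × ℝ × ℝ => (σ p.1, (0 : ℝ), l p.1 * p.2.2)) 0 :=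
  (hr.smoothNear_base.continuousAt.comp_of_eq continuousAt_fst rfl).prodMk
    (continuousAt_const.prodMk
      ((hr.smoothNear_left.continuousAt.comp_of_eq continuousAt_fst rfl).mul continuousAt_snd.snd))

theorem continuousAt_right_slice :
    ContinuousAt (fun p : ℝ × ℝ × ℝ => (σ p.1, μ p.1 * p.2.1, (0 : ℝ))) 0 :=
  (hr.smoothNear_base.continuousAt.comp_of_eq continuousAt_fst rfl).prodMk
    (((hr.smoothNear_right.continuousAt.comp_of_eq continuousAt_fst rfl).mul
      continuousAt_snd.fst).prodMk continuousAt_const)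

variable (h : IsCoordChange F G (rescaling l σ) (rescaling μ σ)) (hpre : IsPrenormal F)

include h hpre

theorem isFlat : IsFlat G := by
  have hleft := h.graph_eq (m := fun p => ((p.2.2, p.1), ((0 : ℝ), p.1))) (by fun_prop) rfl
    ((eventually_of_continuousAt hpre.isFlat hr.continuousAt_left_slice
      (by simp [hr.base_zero])).mono fun p hp => by simpa [Incident, rescaling] using hp.1.symm)
  have hright := h.graph_eq (m := fun p => (((0 : ℝ), p.1), (p.2.1, p.1))) (by fun_prop) rfl
    ((eventually_of_continuousAt hpre.isFlat hr.continuousAt_right_slice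
      (by simp [hr.base_zero])).mono fun p hp => by simpa [Incident, rescaling] using hp.2.symm)
  exact hleft.and hright

variable (hF : SmoothNear F 0) (hG : IsRegular G)

include hF hG

theorem D₃_iterate_eq : ∀ᶠ p in 𝓝 (0 : ℝ × ℝ × ℝ), D₃ G (p.1, p.2.1, 0) = p.2.1 ∧
    deriv σ p.1 * D₃^[2] G (p.1, p.2.1, 0) =
      l p.1 ^ 2 * D₃^[2] F (σ p.1, μ p.1 * p.2.1, 0)
        + p.2.1 * ((2 * deriv l p.1 * μ p.1 - iteratedDeriv 2 σ p.1) * p.2.1) ∧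
    deriv σ p.1 * D₃^[3] G (p.1, p.2.1, 0) =
      l p.1 ^ 3 * D₃^[3] F (σ p.1, μ p.1 * p.2.1, 0)
        + p.2.1 * (6 * l p.1 * deriv l p.1 * D₃^[2] F (σ p.1, μ p.1 * p.2.1, 0)
          + 3 * (μ p.1 * deriv l p.1 - iteratedDeriv 2 σ p.1) * D₃^[2] G (p.1, p.2.1, 0)
          + (3 * μ p.1 * iteratedDeriv 2 l p.1 - iteratedDeriv 3 σ p.1) * p.2.1 ^ 2) := by
  have hslice : ContinuousAt (fun p : ℝ × ℝ × ℝ => (p.1, p.2.1, (0 : ℝ))) 0 := by fun_prop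
  have hcont := hr.continuousAt_right_slice
  have hcont₀ : (σ 0, μ 0 * 0, (0 : ℝ)) = 0 := by simp [hr.base_zero]
  filter_upwards [eventually_of_continuousAt (h.rescaling_apply hG).eventually_nhds hslice rfl,
    eventually_of_continuousAt hG.smoothNear.eventually hslice rfl,
    eventually_of_continuousAt hF.eventually hcont hcont₀,
    eventually_of_continuousAt hpre.D₃_eq hcont hcont₀, hr.isFlat h hpre,
    eventually_of_continuousAt hr.eventually_smoothNear continuousAt_fst rfl,
    eventually_of_continuousAt (hr.deriv_base.and hr.eventually_ne_zero) continuousAt_fst rfl]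
    with ⟨a, b, _⟩ hbase hGp hFp hD₃ hflat ⟨hσ, hl, _⟩ ⟨hσ', hl₀, hμ₀⟩
  have hline : SmoothNear (fun x : ℝ => (a, b, x)) 0 := .of_contDiff (by fun_prop)
  have hline' : SmoothNear (fun x : ℝ => (σ a, μ a * b, x)) 0 := .of_contDiff (by fun_prop)
  obtain ⟨h₁, h₂, h₃⟩ := iteratedDeriv_conjugation hσ hl (hFp.comp_of_eq hline' rfl)
    (hGp.comp_of_eq hline rfl) hflat.2 (hline.continuousAt.eventually hbase)
  have hG₁ : deriv (fun x => G (a, b, x)) 0 = D₃ G (a, b, 0) := (hasDerivAt_D₃ hGp).deriv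
  have hF₁ : deriv (fun x => F (σ a, μ a * b, x)) 0 = μ a * b :=
    (hasDerivAt_D₃ hFp).deriv.trans hD₃
  have hslope : D₃ G (a, b, 0) = b := by
    rw [hG₁, hF₁, hσ'] at h₁
    exact mul_left_cancel₀ (mul_ne_zero hl₀ hμ₀) (by linear_combination h₁)
  simp only [iteratedDeriv_slice₃ hFp, iteratedDeriv_slice₃ hGp, hG₁, hF₁, hslope] at h₂ h₃
  exact ⟨hslope, by linear_combination h₂, by linear_combination h₃⟩

theorem D₂_eq : ∀ᶠ p in 𝓝 (0 : ℝ × ℝ × ℝ), D₂ G (p.1, 0, p.2.2) = p.2.2 := by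
  have hslice : ContinuousAt (fun p : ℝ × ℝ × ℝ => (p.1, (0 : ℝ), p.2.2)) 0 := by fun_prop
  have hcont := hr.continuousAt_left_slice
  have hcont₀ : (σ 0, (0 : ℝ), l 0 * 0) = 0 := by simp [hr.base_zero]
  filter_upwards [eventually_of_continuousAt (h.rescaling_apply hG).eventually_nhds hslice rfl,
    eventually_of_continuousAt hG.smoothNear.eventually hslice rfl,
    eventually_of_continuousAt hF.eventually hcont hcont₀,
    eventually_of_continuousAt hpre.D₂_eq hcont hcont₀,
    eventually_of_continuousAt (hpre.isFlat.partials_left hF) hcont hcont₀, hr.isFlat h hpre,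
    eventually_of_continuousAt hr.eventually_smoothNear continuousAt_fst rfl,
    eventually_of_continuousAt (hr.deriv_base.and hr.eventually_ne_zero) continuousAt_fst rfl]
    with ⟨a, _, x⟩ hbase hGp hFp hD₂ hD₃ ⟨hflat, _⟩ ⟨hσ, hl, _⟩ ⟨hσ', hl₀, hμ₀⟩
  have hGb := hasDerivAt_D₂ hGp
  have hσG : HasDerivAt (fun b => σ (G (a, b, x))) (deriv σ a * D₂ G (a, 0, x)) 0 :=
    HasDerivAt.comp (h₂ := σ) 0 (by simpa only [hflat] using hσ.differentiableAt.hasDerivAt) hGb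
  have hlG : HasDerivAt (fun b => l (G (a, b, x))) (deriv l a * D₂ G (a, 0, x)) 0 :=
    HasDerivAt.comp (h₂ := l) 0 (by simpa only [hflat] using hl.differentiableAt.hasDerivAt) hGb
  have hright := hasDerivAt_comp_curve₃ (F := F) (c₁ := fun _ => σ a) (c₂ := fun b => μ a * b)
    (c₃ := fun b => l (G (a, b, x)) * x) (t := 0) (by simpa only [mul_zero, hflat] using hFp)
    (hasDerivAt_const 0 (σ a)) (hasDerivAt_const_mul (μ a)) (hlG.mul_const x)
  have hline : ContinuousAt (fun b : ℝ => (a, b, x)) 0 := by fun_prop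
  have hderiv := hσG.unique (hright.congr_of_eventuallyEq (hline.eventually hbase))
  simp only [mul_zero, zero_mul, zero_add, add_zero, hflat, hD₂, hD₃.2, hσ'] at hderiv
  exact mul_left_cancel₀ (mul_ne_zero hl₀ hμ₀) (by linear_combination hderiv)

theorem isPrenormal : IsPrenormal G :=
  ⟨hr.isFlat h hpre, (hr.D₃_iterate_eq h hpre hF hG).mono fun _ hp => hp.1, hr.D₂_eq h hpre hF hG⟩

end IsRescaling

end Rescaling

section RescaledJets

variable {F G : ℝ × ℝ × ℝ → ℝ} {l σ μ : ℝ → ℝ}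

theorem IsPrenormal.D₂_D₃_D₃_eq_zero (hpre : IsPrenormal F) (hF : SmoothNear F 0) :
    ∀ᶠ a in 𝓝 0, D₂ (D₃^[2] F) (a, 0, 0) = 0 := by
  have hslice : ContinuousAt (fun a : ℝ => (a, (0 : ℝ), (0 : ℝ))) 0 := by fun_prop
  filter_upwards [eventually_of_continuousAt hF.eventually hslice rfl,
    eventually_of_continuousAt hpre.D₂_eq.eventually_nhds hslice rfl] with a hFa hD₂
  have hline : ContinuousAt (fun x : ℝ => (a, (0 : ℝ), x)) 0 := by fun_prop
  have hid : (fun x => D₂ F (a, 0, x)) =ᶠ[𝓝 0] fun x => x := hline.eventually hD₂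
  rw [(D₂_D₃_iterate_comm hFa 2).self_of_nhds, ← iteratedDeriv_slice₃ hFa.D₂ 2,
    hid.iteratedDeriv_eq, iteratedDeriv_add_two_fun_id]

section Scalar

variable {s t S T : ℝ → ℝ} {σ₁ σ₂ σ₃ l₀ l₁ l₂ m : ℝ}

theorem iteratedDeriv_eq_zero_of_rescaled_two_jet (hs : SmoothNear s 0) (hσ₁ : σ₁ ≠ 0)
    (hlm : σ₁ = l₀ * m)
    (hjet : ∀ᶠ b in 𝓝 0, σ₁ * S b = l₀ ^ 2 * s (m * b) + b * ((2 * l₁ * m - σ₂) * b))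
    (hs₁ : deriv s 0 = 0) (hs₃ : iteratedDeriv 3 s 0 = 0)
    (hode : 2 * σ₂ = iteratedDeriv 2 s 0 * σ₁ ^ 2 + 4 * l₁ * m) :
    deriv S 0 = 0 ∧ iteratedDeriv 2 S 0 = 0 ∧ iteratedDeriv 3 S 0 = 0 := by
  have hjets := mul_iteratedDeriv_succ_of_eventuallyEq hs ((SmoothNear.const _).mul .id) hjet
  have hS₁ := hjets 0
  have hS₂ := hjets 1
  have hS₃ := hjets 2
  rw [iteratedDeriv_zero, zero_add, iteratedDeriv_one, iteratedDeriv_one, hs₁] at hS₁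
  rw [iteratedDeriv_const_mul_field, iteratedDeriv_one, (hasDerivAt_id' (0 : ℝ)).deriv] at hS₂
  rw [iteratedDeriv_const_mul_field, iteratedDeriv_add_two_fun_id 0, hs₃] at hS₃
  refine ⟨(mul_eq_zero.1 (hS₁.trans ?_)).resolve_left hσ₁,
    (mul_eq_zero.1 (hS₂.trans ?_)).resolve_left hσ₁,
    (mul_eq_zero.1 (hS₃.trans ?_)).resolve_left hσ₁⟩
  · simp
  · subst hlm
    simp only [Nat.reduceAdd, Nat.cast_one]
    linear_combination -hode
  · simp

theorem iteratedDeriv_eq_zero_of_rescaled_three_jet (hs : SmoothNear s 0) (ht : SmoothNear t 0)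
    (hS : SmoothNear S 0) (hσ₁ : σ₁ ≠ 0) (hlm : σ₁ = l₀ * m)
    (hjet : ∀ᶠ b in 𝓝 0, σ₁ * T b = l₀ ^ 3 * t (m * b) + b * (6 * l₀ * l₁ * s (m * b)
      + 3 * (m * l₁ - σ₂) * S b + (3 * m * l₂ - σ₃) * b ^ 2))
    (hs₁ : deriv s 0 = 0) (hS₁ : deriv S 0 = 0) (hS₂ : iteratedDeriv 2 S 0 = 0)
    (ht₂ : iteratedDeriv 2 t 0 = 0)
    (hode : 6 * σ₃ = iteratedDeriv 3 t 0 * σ₁ ^ 3 + 18 * iteratedDeriv 2 s 0 * σ₁ * m * l₁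
      + 18 * m * l₂) :
    iteratedDeriv 2 T 0 = 0 ∧ iteratedDeriv 3 T 0 = 0 := by
  have hsm : SmoothNear (fun b => 6 * l₀ * l₁ * s (m * b)) 0 :=
    (SmoothNear.const _).mul (hs.comp_of_eq ((SmoothNear.const m).mul .id) (mul_zero m))
  have hSm : SmoothNear (fun b => 3 * (m * l₁ - σ₂) * S b) 0 := (SmoothNear.const _).mul hS
  have hsq : SmoothNear (fun b : ℝ => (3 * m * l₂ - σ₃) * b ^ 2) 0 :=
    (SmoothNear.const _).mul (SmoothNear.id.pow 2)
  have hu (n : ℕ) : iteratedDeriv n (fun b => 6 * l₀ * l₁ * s (m * b) + 3 * (m * l₁ - σ₂) * S b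
      + (3 * m * l₂ - σ₃) * b ^ 2) 0 = 6 * l₀ * l₁ * (m ^ n * iteratedDeriv n s 0)
      + 3 * (m * l₁ - σ₂) * iteratedDeriv n S 0
      + iteratedDeriv n (fun b => (3 * m * l₂ - σ₃) * b ^ 2) 0 := by
    rw [iteratedDeriv_fun_add ((hsm.add hSm).contDiffAt_nat n) (hsq.contDiffAt_nat n),
      iteratedDeriv_fun_add (hsm.contDiffAt_nat n) (hSm.contDiffAt_nat n),
      iteratedDeriv_const_mul_field, iteratedDeriv_const_mul_field,
      iteratedDeriv_fun_comp_const_mul, mul_zero]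
  obtain ⟨-, hq₁, hq₂, -⟩ := iteratedDeriv_cubic 0 0 (3 * m * l₂ - σ₃) 0
    (f := fun b => (3 * m * l₂ - σ₃) * b ^ 2) (.of_forall fun b => by ring)
  have hjets := mul_iteratedDeriv_succ_of_eventuallyEq ht ((hsm.add hSm).add hsq) hjet
  have hT₂ := hjets 1
  have hT₃ := hjets 2
  rw [hu, iteratedDeriv_one, iteratedDeriv_one, iteratedDeriv_one, hs₁, hS₁, hq₁, ht₂] at hT₂
  rw [hu, hS₂, hq₂] at hT₃
  refine ⟨(mul_eq_zero.1 (hT₂.trans ?_)).resolve_left hσ₁,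
    (mul_eq_zero.1 (hT₃.trans ?_)).resolve_left hσ₁⟩
  · simp
  · subst hlm
    simp only [Nat.reduceAdd, Nat.cast_ofNat]
    linear_combination -hode

end Scalar

theorem IsRescaling.D₂_iterate_D₃_iterate_eq_zero (hr : IsRescaling σ l μ)
    (h : IsCoordChange F G (rescaling l σ) (rescaling μ σ)) (hpre : IsPrenormal F)
    (hF : SmoothNear F 0) (hG : IsRegular G)
    (h₃₂ : ∀ᶠ a in 𝓝 0, D₂^[3] (D₃^[2] F) (a, 0, 0) = 0)
    (h₂₃ : ∀ᶠ a in 𝓝 0, D₂^[2] (D₃^[3] F) (a, 0, 0) = 0)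
    (hode : ∀ᶠ t in 𝓝 0,
      2 * iteratedDeriv 2 σ t = D₂^[2] (D₃^[2] F) (σ t, 0, 0) * deriv σ t ^ 2
        + 4 * deriv l t * μ t ∧
      6 * iteratedDeriv 3 σ t = D₂^[3] (D₃^[3] F) (σ t, 0, 0) * deriv σ t ^ 3
        + 18 * D₂^[2] (D₃^[2] F) (σ t, 0, 0) * deriv σ t * μ t * deriv l t
        + 18 * μ t * iteratedDeriv 2 l t) :
    ∀ᶠ a in 𝓝 0, D₂^[2] (D₃^[2] G) (a, 0, 0) = 0 ∧ D₂^[3] (D₃^[2] G) (a, 0, 0) = 0 ∧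
      D₂^[2] (D₃^[3] G) (a, 0, 0) = 0 ∧ D₂^[3] (D₃^[3] G) (a, 0, 0) = 0 := by
  have hslice : ContinuousAt (fun a : ℝ => (a, (0 : ℝ), (0 : ℝ))) 0 := by fun_prop
  have hσ := hr.smoothNear_base.continuousAt
  have hσslice : ContinuousAt (fun a : ℝ => (σ a, (0 : ℝ), (0 : ℝ))) 0 := by fun_prop
  have hσ₀ : (σ 0, (0 : ℝ), (0 : ℝ)) = 0 := by simp [hr.base_zero]
  filter_upwards [eventually_of_continuousAt
      (hr.D₃_iterate_eq h hpre hF hG).eventually_nhds hslice rfl,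
    eventually_of_continuousAt hG.smoothNear.eventually hslice rfl,
    eventually_of_continuousAt hF.eventually hσslice hσ₀,
    eventually_of_continuousAt ((hpre.D₂_D₃_D₃_eq_zero hF).and (h₃₂.and h₂₃)) hσ hr.base_zero,
    hode, hr.deriv_base, hr.eventually_ne_zero]
    with a hjets hGa hFa ⟨hF₁₂, hF₃₂, hF₂₃⟩ ⟨hode₁, hode₂⟩ hσ' ⟨hl₀, hμ₀⟩
  have hline : SmoothNear (fun b : ℝ => (a, b, (0 : ℝ))) 0 := .of_contDiff (by fun_prop)
  have hline' : SmoothNear (fun b : ℝ => (σ a, b, (0 : ℝ))) 0 := .of_contDiff (by fun_prop)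
  have hS : SmoothNear (fun b => D₃^[2] G (a, b, 0)) 0 := (hGa.D₃_iterate 2).comp_of_eq hline rfl
  have hs : SmoothNear (fun b => D₃^[2] F (σ a, b, 0)) 0 :=
    (hFa.D₃_iterate 2).comp_of_eq hline' rfl
  have ht : SmoothNear (fun b => D₃^[3] F (σ a, b, 0)) 0 :=
    (hFa.D₃_iterate 3).comp_of_eq hline' rfl
  have hjets' := hline.continuousAt.eventually hjets
  have hs₁ : deriv (fun b => D₃^[2] F (σ a, b, 0)) 0 = 0 :=
    (hasDerivAt_D₂ (hFa.D₃_iterate 2)).deriv.trans hF₁₂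
  have hσ₀' : deriv σ a ≠ 0 := hσ' ▸ mul_ne_zero hl₀ hμ₀
  obtain ⟨hS₁, hS₂, hS₃⟩ := iteratedDeriv_eq_zero_of_rescaled_two_jet hs hσ₀' hσ'
    (hjets'.mono fun b hb => hb.2.1) hs₁ ((iteratedDeriv_slice₂ (hFa.D₃_iterate 2) 3).trans hF₃₂)
    (by rwa [iteratedDeriv_slice₂ (hFa.D₃_iterate 2)])
  obtain ⟨hT₂, hT₃⟩ := iteratedDeriv_eq_zero_of_rescaled_three_jet
    (T := fun b => D₃^[3] G (a, b, 0)) (σ₂ := iteratedDeriv 2 σ a) hs ht hS hσ₀' hσ'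
    (hjets'.mono fun b hb => hb.2.2) hs₁
    hS₁ hS₂ ((iteratedDeriv_slice₂ (hFa.D₃_iterate 3) 2).trans hF₂₃)
    (by rwa [iteratedDeriv_slice₂ (hFa.D₃_iterate 2), iteratedDeriv_slice₂ (hFa.D₃_iterate 3)])
  rw [iteratedDeriv_slice₂ (hGa.D₃_iterate _)] at hS₂ hS₃ hT₂ hT₃
  exact ⟨hS₂, hS₃, hT₂, hT₃⟩

theorem IsRegular.exists_normalization (hF : IsRegular F) :
    ∃ G H K, IsRegular G ∧ IsPrenormal G ∧ IsCoordChange F G H K ∧ ∀ᶠ a in 𝓝 0,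
      D₂^[2] (D₃^[2] G) (a, 0, 0) = 0 ∧ D₂^[3] (D₃^[2] G) (a, 0, 0) = 0 ∧
      D₂^[2] (D₃^[3] G) (a, 0, 0) = 0 ∧ D₂^[3] (D₃^[3] G) (a, 0, 0) = 0 := by
  obtain ⟨G, H, K, hG, hpre, hFG, h₃₂, h₂₃⟩ := hF.exists_isPrenormal
  have hslice : SmoothNear (fun a : ℝ => (a, (0 : ℝ), (0 : ℝ))) 0 := .of_contDiff (by fun_prop)
  have hc : SmoothNear (fun a => D₂^[2] (D₃^[2] G) (a, 0, 0)) 0 :=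
    ((hG.smoothNear.D₃_iterate 2).D₂_iterate 2).comp_of_eq hslice rfl
  have he : SmoothNear (fun a => D₂^[3] (D₃^[3] G) (a, 0, 0)) 0 :=
    ((hG.smoothNear.D₃_iterate 3).D₂_iterate 3).comp_of_eq hslice rfl
  obtain ⟨σ, l, μ, hr, hode⟩ := exists_isRescaling hc he
  obtain ⟨G', hG', hGG'⟩ := hr.exists_isCoordChange hG hpre
  exact ⟨G', _, _, hG', hr.isPrenormal hGG' hpre hG.smoothNear hG', hFG.trans hGG',
    hr.D₂_iterate_D₃_iterate_eq_zero hGG' hpre hG.smoothNear hG' h₃₂ h₂₃ hode⟩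

end RescaledJets

section Conclusion

variable {G : ℝ × ℝ × ℝ → ℝ}

theorem exists_box_of_eventually {P : ℝ × ℝ × ℝ → Prop} (h : ∀ᶠ p in 𝓝 0, P p) :
    ∃ δ > 0, ∀ a ∈ Ioo (-δ) δ, ∀ b ∈ Ioo (-δ) δ, ∀ x ∈ Ioo (-δ) δ, P (a, b, x) := by
  obtain ⟨δ, hδ, hball⟩ := Metric.eventually_nhds_iff_ball.1 h
  refine ⟨δ, hδ, fun a ha b hb x hx => hball _ ?_⟩
  simp only [← Prod.mk_zero_zero, ← ball_prod_same, Real.ball_eq_Ioo, zero_sub, zero_add]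
  exact ⟨ha, hb, hx⟩

/-- The normal form conditions (i)–(v) on the higher order part `f*` of a defining function. -/
def IsNormalForm (fs : ℝ → ℝ → ℝ → ℝ) : Prop :=
  ∃ δ : ℝ, 0 < δ ∧
    (∀ A ∈ Ioo (-δ) δ, ∀ B ∈ Ioo (-δ) δ, fs A B 0 = 0) ∧
    (∀ A ∈ Ioo (-δ) δ, ∀ Xv ∈ Ioo (-δ) δ, fs A 0 Xv = 0) ∧
    (∀ A ∈ Ioo (-δ) δ, ∀ B ∈ Ioo (-δ) δ, deriv (fun t => fs A B t) 0 = 0) ∧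
    (∀ A ∈ Ioo (-δ) δ, ∀ Xv ∈ Ioo (-δ) δ, deriv (fun s => fs A s Xv) 0 = 0) ∧
    (∀ A ∈ Ioo (-δ) δ,
      iteratedDeriv 2 (fun s => iteratedDeriv 2 (fun t => fs A s t) 0) 0 = 0) ∧
    (∀ A ∈ Ioo (-δ) δ,
      iteratedDeriv 2 (fun s => iteratedDeriv 3 (fun t => fs A s t) 0) 0 = 0) ∧
    (∀ A ∈ Ioo (-δ) δ,
      iteratedDeriv 3 (fun s => iteratedDeriv 2 (fun t => fs A s t) 0) 0 = 0) ∧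
    (∀ A ∈ Ioo (-δ) δ,
      iteratedDeriv 3 (fun s => iteratedDeriv 3 (fun t => fs A s t) 0) 0 = 0)

theorem iteratedDeriv_add_two_sub_affine {f : ℝ → ℝ} {t : ℝ} (hf : SmoothNear f t) (c d : ℝ)
    (n : ℕ) : iteratedDeriv (n + 2) (fun x => f x - c - d * x) t = iteratedDeriv (n + 2) f t := by
  have hc : SmoothNear (fun _ : ℝ => c) t := .const c
  have hd : SmoothNear (fun x : ℝ => d * x) t := (SmoothNear.const d).mul .id
  rw [iteratedDeriv_fun_sub ((hf.sub hc).contDiffAt_nat _) (hd.contDiffAt_nat _),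
    iteratedDeriv_fun_sub (hf.contDiffAt_nat _) (hc.contDiffAt_nat _), iteratedDeriv_const,
    iteratedDeriv_const_mul_field, iteratedDeriv_add_two_fun_id]
  simp

theorem iteratedDeriv_iteratedDeriv_sub_affine {a : ℝ} (hG : SmoothNear G (a, 0, 0)) (m n : ℕ) :
    iteratedDeriv m (fun s => iteratedDeriv (n + 2) (fun t => G (a, s, t) - a - s * t) 0) 0
      = D₂^[m] (D₃^[n + 2] G) (a, 0, 0) := by
  have hline : ContinuousAt (fun b : ℝ => (a, b, (0 : ℝ))) 0 := by fun_prop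
  rw [← iteratedDeriv_slice₂ (hG.D₃_iterate _)]
  refine EventuallyEq.iteratedDeriv_eq m ?_
  filter_upwards [hline.eventually hG.eventually] with b hGb
  have hcurve : SmoothNear (fun x : ℝ => (a, b, x)) 0 := .of_contDiff (by fun_prop)
  rw [iteratedDeriv_add_two_sub_affine (hGb.comp_of_eq hcurve rfl), iteratedDeriv_slice₃ hGb]

theorem IsPrenormal.isNormalForm (hpre : IsPrenormal G) (hG : SmoothNear G 0)
    (hjets : ∀ᶠ a in 𝓝 0,
      D₂^[2] (D₃^[2] G) (a, 0, 0) = 0 ∧ D₂^[3] (D₃^[2] G) (a, 0, 0) = 0 ∧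
      D₂^[2] (D₃^[3] G) (a, 0, 0) = 0 ∧ D₂^[3] (D₃^[3] G) (a, 0, 0) = 0) :
    IsNormalForm fun A B X => G (A, B, X) - A - B * X := by
  obtain ⟨δ, hδ, hbox⟩ := exists_box_of_eventually (hG.eventually.and (hpre.isFlat.and
    (hpre.D₃_eq.and (hpre.D₂_eq.and
      (eventually_of_continuousAt hjets continuous_fst.continuousAt rfl)))))
  have h₀ : (0 : ℝ) ∈ Ioo (-δ) δ := ⟨neg_neg_of_pos hδ, hδ⟩
  have hjet (a) (ha : a ∈ Ioo (-δ) δ) (m n : ℕ) :=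
    iteratedDeriv_iteratedDeriv_sub_affine (hbox a ha 0 h₀ 0 h₀).1 m n
  refine ⟨δ, hδ, fun a ha b hb => ?_, fun a ha x hx => ?_, fun a ha b hb => ?_,
    fun a ha x hx => ?_, fun a ha => ?_, fun a ha => ?_, fun a ha => ?_, fun a ha => ?_⟩
  · simp [(hbox a ha b hb 0 h₀).2.1.2]
  · simp [(hbox a ha 0 h₀ x hx).2.1.1]
  · obtain ⟨hGp, -, hD₃, -⟩ := hbox a ha b hb 0 h₀
    have hlin : HasDerivAt (fun t : ℝ => b * t) b 0 := by simpa using (hasDerivAt_id' 0).const_mul b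
    exact (((hasDerivAt_D₃ hGp).sub_const a).sub hlin).deriv.trans (sub_eq_zero.2 hD₃)
  · obtain ⟨hGp, -, -, hD₂, -⟩ := hbox a ha 0 h₀ x hx
    have hlin : HasDerivAt (fun s : ℝ => s * x) x 0 := by simpa using (hasDerivAt_id' 0).mul_const x
    exact (((hasDerivAt_D₂ hGp).sub_const a).sub hlin).deriv.trans (sub_eq_zero.2 hD₂)
  · exact (hjet a ha 2 0).trans (hbox a ha 0 h₀ 0 h₀).2.2.2.2.1
  · exact (hjet a ha 2 1).trans (hbox a ha 0 h₀ 0 h₀).2.2.2.2.2.2.1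
  · exact (hjet a ha 3 0).trans (hbox a ha 0 h₀ 0 h₀).2.2.2.2.2.1
  · exact (hjet a ha 3 1).trans (hbox a ha 0 h₀ 0 h₀).2.2.2.2.2.2.2

section Affine

variable {f : ℝ × ℝ × ℝ → ℝ} {p : ℝ × ℝ × ℝ}

theorem SmoothNear.affine_add (hf : SmoothNear f p) :
    SmoothNear (fun p => p.1 + p.2.1 * p.2.2 + f p) p :=
  (SmoothNear.of_contDiff (by fun_prop)).add hf

theorem D₁_affine_add (hf : SmoothNear f p) :
    D₁ (fun p => p.1 + p.2.1 * p.2.2 + f p) p = 1 + D₁ f p :=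
  (hasDerivAt_D₁ hf.affine_add).unique
    (((hasDerivAt_id' p.1).add_const (p.2.1 * p.2.2)).add (hasDerivAt_D₁ hf))

theorem D₂_affine_add (hf : SmoothNear f p) :
    D₂ (fun p => p.1 + p.2.1 * p.2.2 + f p) p = p.2.2 + D₂ f p := by
  have h := (((hasDerivAt_id' p.2.1).mul_const p.2.2).const_add p.1).add (hasDerivAt_D₂ hf)
  rw [one_mul] at h
  exact (hasDerivAt_D₂ hf.affine_add).unique h

theorem D₃_affine_add (hf : SmoothNear f p) :
    D₃ (fun p => p.1 + p.2.1 * p.2.2 + f p) p = p.2.1 + D₃ f p := by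
  have h := (((hasDerivAt_id' p.2.2).const_mul p.2.1).const_add p.1).add (hasDerivAt_D₃ hf)
  rw [mul_one] at h
  exact (hasDerivAt_D₃ hf.affine_add).unique h

theorem D₂_D₃_affine_add (hf : SmoothNear f p) :
    D₂ (D₃ fun p => p.1 + p.2.1 * p.2.2 + f p) p = 1 + D₂ (D₃ f) p := by
  have hD₃ : (D₃ fun p => p.1 + p.2.1 * p.2.2 + f p) =ᶠ[𝓝 p] fun p => p.2.1 + D₃ f p :=
    hf.eventually.mono fun _ => D₃_affine_add
  rw [D₂_congr hD₃]
  exact (hasDerivAt_D₂ (SmoothNear.id.snd.fst.add hf.D₃)).unique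
    ((hasDerivAt_id' p.2.1).add (hasDerivAt_D₂ hf.D₃))

theorem isRegular_affine_add (hf : SmoothNear f 0) (h₀ : f 0 = 0)
    (h₁ : iteratedFDeriv ℝ 1 f 0 = 0) (h₂ : iteratedFDeriv ℝ 2 f 0 = 0) :
    IsRegular fun p => p.1 + p.2.1 * p.2.2 + f p := by
  have hfderiv (v) : fderiv ℝ f 0 v = 0 := by
    simpa [h₁] using (iteratedFDeriv_one_apply (𝕜 := ℝ) (f := f) (x := 0) fun _ => v).symm
  have hfderiv₂ (v w) : fderiv ℝ (fderiv ℝ f) 0 v w = 0 := by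
    simpa [h₂] using (iteratedFDeriv_two_apply (𝕜 := ℝ) f 0 ![v, w]).symm
  have hD₁ : D₁ (fun p => p.1 + p.2.1 * p.2.2 + f p) 0 = 1 := by
    rw [D₁_affine_add hf, D₁, hfderiv, add_zero]
  have hD₂ : D₂ (fun p => p.1 + p.2.1 * p.2.2 + f p) 0 = 0 := by
    rw [D₂_affine_add hf, D₂, hfderiv, add_zero]; rfl
  have hD₂D₃ : D₂ (D₃ fun p => p.1 + p.2.1 * p.2.2 + f p) 0 = 1 := by
    rw [D₂_D₃_affine_add hf, add_eq_left]
    exact (fderiv_fderiv_apply hf _ _).trans (hfderiv₂ _ _)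
  exact ⟨hf.affine_add, by simp [h₀], by simp [hD₁], by simp [levi, hD₁, hD₂, hD₂D₃]⟩

end Affine

end Conclusion

end ParaCR

theorem stmt5_general (F : ℝ × ℝ × ℝ → ℝ) (hF : ParaCR.IsRegular F) :
    ∃ (Xm Ym Am Bm : ℝ → ℝ → ℝ) (fs : ℝ → ℝ → ℝ → ℝ),
      SmoothLocalDiffeoAtZero (fun p : ℝ × ℝ => (Xm p.1 p.2, Ym p.1 p.2)) ∧
      SmoothLocalDiffeoAtZero (fun p : ℝ × ℝ => (Am p.1 p.2, Bm p.1 p.2)) ∧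
      (∃ Uf : Set (ℝ × ℝ × ℝ), Uf ∈ nhds (0 : ℝ × ℝ × ℝ) ∧
        ContDiffOn ℝ (⊤ : ℕ∞) (fun p : ℝ × ℝ × ℝ => fs p.1 p.2.1 p.2.2) Uf) ∧
      (∀ᶠ p : ℝ × ℝ × ℝ in nhds 0,
        Ym p.2.2 (F p) = Am p.1 p.2.1 + Bm p.1 p.2.1 * Xm p.2.2 (F p)
          + fs (Am p.1 p.2.1) (Bm p.1 p.2.1) (Xm p.2.2 (F p))) ∧
      ParaCR.IsNormalForm fs := by
  obtain ⟨G, H, K, hG, hpre, hFG, hjets⟩ := hF.exists_normalization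
  obtain ⟨Φ, Ψ, hGF⟩ := hFG.exists_symm
  have hfs : ParaCR.SmoothNear (fun p => G p - p.1 - p.2.1 * p.2.2) 0 :=
    (hG.smoothNear.sub (.of_contDiff (by fun_prop))).sub (.of_contDiff (by fun_prop))
  refine ⟨fun x y => (Φ (x, y)).1, fun x y => (Φ (x, y)).2, fun a b => (Ψ (b, a)).2,
    fun a b => (Ψ (b, a)).1, fun A B X => G (A, B, X) - A - B * X,
    hGF.left.smoothLocalDiffeoAtZero,
    (ParaCR.IsDiffeoGerm.swap.comp (hGF.right.comp .swap)).smoothLocalDiffeoAtZero,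
    hfs.exists_contDiffOn, ?_, hpre.isNormalForm hG.smoothNear hjets⟩
  filter_upwards [hGF.incident_graph hF.smoothNear hF.map_zero] with p hp
  exact hp.trans (by ring)

/-- Chern–Moser type convergence theorem for regular para-CR hypersurfaces:
a smooth defining function `F = a + bx + f`, with `f` vanishing to second
order at `0`, can be taken by smooth local changes of coordinates
`(x,y) ↦ (X,Y)` and `(a,b) ↦ (A,B)` (both fixing the origin) to the normal
form `Y = A + B·X + f*(A,B,X)`, where `f*` satisfies (i)–(v). -/
theorem stmt5 (f : ℝ → ℝ → ℝ → ℝ) (U : Set (ℝ × ℝ × ℝ))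
    (hU : U ∈ nhds (0 : ℝ × ℝ × ℝ))
    (hsmooth : ContDiffOn ℝ (⊤ : ℕ∞) (fun p : ℝ × ℝ × ℝ => f p.1 p.2.1 p.2.2) U)
    (h0 : f 0 0 0 = 0)
    (h1 : iteratedFDeriv ℝ 1 (fun p : ℝ × ℝ × ℝ => f p.1 p.2.1 p.2.2) 0 = 0)
    (h2 : iteratedFDeriv ℝ 2 (fun p : ℝ × ℝ × ℝ => f p.1 p.2.1 p.2.2) 0 = 0) :
    ∃ (Xm Ym Am Bm : ℝ → ℝ → ℝ) (fs : ℝ → ℝ → ℝ → ℝ),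
      -- (x,y) ↦ (X,Y) is a smooth local diffeomorphism fixing 0
      SmoothLocalDiffeoAtZero (fun p : ℝ × ℝ => (Xm p.1 p.2, Ym p.1 p.2)) ∧
      -- (a,b) ↦ (A,B) is a smooth local diffeomorphism fixing 0
      SmoothLocalDiffeoAtZero (fun p : ℝ × ℝ => (Am p.1 p.2, Bm p.1 p.2)) ∧
      -- f* is smooth near 0
      (∃ Uf : Set (ℝ × ℝ × ℝ), Uf ∈ nhds (0 : ℝ × ℝ × ℝ) ∧
        ContDiffOn ℝ (⊤ : ℕ∞) (fun p : ℝ × ℝ × ℝ => fs p.1 p.2.1 p.2.2) Uf) ∧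
      -- the transformed hypersurface equation holds near 0
      (∀ᶠ p : ℝ × ℝ × ℝ in nhds 0,
        Ym p.2.2 (p.1 + p.2.1 * p.2.2 + f p.1 p.2.1 p.2.2) =
          Am p.1 p.2.1 +
            Bm p.1 p.2.1 * Xm p.2.2 (p.1 + p.2.1 * p.2.2 + f p.1 p.2.1 p.2.2) +
            fs (Am p.1 p.2.1) (Bm p.1 p.2.1)
              (Xm p.2.2 (p.1 + p.2.1 * p.2.2 + f p.1 p.2.1 p.2.2))) ∧
      -- normal form conditions (i)–(v) for f*
      (∃ δ : ℝ, 0 < δ ∧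
        (∀ A ∈ Ioo (-δ) δ, ∀ B ∈ Ioo (-δ) δ, fs A B 0 = 0) ∧
        (∀ A ∈ Ioo (-δ) δ, ∀ Xv ∈ Ioo (-δ) δ, fs A 0 Xv = 0) ∧
        (∀ A ∈ Ioo (-δ) δ, ∀ B ∈ Ioo (-δ) δ,
          deriv (fun t => fs A B t) 0 = 0) ∧
        (∀ A ∈ Ioo (-δ) δ, ∀ Xv ∈ Ioo (-δ) δ,
          deriv (fun s => fs A s Xv) 0 = 0) ∧
        (∀ A ∈ Ioo (-δ) δ,
          iteratedDeriv 2 (fun s => iteratedDeriv 2 (fun t => fs A s t) 0) 0 = 0) ∧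
        (∀ A ∈ Ioo (-δ) δ,
          iteratedDeriv 2 (fun s => iteratedDeriv 3 (fun t => fs A s t) 0) 0 = 0) ∧
        (∀ A ∈ Ioo (-δ) δ,
          iteratedDeriv 3 (fun s => iteratedDeriv 2 (fun t => fs A s t) 0) 0 = 0) ∧
        (∀ A ∈ Ioo (-δ) δ,
          iteratedDeriv 3 (fun s => iteratedDeriv 3 (fun t => fs A s t) 0) 0 = 0)) :=
  stmt5_general _ (ParaCR.isRegular_affine_add (.of_contDiffOn hsmooth hU) h0 h1 h2)
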